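/- Let X be a locally simply connected Peano space with infinitely many maximal cyclic subsets, enumerated (T_n). Then there exists N such that for all n ≥ N, π₁(X) is isomorphic to the free product π₁(T₁) * ⋯ * π₁(T_n). -/

import Mathlib

open Metric Set

/-- A Jordan curve: a subset homeomorphic to the circle. -/
def IsJordanCurve {X : Type} [TopologicalSpace X] (J : Set X) : Prop :=
  Nonempty (AddCircle (1 : ℝ) ≃ₜ J)

/-- A set is cyclicly connected if every pair of its points lies on a Jordan curve in it. -/
def CyclicallyConnected {X : Type} [TopologicalSpace X] (C : Set X) : Prop :=
  ∀ x ∈ C, ∀ y ∈ C, ∃ J : Set X, J ⊆ C ∧ IsJordanCurve J ∧ x ∈ J ∧ y ∈ J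

/-- A maximal cyclic subset: non-degenerate, cyclicly connected, and not a proper subset
of any cyclicly connected subset. -/
def MaximalCyclic {X : Type} [TopologicalSpace X] (T : Set X) : Prop :=
  ¬ T.Subsingleton ∧ CyclicallyConnected T ∧
    ∀ C : Set X, CyclicallyConnected C → T ⊆ C → C = T
/-- Locally simply connected: every point has arbitrarily small simply connected
open neighborhoods. -/
def LocSimplyConnected (X : Type) [TopologicalSpace X] : Prop :=
  ∀ x : X, ∀ U ∈ nhds x, ∃ V ∈ nhds x, V ⊆ U ∧ IsOpen V ∧ SimplyConnectedSpace ↥V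

/-!
A maximal cyclic set `T` is closed: a missing limit point `p` would be the end of a chain of
cyclicly connected compact subsets of `T` shrinking to `p`, and two disjoint arms running through
the chain would form an arc through `p` with both end points in `T`, so that `T ∪ {p}` would still
be part of a larger cyclicly connected set. Hence `T` contains every arc between two of its points,
and the space retracts onto any closed set with this property by sending a point to the unique
place where all paths from it enter the set. In particular such sets inject on fundamental groups.

Only finitely many maximal cyclic sets are large, so by local simple connectivity all but finitely
many of them carry only null-homotopic loops. Two arc-closed sets `K ⊆ L` carry the same loops up
to homotopy if every maximal cyclic set in `L` but not in `K` is inessential: a maximal such `K`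
could otherwise be enlarged by an inessential piece attached at a single point. Finally, as the
space is locally simply connected, the fundamental group of a union of two arc-closed sets with one
common point is the free product of theirs, and separating two of the finitely many essential
maximal cyclic sets at such a point reduces their number.
-/

open Filter Topology

/-! ### Arcs -/

/-- `S` is an arc with end points `u` and `v`. The parametrizing interval is arbitrary, so that
pieces of an arc are arcs without reparametrization; see `IsArc.exists_param`. -/
def IsArc {X : Type*} [TopologicalSpace X] (u v : X) (S : Set X) : Prop :=
  ∃ (a b : ℝ) (f : ℝ → X), a < b ∧ ContinuousOn f (Icc a b) ∧ InjOn f (Icc a b) ∧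
    f a = u ∧ f b = v ∧ f '' Icc a b = S

theorem exists_continuousOn_Icc_glue {X : Type*} [TopologicalSpace X] {a b c : ℝ} {f g : ℝ → X}
    (hab : a ≤ b) (hbc : b ≤ c) (hf : ContinuousOn f (Icc a b)) (hg : ContinuousOn g (Icc b c))
    (hfg : f b = g b) :
    ∃ h : ℝ → X, ContinuousOn h (Icc a c) ∧ EqOn h f (Icc a b) ∧ EqOn h g (Icc b c) := by
  have eqOn_left : EqOn (fun t => if t ≤ b then f t else g t) f (Icc a b) :=
    fun t ht => if_pos ht.2
  have eqOn_right : EqOn (fun t => if t ≤ b then f t else g t) g (Icc b c) := fun t ht => by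
    rcases ht.1.eq_or_lt with rfl | h
    · simpa using hfg
    · exact if_neg h.not_ge
  refine ⟨_, ?_, eqOn_left, eqOn_right⟩
  rw [← Icc_union_Icc_eq_Icc hab hbc]
  exact (hf.congr eqOn_left).union_of_isClosed (hg.congr eqOn_right) isClosed_Icc isClosed_Icc

namespace IsArc

variable {X : Type*} [TopologicalSpace X] {u v w : X} {A B K S : Set X}

theorem of_image {a b : ℝ} {f : ℝ → X} (hab : a < b) (hf : ContinuousOn f (Icc a b))
    (hi : InjOn f (Icc a b)) : IsArc (f a) (f b) (f '' Icc a b) :=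
  ⟨a, b, f, hab, hf, hi, rfl, rfl, rfl⟩

theorem left_mem (h : IsArc u v S) : u ∈ S := by
  obtain ⟨a, b, f, hab, -, -, rfl, -, rfl⟩ := h
  exact mem_image_of_mem f (left_mem_Icc.2 hab.le)

theorem right_mem (h : IsArc u v S) : v ∈ S := by
  obtain ⟨a, b, f, hab, -, -, -, rfl, rfl⟩ := h
  exact mem_image_of_mem f (right_mem_Icc.2 hab.le)

theorem ne (h : IsArc u v S) : u ≠ v := by
  obtain ⟨a, b, f, hab, -, hi, rfl, rfl, rfl⟩ := h
  exact fun e => hab.ne (hi (left_mem_Icc.2 hab.le) (right_mem_Icc.2 hab.le) e)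

theorem isCompact (h : IsArc u v S) : IsCompact S := by
  obtain ⟨a, b, f, -, hf, -, -, -, rfl⟩ := h
  exact isCompact_Icc.image_of_continuousOn hf

theorem isClosed [T2Space X] (h : IsArc u v S) : IsClosed S := h.isCompact.isClosed

theorem isPathConnected (h : IsArc u v S) : IsPathConnected S := by
  obtain ⟨a, b, f, hab, hf, -, -, -, rfl⟩ := h
  exact ((convex_Icc a b).isPathConnected (nonempty_Icc.2 hab.le)).image' hf

theorem exists_param (h : IsArc u v S) {α β : ℝ} (hαβ : α < β) :
    ∃ f : ℝ → X, ContinuousOn f (Icc α β) ∧ InjOn f (Icc α β) ∧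
      f α = u ∧ f β = v ∧ f '' Icc α β = S := by
  obtain ⟨a, b, f, hab, hf, hi, rfl, rfl, rfl⟩ := h
  have hβα : 0 < β - α := sub_pos.2 hαβ
  have hr : 0 < (b - a) / (β - α) := div_pos (sub_pos.2 hab) hβα
  set φ := affineHomeomorph ((b - a) / (β - α)) (a - (b - a) / (β - α) * α) hr.ne' with hφ
  have hα : φ α = a := by simp [hφ]
  have hβ : φ β = b := by
    simp only [hφ, affineHomeomorph_apply]
    field_simp
    ring
  have himage : φ '' Icc α β = Icc a b := by
    rw [hφ, affineHomeomorph_image_Icc _ _ _ _ hr]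
    exact congrArg₂ Icc hα hβ
  have hmaps : MapsTo φ (Icc α β) (Icc a b) := image_subset_iff.1 himage.le
  exact ⟨f ∘ φ, hf.comp φ.continuous.continuousOn hmaps, hi.comp φ.injective.injOn hmaps,
    congrArg f hα, congrArg f hβ, by rw [image_comp, himage]⟩

theorem exists_continuous_param (h : IsArc u v S) :
    ∃ f : ℝ → X, Continuous f ∧ InjOn f (Icc 0 1) ∧ f 0 = u ∧ f 1 = v ∧ f '' Icc 0 1 = S := by
  obtain ⟨f, hf, hi, h0, h1, himage⟩ := h.exists_param zero_lt_one
  have heq : EqOn (IccExtend zero_le_one ((Icc 0 1).domRestrict f)) f (Icc 0 1) :=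
    fun t ht => IccExtend_of_mem _ _ ht
  exact ⟨_, hf.domRestrict.Icc_extend', hi.congr heq.symm, by rw [heq (by simp), h0],
    by rw [heq (by simp), h1], by rw [heq.image_eq, himage]⟩

theorem isPathConnected_diff_right (h : IsArc u v S) : IsPathConnected (S \ {v}) := by
  obtain ⟨a, b, f, hab, hf, hi, -, rfl, rfl⟩ := h
  have himage : f '' Icc a b \ {f b} = f '' Ico a b := by
    rw [← Icc_sdiff_right, hi.image_sdiff_subset, image_singleton]
    exact singleton_subset_iff.2 (right_mem_Icc.2 hab.le)
  rw [himage]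
  exact ((convex_Ico a b).isPathConnected (nonempty_Ico.2 hab)).image' (hf.mono Ico_subset_Icc_self)

theorem symm (h : IsArc u v S) : IsArc v u S := by
  obtain ⟨a, b, f, hab, hf, hi, rfl, rfl, rfl⟩ := h
  have hmaps : MapsTo (Neg.neg : ℝ → ℝ) (Icc (-b) (-a)) (Icc a b) := fun t ht =>
    ⟨le_neg_of_le_neg ht.2, neg_le_of_neg_le ht.1⟩
  refine ⟨-b, -a, f ∘ Neg.neg, neg_lt_neg hab, hf.comp continuous_neg.continuousOn hmaps,
    hi.comp neg_injective.injOn hmaps, by simp, by simp, ?_⟩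
  rw [image_comp, image_neg_eq_neg, neg_Icc, neg_neg, neg_neg]

theorem isPathConnected_diff_left (h : IsArc u v S) : IsPathConnected (S \ {u}) :=
  h.symm.isPathConnected_diff_right

theorem exists_split (h : IsArc u v S) (hw : w ∈ S) (hu : w ≠ u) (hv : w ≠ v) :
    ∃ A B, IsArc u w A ∧ IsArc w v B ∧ A ∪ B = S ∧ A ∩ B = {w} := by
  obtain ⟨a, b, f, hab, hf, hi, rfl, rfl, rfl⟩ := h
  obtain ⟨c, hc, rfl⟩ := hw
  have hac : a < c := hc.1.lt_of_ne (by rintro rfl; exact hu rfl)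
  have hcb : c < b := hc.2.lt_of_ne (by rintro rfl; exact hv rfl)
  have hleft : Icc a c ⊆ Icc a b := Icc_subset_Icc_right hc.2
  have hright : Icc c b ⊆ Icc a b := Icc_subset_Icc_left hc.1
  refine ⟨_, _, of_image hac (hf.mono hleft) (hi.mono hleft),
    of_image hcb (hf.mono hright) (hi.mono hright), ?_, ?_⟩
  · rw [← image_union, Icc_union_Icc_eq_Icc hc.1 hc.2]
  · rw [← hi.image_inter hleft hright, Icc_inter_Icc_eq_singleton hc.1 hc.2, image_singleton]

theorem join (hA : IsArc u w A) (hB : IsArc w v B) (hAB : A ∩ B = {w}) : IsArc u v (A ∪ B) := by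
  obtain ⟨f, hf, hfi, hf0, hf1, rfl⟩ := hA.exists_param zero_lt_one
  obtain ⟨g, hg, hgi, hg1, hg2, rfl⟩ := hB.exists_param (α := 1) (β := 2) one_lt_two
  obtain ⟨h, hh, hhf, hhg⟩ := exists_continuousOn_Icc_glue zero_le_one one_le_two hf hg
    (hf1.trans hg1.symm)
  have hhg' : EqOn h g (Ioc 1 2) := hhg.mono Ioc_subset_Icc_self
  have hdisj : Disjoint (Icc (0 : ℝ) 1) (Ioc 1 2) :=
    disjoint_left.2 fun t h₁ h₂ => h₂.1.not_ge h₁.2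
  refine ⟨0, 2, h, two_pos, hh, ?_, by rw [hhf (by simp), hf0], by rw [hhg (by simp), hg2], ?_⟩
  · rw [← Icc_union_Ioc_eq_Icc zero_le_one one_le_two, injOn_union hdisj]
    refine ⟨hfi.congr hhf.symm, (hgi.mono Ioc_subset_Icc_self).congr hhg'.symm, ?_⟩
    intro s hs t ht hst
    rw [hhf hs, hhg' ht] at hst
    have hmem : g t ∈ f '' Icc 0 1 ∩ g '' Icc 1 2 :=
      ⟨⟨s, hs, hst⟩, mem_image_of_mem g (Ioc_subset_Icc_self ht)⟩
    rw [hAB, mem_singleton_iff, ← hg1] at hmem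
    exact ht.1.ne' (hgi (Ioc_subset_Icc_self ht) (by simp) hmem)
  · rw [← Icc_union_Icc_eq_Icc zero_le_one one_le_two, image_union, hhf.image_eq, hhg.image_eq]

theorem exists_subarc_inter_eq_singleton (h : IsArc u v S) (hK : IsClosed K)
    (hu : u ∉ K) (hne : (S ∩ K).Nonempty) : ∃ w A, IsArc u w A ∧ A ⊆ S ∧ A ∩ K = {w} := by
  obtain ⟨a, b, f, -, hf, hi, rfl, rfl, rfl⟩ := h
  have hcompact : IsCompact (Icc a b ∩ f ⁻¹' K) :=
    isCompact_Icc.of_isClosed_subset (hf.preimage_isClosed_of_isClosed isClosed_Icc hK)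
      inter_subset_left
  have hnonempty : (Icc a b ∩ f ⁻¹' K).Nonempty := by
    obtain ⟨_, ⟨t, ht, rfl⟩, hk⟩ := hne
    exact ⟨t, ht, hk⟩
  obtain ⟨c, hc, hleast⟩ := hcompact.exists_isLeast hnonempty
  have hac : a < c := hc.1.1.lt_of_ne (by rintro rfl; exact hu hc.2)
  have hsub : Icc a c ⊆ Icc a b := Icc_subset_Icc_right hc.1.2
  refine ⟨f c, _, of_image hac (hf.mono hsub) (hi.mono hsub), image_mono hsub,
    Subset.antisymm ?_ (singleton_subset_iff.2 ⟨mem_image_of_mem f (right_mem_Icc.2 hac.le), hc.2⟩)⟩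
  rintro _ ⟨⟨t, ht, rfl⟩, hz⟩
  exact congrArg f (ht.2.antisymm (hleast ⟨hsub ht, hz⟩))

end IsArc

/-! ### Paths contain arcs -/

/-- The running maximum of `φ` from time `p` on, constantly `φ p` before time `p`. -/
noncomputable def runningMax (φ : ℝ → ℝ) (p t : ℝ) : ℝ :=
  sSup (φ '' Icc p (max p t))

section RunningMax

variable {φ : ℝ → ℝ} {p s t : ℝ}

theorem continuous_runningMax (hφ : Continuous φ) (p : ℝ) : Continuous (runningMax φ p) := by
  have h : runningMax φ p =
      fun t => sSup ((fun θ => φ (p + θ • (max p t - p))) '' Icc (0 : ℝ) 1) := by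
    ext t
    rw [runningMax, ← segment_eq_Icc (le_max_left p t), segment_eq_image', image_image]
  rw [h]
  exact isCompact_Icc.continuous_sSup (by fun_prop)

theorem bddAbove_image_Icc (hφ : Continuous φ) : BddAbove (φ '' Icc s t) :=
  (isCompact_Icc.image hφ).bddAbove

theorem le_runningMax (hφ : Continuous φ) {r : ℝ} (hr : r ∈ Icc p t) : φ r ≤ runningMax φ p t :=
  le_csSup (bddAbove_image_Icc hφ) (mem_image_of_mem φ ⟨hr.1, le_max_of_le_right hr.2⟩)

theorem monotone_runningMax (hφ : Continuous φ) (p : ℝ) : Monotone (runningMax φ p) :=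
  fun _ _ hst => csSup_le_csSup (bddAbove_image_Icc hφ)
    ((nonempty_Icc.2 (le_max_left _ _)).image φ)
    (image_mono (Icc_subset_Icc_right (max_le_max_left p hst)))

theorem runningMax_of_le (h : t ≤ p) : runningMax φ p t = φ p := by
  simp [runningMax, max_eq_left h]

theorem self_le_runningMax (hφ : Continuous φ) (p t : ℝ) : φ p ≤ runningMax φ p t := by
  rcases le_total t p with h | h
  · exact (runningMax_of_le h).ge
  · exact le_runningMax hφ ⟨le_rfl, h⟩

theorem runningMax_eq_of_forall_eq (hst : s ≤ t) (h : ∀ r ∈ Icc s t, φ r = φ s) :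
    runningMax φ p s = runningMax φ p t := by
  refine congrArg sSup (Subset.antisymm
    (image_mono (Icc_subset_Icc_right (max_le_max_left p hst))) ?_)
  rintro _ ⟨r, ⟨hpr, hrt⟩, rfl⟩
  rcases le_or_gt r (max p s) with hrs | hrs
  · exact ⟨r, ⟨hpr, hrs⟩, rfl⟩
  · have hrt : r ≤ t := (le_max_iff.1 hrt).resolve_left ((le_max_left p s).trans_lt hrs).not_ge
    refine ⟨max p s, ⟨le_max_left _ _, le_rfl⟩, ?_⟩
    rw [h _ ⟨le_max_right _ _, hrs.le.trans hrt⟩, h _ ⟨(le_max_right _ _).trans hrs.le, hrt⟩]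

end RunningMax

/-- How far `g` has moved away from `g p` between the times `p` and `t`, truncated at `1`. -/
noncomputable def excursion {X : Type*} [MetricSpace X] (g : ℝ → X) (p t : ℝ) : ℝ :=
  min 1 (runningMax (fun r => dist (g p) (g r)) p t)

/-- The sum of the excursions of `g` from a dense sequence of starting times, with geometric
weights. It collapses the intervals on which `g` is constant, and only those if the fibres of `g`
are intervals. -/
noncomputable def monotoneCollapse {X : Type*} [MetricSpace X] (g : ℝ → X) (t : ℝ) : ℝ :=
  ∑' n : ℕ, (1 / 2) ^ n * excursion g (TopologicalSpace.denseSeq ℝ n) t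

section MonotoneCollapse

variable {X : Type*} [MetricSpace X] {g : ℝ → X}

theorem continuous_excursion (hg : Continuous g) (p : ℝ) : Continuous (excursion g p) :=
  continuous_const.min (continuous_runningMax (continuous_const.dist hg) p)

theorem monotone_excursion (hg : Continuous g) (p : ℝ) : Monotone (excursion g p) :=
  fun _ _ hst => min_le_min_left _ (monotone_runningMax (continuous_const.dist hg) p hst)

theorem excursion_nonneg (hg : Continuous g) (p t : ℝ) : 0 ≤ excursion g p t :=
  le_min zero_le_one (dist_nonneg.trans (self_le_runningMax (continuous_const.dist hg) p t))

theorem norm_half_pow_mul_excursion_le (hg : Continuous g) (n : ℕ) (p t : ℝ) :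
    ‖(1 / 2 : ℝ) ^ n * excursion g p t‖ ≤ (1 / 2) ^ n := by
  rw [Real.norm_of_nonneg (mul_nonneg (by positivity) (excursion_nonneg hg p t))]
  exact mul_le_of_le_one_right (by positivity) (min_le_left _ _)

theorem summable_half_pow_mul_excursion (hg : Continuous g) (p : ℕ → ℝ) (t : ℝ) :
    Summable fun n => (1 / 2 : ℝ) ^ n * excursion g (p n) t :=
  .of_norm_bounded summable_geometric_two fun n => norm_half_pow_mul_excursion_le hg n (p n) t

theorem monotone_half_pow_mul_excursion (hg : Continuous g) (n : ℕ) (p : ℝ) :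
    Monotone fun t => (1 / 2 : ℝ) ^ n * excursion g p t :=
  fun _ _ hst => mul_le_mul_of_nonneg_left (monotone_excursion hg p hst) (by positivity)

theorem continuous_monotoneCollapse (hg : Continuous g) : Continuous (monotoneCollapse g) :=
  continuous_tsum (fun _ => continuous_const.mul (continuous_excursion hg _))
    summable_geometric_two fun n t => norm_half_pow_mul_excursion_le hg n _ t

theorem monotone_monotoneCollapse (hg : Continuous g) : Monotone (monotoneCollapse g) :=
  fun _ _ hst => (summable_half_pow_mul_excursion hg _ _).tsum_le_tsum
    (fun n => monotone_half_pow_mul_excursion hg n _ hst) (summable_half_pow_mul_excursion hg _ _)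

theorem monotoneCollapse_lt (hg : Continuous g) {s t : ℝ} (hst : s ≤ t) (hne : g s ≠ g t) :
    monotoneCollapse g s < monotoneCollapse g t := by
  have hlt : s < t := hst.lt_of_ne (by rintro rfl; exact hne rfl)
  have hopen : IsOpen {p | g p ≠ g t} := isOpen_ne_fun hg continuous_const
  have hmem : s ∈ closure (Ioo s t) := by rw [closure_Ioo hlt.ne]; exact ⟨le_rfl, hst⟩
  -- Only starting times in `(s, t)` tell `s` and `t` apart: before `p` the running maximum is `0`.
  obtain ⟨n, hn, hnst⟩ := (TopologicalSpace.denseRange_denseSeq ℝ).exists_mem_open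
    (hopen.inter isOpen_Ioo) (mem_closure_iff.1 hmem _ hopen hne)
  refine (summable_half_pow_mul_excursion hg _ s).tsum_lt_tsum
    (fun n => monotone_half_pow_mul_excursion hg n _ hst) (i := n) ?_
    (summable_half_pow_mul_excursion hg _ t)
  refine mul_lt_mul_of_pos_left ?_ (by positivity)
  rw [excursion, runningMax_of_le hnst.1.le, dist_self, min_eq_right zero_le_one]
  exact lt_min one_pos ((dist_pos.2 hn).trans_le
    (le_runningMax (continuous_const.dist hg) ⟨hnst.2.le, le_rfl⟩))

theorem monotoneCollapse_eq_iff (hg : Continuous g) (hfib : ∀ x, (g ⁻¹' {x}).OrdConnected)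
    {s t : ℝ} : monotoneCollapse g s = monotoneCollapse g t ↔ g s = g t := by
  wlog hst : s ≤ t generalizing s t
  · rw [eq_comm, this (le_of_not_ge hst), eq_comm]
  refine ⟨fun h => by_contra fun hne => (monotoneCollapse_lt hg hst hne).ne h, fun h => ?_⟩
  have hconst : ∀ r ∈ Icc s t, g r = g s := fun r hr => (hfib (g s)).out rfl h.symm hr
  refine tsum_congr fun n => ?_
  rw [excursion, excursion, runningMax_eq_of_forall_eq hst fun r hr => by rw [hconst r hr]]

end MonotoneCollapse

/-- The image is the quotient of the interval collapsing the fibres of `g`, which are those of the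
monotone map `monotoneCollapse g` onto an interval. -/
theorem IsArc.of_ordConnected_fibers {X : Type*} [MetricSpace X] {g : ℝ → X} (hg : Continuous g)
    (hfib : ∀ x, (g ⁻¹' {x}).OrdConnected) {a b : ℝ} (hab : a ≤ b) (hne : g a ≠ g b) :
    IsArc (g a) (g b) (g '' Icc a b) := by
  have hcont := continuous_monotoneCollapse hg
  set h := monotoneCollapse g
  have heq : ∀ {s t}, h s = h t ↔ g s = g t := monotoneCollapse_eq_iff hg hfib
  have himage : h '' Icc a b = Icc (h a) (h b) :=
    (monotone_monotoneCollapse hg).monotoneOn _ |>.image_Icc_subset.antisymm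
      (intermediate_value_Icc hab hcont.continuousOn)
  have hsurj : ∀ c ∈ Icc (h a) (h b), ∃ t ∈ Icc a b, h t = c := fun c hc => himage.ge hc
  choose! σ hσ hhσ using hsurj
  have hgσ : ∀ t ∈ Icc a b, g (σ (h t)) = g t := fun t ht =>
    heq.1 (hhσ _ (himage.le (mem_image_of_mem h ht)))
  refine ⟨h a, h b, g ∘ σ, monotoneCollapse_lt hg hab hne, ?_, ?_,
    hgσ a (left_mem_Icc.2 hab), hgσ b (right_mem_Icc.2 hab), ?_⟩
  · rw [continuousOn_iff_isClosed]
    intro D hD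
    refine ⟨h '' (Icc a b ∩ g ⁻¹' D),
      ((isCompact_Icc.inter_right (hD.preimage hg)).image hcont).isClosed, ?_⟩
    ext c
    constructor
    · rintro ⟨hcD, hc⟩
      exact ⟨⟨σ c, ⟨hσ c hc, hcD⟩, hhσ c hc⟩, hc⟩
    · rintro ⟨⟨t, ⟨ht, htD⟩, rfl⟩, hc⟩
      exact ⟨by rwa [mem_preimage, Function.comp_apply, hgσ t ht], hc⟩
  · intro c hc d hd hcd
    rw [← hhσ c hc, ← hhσ d hd]
    exact heq.2 hcd
  · rw [← himage, image_image]
    exact image_congr hgσ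

/-- `F` is a closed subset of the unit interval containing both end points, such that `γ` takes the
same value at the two ends of every component of the complement. Skipping those components gives a
path with the same end points as `γ`. -/
structure IsGapSet {X : Type*} (γ : ℝ → X) (F : Set ℝ) : Prop where
  isClosed : IsClosed F
  subset_Icc : F ⊆ Icc 0 1
  zero_mem : 0 ∈ F
  one_mem : 1 ∈ F
  eq_of_disjoint : ∀ ⦃a⦄, a ∈ F → ∀ ⦃b⦄, b ∈ F → a < b → Disjoint F (Ioo a b) → γ a = γ b

/-- The last point of `F` in `[0, t]`. -/
noncomputable def lastMem (F : Set ℝ) (t : ℝ) : ℝ :=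
  sSup (F ∩ Icc 0 t)

namespace IsGapSet

variable {X : Type*} {γ : ℝ → X} {F : Set ℝ} {a b m s t : ℝ}

theorem Icc_zero_one : IsGapSet γ (Icc 0 1) where
  isClosed := isClosed_Icc
  subset_Icc := Subset.rfl
  zero_mem := by simp
  one_mem := by simp
  eq_of_disjoint a ha b hb hab h := by
    obtain ⟨t, ht⟩ := exists_between hab
    exact (disjoint_left.1 h ⟨ha.1.trans ht.1.le, ht.2.le.trans hb.2⟩ ht).elim

theorem exists_eq_of_mem_Icc (hF : IsGapSet γ F) (ha : a ∈ F) (hb : b ∈ F) (hm : m ∈ Icc a b) :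
    ∃ r ∈ F ∩ Icc a m, ∃ s ∈ F ∩ Icc m b, γ r = γ s := by
  obtain ⟨r, hr, hrmax⟩ := (isCompact_Icc.inter_left hF.isClosed).exists_isGreatest
    ⟨a, ha, left_mem_Icc.2 hm.1⟩
  obtain ⟨s, hs, hsmin⟩ := (isCompact_Icc.inter_left hF.isClosed).exists_isLeast
    ⟨b, hb, right_mem_Icc.2 hm.2⟩
  refine ⟨r, hr, s, hs, ?_⟩
  rcases (hr.2.2.trans hs.2.1).eq_or_lt with rfl | hrs
  · rfl
  refine hF.eq_of_disjoint hr.1 hs.1 hrs (disjoint_left.2 fun t htF ht => ?_)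
  rcases le_total t m with htm | hmt
  · exact ht.1.not_ge (hrmax ⟨htF, hr.2.1.trans ht.1.le, htm⟩)
  · exact ht.2.not_ge (hsmin ⟨htF, hmt, ht.2.le.trans hs.2.2⟩)

theorem sdiff_Ioo (hF : IsGapSet γ F) (hs : s ∈ F) (ht : t ∈ F) (h : γ s = γ t) :
    IsGapSet γ (F \ Ioo s t) where
  isClosed := hF.isClosed.sdiff isOpen_Ioo
  subset_Icc := sdiff_subset.trans hF.subset_Icc
  zero_mem := ⟨hF.zero_mem, fun h => h.1.not_ge (hF.subset_Icc hs).1⟩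
  one_mem := ⟨hF.one_mem, fun h => h.2.not_ge (hF.subset_Icc ht).2⟩
  eq_of_disjoint a ha b hb hab hdisj := by
    have hgap : ∀ z ∈ F, z ∈ Ioo a b → z ∈ Ioo s t := fun z hz hzab =>
      by_contra fun hn => disjoint_left.1 hdisj ⟨hz, hn⟩ hzab
    by_cases hex : ∃ z ∈ F, z ∈ Ioo a b
    · obtain ⟨z, hz, hzab⟩ := hex
      have hzst := hgap z hz hzab
      have has : a ≤ s := not_lt.1 fun h => ha.2 ⟨h, hzab.1.trans hzst.2⟩
      have htb : t ≤ b := not_lt.1 fun h => hb.2 ⟨hzst.1.trans hzab.2, h⟩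
      obtain rfl : a = s := has.antisymm <| not_lt.1 fun h =>
        lt_irrefl s (hgap s hs ⟨h, hzst.1.trans hzab.2⟩).1
      obtain rfl : t = b := htb.antisymm <| not_lt.1 fun h =>
        lt_irrefl t (hgap t ht ⟨hzab.1.trans hzst.2, h⟩).2
      exact h
    · push Not at hex
      exact hF.eq_of_disjoint ha.1 hb.1 hab (disjoint_left.2 hex)

theorem isGreatest_lastMem (hF : IsGapSet γ F) (ht : 0 ≤ t) :
    IsGreatest (F ∩ Icc 0 t) (lastMem F t) :=
  (isCompact_Icc.inter_left hF.isClosed).isGreatest_sSup ⟨0, hF.zero_mem, left_mem_Icc.2 ht⟩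

theorem lastMem_eq_self (hF : IsGapSet γ F) (ht : t ∈ F) : lastMem F t = t :=
  (hF.isGreatest_lastMem (hF.subset_Icc ht).1).unique
    ⟨⟨ht, (hF.subset_Icc ht).1, le_rfl⟩, fun _ hr => hr.2.2⟩

theorem lastMem_mono (hF : IsGapSet γ F) (hs : 0 ≤ s) (hst : s ≤ t) :
    lastMem F s ≤ lastMem F t := by
  have hmem := (hF.isGreatest_lastMem hs).1
  exact (hF.isGreatest_lastMem (hs.trans hst)).2 ⟨hmem.1, hmem.2.1, hmem.2.2.trans hst⟩

theorem lastMem_eq_or_exists (hF : IsGapSet γ F) (hs : 0 ≤ s) (hst : s ≤ t) :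
    γ (lastMem F s) = γ (lastMem F t) ∨
      ∃ s' ∈ Icc s t, ∃ t' ∈ Icc s t, γ (lastMem F s) = γ s' ∧ γ (lastMem F t) = γ t' := by
  have ⟨hsmem, hsmax⟩ := hF.isGreatest_lastMem hs
  have ⟨htmem, _⟩ := hF.isGreatest_lastMem (hs.trans hst)
  rcases le_or_gt (lastMem F t) s with h | h
  · exact .inl (congrArg γ ((hF.lastMem_mono hs hst).antisymm (hsmax ⟨htmem.1, htmem.2.1, h⟩)))
  · obtain ⟨r, hr, s', hs', heq⟩ := hF.exists_eq_of_mem_Icc hsmem.1 htmem.1 ⟨hsmem.2.2, h.le⟩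
    obtain rfl : r = lastMem F s :=
      (hsmax ⟨hr.1, hsmem.2.1.trans hr.2.1, hr.2.2⟩).antisymm hr.2.1
    exact .inr ⟨s', ⟨hs'.2.1, hs'.2.2.trans htmem.2.2⟩, _, ⟨h.le, htmem.2.2⟩, heq, rfl⟩

theorem continuous_comp_lastMem [MetricSpace X] (hF : IsGapSet γ F) (hγ : Continuous γ) :
    Continuous fun t : Icc (0 : ℝ) 1 => γ (lastMem F t) := by
  refine Metric.continuous_iff.2 fun s ε hε => ?_
  obtain ⟨δ, hδ, H⟩ := Metric.continuous_iff.1 hγ s (ε / 2) (half_pos hε)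
  have hclose : ∀ {p q : ℝ}, p ∈ uIcc (s : ℝ) q → dist q s < δ → dist (γ p) (γ s) < ε / 2 :=
    fun hp hq => H _ ((abs_sub_left_of_mem_uIcc hp).trans_lt hq)
  refine ⟨δ, hδ, fun t ht => ?_⟩
  obtain heq | ⟨s', hs', t', ht', hss', htt'⟩ : γ (lastMem F t) = γ (lastMem F s) ∨
      ∃ s' ∈ uIcc (s : ℝ) t, ∃ t' ∈ uIcc (s : ℝ) t,
        γ (lastMem F s) = γ s' ∧ γ (lastMem F t) = γ t' := by
    rcases le_total (s : ℝ) t with hst | hts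
    · rw [uIcc_of_le hst, eq_comm]
      exact hF.lastMem_eq_or_exists s.2.1 hst
    · rw [uIcc_of_ge hts]
      rcases hF.lastMem_eq_or_exists t.2.1 hts with h | ⟨t', ht', s', hs', h₁, h₂⟩
      exacts [.inl h, .inr ⟨s', hs', t', ht', h₂, h₁⟩]
  · rwa [heq, dist_self]
  · rw [hss', htt']
    linarith [dist_triangle_right (γ t') (γ s') (γ s), hclose hs' ht, hclose ht' ht]

theorem ordConnected_fibers_of_minimal (hF : Minimal (IsGapSet γ) F) (x : X) :
    ((fun t : Icc (0 : ℝ) 1 => γ (lastMem F t)) ⁻¹' {x}).OrdConnected := by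
  refine ⟨fun s hs t ht r hr => ?_⟩
  have hmem : ∀ z : Icc (0 : ℝ) 1, lastMem F z ∈ F := fun z =>
    (hF.prop.isGreatest_lastMem z.2.1).1.1
  rcases (hF.prop.lastMem_mono s.2.1 (Subtype.coe_le_coe.2 hr.1)).eq_or_lt with h | hsr
  · rwa [mem_preimage, ← h]
  rcases (hF.prop.lastMem_mono r.2.1 (Subtype.coe_le_coe.2 hr.2)).eq_or_lt with h | hrt
  · rwa [mem_preimage, h]
  exact ((hF.2 (hF.prop.sdiff_Ioo (hmem s) (hmem t) (hs.trans ht.symm)) sdiff_subset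
    (hmem r)).2 ⟨hsr, hrt⟩).elim

theorem sInter [TopologicalSpace X] [T2Space X] (hγ : Continuous γ) {c : Set (Set ℝ)}
    (hc : ∀ F ∈ c, IsGapSet γ F) (hchain : IsChain (· ⊆ ·) c) (hne : c.Nonempty) :
    IsGapSet γ (⋂₀ c) where
  isClosed := isClosed_sInter fun F hF => (hc F hF).isClosed
  subset_Icc := by
    obtain ⟨F, hF⟩ := hne
    exact (sInter_subset_of_mem hF).trans (hc F hF).subset_Icc
  zero_mem F hF := (hc F hF).zero_mem
  one_mem F hF := (hc F hF).one_mem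
  eq_of_disjoint a ha b hb hab hdisj := by
    obtain ⟨m, hm⟩ := exists_between hab
    -- Each `F ∈ c` has points `r ≤ m ≤ s` with `γ r = γ s`; compactness finds common ones.
    let P : c → Set (ℝ × ℝ) := fun F =>
      (F.1 ∩ Icc a m) ×ˢ (F.1 ∩ Icc m b) ∩ {z | γ z.1 = γ z.2}
    have hclosed : IsClosed {z : ℝ × ℝ | γ z.1 = γ z.2} :=
      isClosed_eq (hγ.comp continuous_fst) (hγ.comp continuous_snd)
    have hP : ∀ F, IsCompact (P F) := fun F =>
      ((isCompact_Icc.inter_left (hc F F.2).isClosed).prod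
        (isCompact_Icc.inter_left (hc F F.2).isClosed)).inter_right hclosed
    have hPmono : ∀ F G : c, F.1 ⊆ G.1 → P F ⊆ P G := fun F G h => inter_subset_inter_left _
      (prod_mono (inter_subset_inter_left _ h) (inter_subset_inter_left _ h))
    have hPne : ∀ F, (P F).Nonempty := fun F => by
      obtain ⟨r, hr, s, hs, heq⟩ :=
        (hc F F.2).exists_eq_of_mem_Icc (ha F F.2) (hb F F.2) ⟨hm.1.le, hm.2.le⟩
      exact ⟨(r, s), ⟨hr, hs⟩, heq⟩
    have hdir : Directed (· ⊇ ·) P := fun F G => (hchain.total F.2 G.2).elim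
      (fun h => ⟨F, Subset.rfl, hPmono F G h⟩) fun h => ⟨G, hPmono G F h, Subset.rfl⟩
    have : Nonempty c := hne.to_subtype
    obtain ⟨⟨r, s⟩, hrs⟩ := IsCompact.nonempty_iInter_of_directed_nonempty_isCompact_isClosed
      P hdir hPne hP fun F => (hP F).isClosed
    rw [mem_iInter] at hrs
    obtain ⟨⟨⟨-, hr⟩, -, hs⟩, heq⟩ := hrs this.some
    have hmem_r : r ∈ ⋂₀ c := fun F hF => (hrs ⟨F, hF⟩).1.1.1
    have hmem_s : s ∈ ⋂₀ c := fun F hF => (hrs ⟨F, hF⟩).1.2.1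
    obtain rfl : a = r := hr.1.antisymm <| not_lt.1 fun h =>
      disjoint_left.1 hdisj hmem_r ⟨h, hr.2.trans_lt hm.2⟩
    obtain rfl : s = b := hs.2.antisymm <| not_lt.1 fun h =>
      disjoint_left.1 hdisj hmem_s ⟨hm.1.trans_le hs.1, h⟩
    exact heq

theorem exists_minimal [TopologicalSpace X] [T2Space X] (hγ : Continuous γ) :
    ∃ F, Minimal (IsGapSet γ) F := by
  obtain ⟨F, -, hF⟩ := zorn_superset_nonempty {F | IsGapSet γ F}
    (fun c hc hchain hne => ⟨⋂₀ c, sInter hγ hc hchain hne, fun _ => sInter_subset_of_mem⟩)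
    _ Icc_zero_one
  exact ⟨F, hF⟩

end IsGapSet

namespace IsArc

variable {X : Type*} [MetricSpace X] {u v : X} {W : Set X}

theorem exists_of_continuous {γ : ℝ → X} (hγ : Continuous γ) (hne : γ 0 ≠ γ 1) :
    ∃ S ⊆ γ '' Icc 0 1, IsArc (γ 0) (γ 1) S := by
  obtain ⟨F, hF⟩ := IsGapSet.exists_minimal hγ
  let g : ℝ → X := IccExtend zero_le_one fun t : Icc (0 : ℝ) 1 => γ (lastMem F t)
  have hg0 : g 0 = γ 0 := by
    simp [g, IccExtend_left, hF.prop.lastMem_eq_self hF.prop.zero_mem]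
  have hg1 : g 1 = γ 1 := by
    simp [g, IccExtend_right, hF.prop.lastMem_eq_self hF.prop.one_mem]
  have harc : IsArc (g 0) (g 1) (g '' Icc 0 1) :=
    of_ordConnected_fibers (hF.prop.continuous_comp_lastMem hγ).Icc_extend'
      (fun x => (IsGapSet.ordConnected_fibers_of_minimal hF x).preimage_mono (monotone_projIcc _))
      zero_le_one (hg0.trans_ne (hne.trans_eq hg1.symm))
  rw [hg0, hg1] at harc
  refine ⟨g '' Icc 0 1, ?_, harc⟩
  rintro _ ⟨t, -, rfl⟩
  exact mem_image_of_mem γ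
    (hF.prop.subset_Icc (hF.prop.isGreatest_lastMem (projIcc _ _ zero_le_one t).2.1).1.1)

theorem exists_of_joinedIn (h : JoinedIn W u v) (huv : u ≠ v) : ∃ S ⊆ W, IsArc u v S := by
  obtain ⟨γ, hγ⟩ := h
  obtain ⟨S, hS, hA⟩ := exists_of_continuous γ.continuous_extend (by simpa using huv)
  refine ⟨S, hS.trans (image_subset_iff.2 fun t ht => ?_), by simpa using hA⟩
  rw [mem_preimage, γ.extend_apply ht]
  exact hγ _

theorem exists_of_isPathConnected (h : IsPathConnected W) (hu : u ∈ W) (hv : v ∈ W)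
    (huv : u ≠ v) : ∃ S ⊆ W, IsArc u v S :=
  exists_of_joinedIn (h.joinedIn u hu v hv) huv

end IsArc

/-! ### Jordan curves -/

theorem IsJordanCurve.of_loop {X : Type} [TopologicalSpace X] [T2Space X] {f : ℝ → X}
    (hf : ContinuousOn f (Icc 0 1)) (hi : InjOn f (Ico 0 1)) (h01 : f 0 = f 1) :
    IsJordanCurve (f '' Icc 0 1) := by
  let F : AddCircle (1 : ℝ) → X := AddCircle.liftIco 1 0 f
  have hF : Continuous F := AddCircle.liftIco_zero_continuous h01 hf
  have hFcoe : ∀ t ∈ Ico (0 : ℝ) 1, F t = f t := fun t ht => AddCircle.liftIco_zero_coe_apply ht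
  have hcoe : ((↑) : ℝ → AddCircle (1 : ℝ)) '' Ico 0 1 = univ := by
    simpa using AddCircle.coe_image_Ico_eq (1 : ℝ) 0
  have hinj : Function.Injective F := by
    rw [← injOn_univ, ← hcoe]
    rintro _ ⟨s, hs, rfl⟩ _ ⟨t, ht, rfl⟩ hst
    rw [hFcoe s hs, hFcoe t ht] at hst
    rw [hi hs ht hst]
  have hrange : range F = f '' Icc 0 1 := by
    rw [← image_univ, ← hcoe, image_image, image_congr hFcoe, ← Ico_union_right zero_le_one,
      image_union, image_singleton, ← h01, eq_comm, union_eq_left, singleton_subset_iff]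
    exact mem_image_of_mem f (by simp)
  rw [← hrange]
  exact ⟨(hF.isClosedEmbedding hinj).isEmbedding.toHomeomorph⟩

theorem IsArc.isJordanCurve_union {X : Type} [TopologicalSpace X] [T2Space X] {u v : X}
    {A B : Set X} (hA : IsArc u v A) (hB : IsArc u v B) (hAB : A ∩ B = {u, v}) :
    IsJordanCurve (A ∪ B) := by
  have hhalf : (0 : ℝ) ≤ 1 / 2 := by norm_num
  have hhalf' : (1 / 2 : ℝ) < 1 := by norm_num
  obtain ⟨f, hf, hfi, hfu, hfv, rfl⟩ := hA.exists_param (α := 0) (β := 1 / 2) (by norm_num)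
  obtain ⟨g, hg, hgi, hgv, hgu, rfl⟩ := hB.symm.exists_param hhalf'
  obtain ⟨h, hh, hhf, hhg⟩ := exists_continuousOn_Icc_glue hhalf hhalf'.le hf hg
    (hfv.trans hgv.symm)
  have himage : h '' Icc 0 1 = f '' Icc 0 (1 / 2) ∪ g '' Icc (1 / 2) 1 := by
    rw [← Icc_union_Icc_eq_Icc hhalf hhalf'.le, image_union, hhf.image_eq, hhg.image_eq]
  have hIoo : Ioo (1 / 2 : ℝ) 1 ⊆ Icc (1 / 2) 1 := Ioo_subset_Icc_self
  have hdisj : Disjoint (Icc (0 : ℝ) (1 / 2)) (Ioo (1 / 2) 1) :=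
    disjoint_left.2 fun t hs ht => ht.1.not_ge hs.2
  rw [← himage]
  refine .of_loop hh ?_ (by rw [hhf (by simp), hhg (right_mem_Icc.2 hhalf'.le), hfu, hgu])
  rw [← Icc_union_Ioo_eq_Ico hhalf hhalf', injOn_union hdisj]
  refine ⟨hfi.congr hhf.symm, (hgi.mono hIoo).congr (hhg.mono hIoo).symm, ?_⟩
  intro s hs t ht hst
  rw [hhf hs, hhg (hIoo ht)] at hst
  have hmem : g t ∈ f '' Icc 0 (1 / 2) ∩ g '' Icc (1 / 2) 1 :=
    ⟨⟨s, hs, hst⟩, mem_image_of_mem g (hIoo ht)⟩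
  rw [hAB, ← hgu, ← hgv] at hmem
  rcases hmem with h | h
  · exact ht.2.ne (hgi (hIoo ht) (right_mem_Icc.2 hhalf'.le) h)
  · exact ht.1.ne' (hgi (hIoo ht) (left_mem_Icc.2 hhalf'.le) h)

namespace IsJordanCurve

variable {X : Type} [TopologicalSpace X] {J : Set X} {u v x : X}

theorem exists_loop (h : IsJordanCurve J) (hu : u ∈ J) : ∃ f : ℝ → X, Continuous f ∧
    InjOn f (Ico 0 1) ∧ f 0 = u ∧ f 1 = u ∧ f '' Ico 0 1 = J := by
  obtain ⟨e⟩ := h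
  let θ := e.symm ⟨u, hu⟩
  have hcoe : ((↑) : ℝ → AddCircle (1 : ℝ)) '' Ico 0 1 = univ := by
    simpa using AddCircle.coe_image_Ico_eq (1 : ℝ) 0
  have hinj : InjOn ((↑) : ℝ → AddCircle (1 : ℝ)) (Ico 0 1) := fun s hs t ht hst =>
    (AddCircle.coe_eq_coe_iff_of_mem_Ico (p := 1) (a := 0) (by simpa using hs)
      (by simpa using ht)).1 hst
  refine ⟨fun t => e (θ + (t : AddCircle (1 : ℝ))), ?_, ?_, by simp [θ], ?_, ?_⟩
  · exact continuous_subtype_val.comp (e.continuous.comp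
      (continuous_const.add (AddCircle.continuous_mk' 1)))
  · exact fun s hs t ht hst => hinj hs ht (add_left_cancel (e.injective (Subtype.ext hst)))
  · simp [θ, AddCircle.coe_period (1 : ℝ)]
  · rw [← image_image (fun φ : AddCircle (1 : ℝ) => (e (θ + φ) : X)), hcoe, image_univ]
    exact ((e.surjective.comp (add_left_surjective θ)).range_comp Subtype.val).trans
      Subtype.range_coe

theorem isCompact (h : IsJordanCurve J) : IsCompact J := by
  obtain ⟨e⟩ := h
  exact isCompact_iff_compactSpace.2 e.compactSpace

theorem isClosed [T2Space X] (h : IsJordanCurve J) : IsClosed J := h.isCompact.isClosed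

theorem nonempty (h : IsJordanCurve J) : J.Nonempty := by
  obtain ⟨e⟩ := h
  exact ⟨_, (e 0).2⟩

theorem nontrivial (h : IsJordanCurve J) : J.Nontrivial := by
  obtain ⟨u, hu⟩ := h.nonempty
  obtain ⟨f, -, hi, -, -, rfl⟩ := h.exists_loop hu
  have hIco : (Ico (0 : ℝ) 1).Nontrivial := ⟨0, by simp, 2⁻¹, by norm_num, by norm_num⟩
  exact hIco.image_of_injOn hi

theorem exists_arcs (h : IsJordanCurve J) (hu : u ∈ J) (hv : v ∈ J) (huv : u ≠ v) :
    ∃ A B, IsArc u v A ∧ IsArc u v B ∧ A ∪ B = J ∧ A ∩ B = {u, v} := by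
  obtain ⟨f, hf, hi, h0, h1, rfl⟩ := h.exists_loop hu
  obtain ⟨c, hc, rfl⟩ := hv
  have hc0 : 0 < c := hc.1.lt_of_ne (by rintro rfl; exact huv h0.symm)
  have hIco : Icc 0 c ⊆ Ico 0 1 := Icc_subset_Ico_right hc.2
  have hIco' : Ico c 1 ⊆ Ico 0 1 := Ico_subset_Ico_left hc.1
  have hf1 : ∀ t ∈ Ico c 1, f t ≠ f 1 := fun t ht heq =>
    (hc0.trans_le ht.1).ne' (hi (hIco' ht) (by simp) (heq.trans (h1.trans h0.symm)))
  have hinj : InjOn f (Icc c 1) := by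
    rw [← Ico_union_right hc.2.le, injOn_union (by simp)]
    exact ⟨hi.mono hIco', injOn_singleton _ _, fun t ht _ h => h ▸ hf1 t ht⟩
  refine ⟨f '' Icc 0 c, f '' Icc c 1, ⟨0, c, f, hc0, hf.continuousOn, hi.mono hIco, h0, rfl, rfl⟩,
    IsArc.symm ⟨c, 1, f, hc.2, hf.continuousOn, hinj, rfl, h1, rfl⟩, ?_, ?_⟩
  · rw [← image_union, Icc_union_Icc_eq_Icc hc.1 hc.2.le, ← Ico_union_right zero_le_one,
      image_union, image_singleton, h1, union_eq_left, singleton_subset_iff, ← h0]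
    exact mem_image_of_mem f (by simp)
  · have hinter : Icc 0 c ∩ Ico c 1 = {c} := by
      ext t; simp only [mem_inter_iff, mem_Icc, mem_Ico, mem_singleton_iff]; grind
    rw [← Ico_union_right hc.2.le, image_union, inter_union_distrib_left,
      ← hi.image_inter hIco hIco', hinter, image_singleton, image_singleton, h1, union_comm,
      inter_eq_right.2 (singleton_subset_iff.2 ⟨0, left_mem_Icc.2 hc0.le, h0⟩ : {u} ⊆ f '' Icc 0 c),
      singleton_union]

theorem isPathConnected (h : IsJordanCurve J) : IsPathConnected J := by
  obtain ⟨u, hu⟩ := h.nonempty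
  obtain ⟨f, hf, -, -, -, rfl⟩ := h.exists_loop hu
  exact ((convex_Ico 0 1).isPathConnected (nonempty_Ico.2 one_pos)).image hf

theorem isPathConnected_diff (h : IsJordanCurve J) (hu : u ∈ J) : IsPathConnected (J \ {u}) := by
  obtain ⟨v, hv, hvu⟩ := h.nontrivial.exists_ne u
  obtain ⟨A, B, hA, hB, rfl, -⟩ := h.exists_arcs hu hv hvu.symm
  rw [union_sdiff_distrib]
  exact hA.isPathConnected_diff_left.union hB.isPathConnected_diff_left
    ⟨v, ⟨hA.right_mem, hvu⟩, hB.right_mem, hvu⟩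

theorem exists_arc_through (h : IsJordanCurve J) (hu : u ∈ J) (hv : v ∈ J) (hx : x ∈ J)
    (huv : u ≠ v) : ∃ A ⊆ J, IsArc u v A ∧ x ∈ A := by
  obtain ⟨A, B, hA, hB, rfl, -⟩ := h.exists_arcs hu hv huv
  rcases hx with hx | hx
  · exact ⟨A, subset_union_left, hA, hx⟩
  · exact ⟨B, subset_union_right, hB, hx⟩

theorem cyclicallyConnected (h : IsJordanCurve J) : CyclicallyConnected J :=
  fun _ hx _ hy => ⟨J, Subset.rfl, h, hx, hy⟩

end IsJordanCurve

/-! ### Cyclic connectivity -/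

section

variable {X : Type*} [MetricSpace X] {W K L A : Set X} {u v y : X}

theorem inter_eq_of_subset {α : Type*} {r s s' t : Set α} (h : s ∩ t = r) (hs : s' ⊆ s)
    (hr : r ⊆ s') : s' ∩ t = r :=
  ((inter_subset_inter_left t hs).trans h.subset).antisymm
    (subset_inter hr (h ▸ inter_subset_right))

theorem IsArc.exists_of_isClosed (hW : IsPathConnected W) (hK : IsClosed K) (hu : u ∈ W)
    (huK : u ∉ K) (hne : (W ∩ K).Nonempty) : ∃ w A, IsArc u w A ∧ A ⊆ W ∧ A ∩ K = {w} := by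
  obtain ⟨z, hzW, hzK⟩ := hne
  obtain ⟨S, hSW, hS⟩ := exists_of_isPathConnected hW hu hzW (by rintro rfl; exact huK hzK)
  obtain ⟨w, A, hA, hAS, hAK⟩ := hS.exists_subarc_inter_eq_singleton hK huK ⟨z, hS.right_mem, hzK⟩
  exact ⟨w, A, hA, hAS.trans hSW, hAK⟩

theorem IsArc.exists_of_isClosed_of_isClosed (hW : IsPathConnected W) (hK : IsClosed K)
    (hL : IsClosed L) (hd : Disjoint (W ∩ K) L) (hWK : (W ∩ K).Nonempty) (hWL : (W ∩ L).Nonempty) :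
    ∃ w z A, IsArc w z A ∧ A ⊆ W ∧ A ∩ K = {w} ∧ A ∩ L = {z} := by
  obtain ⟨u, hu⟩ := hWK
  obtain ⟨z, A, hA, hAW, hAL⟩ := exists_of_isClosed hW hL hu.1 (disjoint_left.1 hd hu) hWL
  have hz : z ∈ A ∩ L := hAL ▸ rfl
  obtain ⟨w, B, hB, hBA, hBK⟩ := hA.symm.exists_subarc_inter_eq_singleton hK
    (fun hzK => disjoint_left.1 hd ⟨hAW hz.1, hzK⟩ hz.2) ⟨u, hA.left_mem, hu.2⟩
  exact ⟨w, z, B, hB.symm, hBA.trans hAW, hBK,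
    inter_eq_of_subset hAL hBA (singleton_subset_iff.2 hB.left_mem)⟩

theorem IsArc.exists_ear (hA : IsArc u v A) (hK : IsClosed K) (hu : u ∈ K) (hv : v ∈ K)
    (hy : y ∈ A) (hyK : y ∉ K) : ∃ w z B, IsArc w z B ∧ B ⊆ A ∧ y ∈ B ∧ B ∩ K = {w, z} := by
  obtain ⟨L, R, hL, hR, rfl, hLR⟩ := hA.exists_split hy (by rintro rfl; exact hyK hu)
    (by rintro rfl; exact hyK hv)
  obtain ⟨w, L', hL', hLL, hLK⟩ :=
    hL.symm.exists_subarc_inter_eq_singleton hK hyK ⟨u, hL.left_mem, hu⟩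
  obtain ⟨z, R', hR', hRR, hRK⟩ := hR.exists_subarc_inter_eq_singleton hK hyK ⟨v, hR.right_mem, hv⟩
  have hLR' : L' ∩ R' = {y} := ((inter_subset_inter hLL hRR).trans hLR.subset).antisymm
    (singleton_subset_iff.2 ⟨hL'.left_mem, hR'.left_mem⟩)
  exact ⟨w, z, L' ∪ R', hL'.symm.join hR' hLR', union_subset_union hLL hRR, Or.inl hL'.left_mem,
    by rw [union_inter_distrib_right, hLK, hRK, singleton_union]⟩

end

section

variable {X : Type} [MetricSpace X] {L A J J' : Set X} {u v x y p : X}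

namespace IsJordanCurve

theorem exists_of_ear (hJ : IsJordanCurve J) (hA : IsArc u v A) (hAJ : A ∩ J = {u, v})
    (hx : x ∈ J) : ∃ J' ⊆ J ∪ A, IsJordanCurve J' ∧ A ⊆ J' ∧ x ∈ J' := by
  have hu : u ∈ A ∩ J := hAJ ▸ Or.inl rfl
  have hv : v ∈ A ∩ J := hAJ ▸ Or.inr rfl
  obtain ⟨B, hBJ, hB, hxB⟩ := hJ.exists_arc_through hu.2 hv.2 hx hA.ne
  have hBA : B ∩ A = {u, v} := inter_eq_of_subset (inter_comm A J ▸ hAJ) hBJ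
    (pair_subset hB.left_mem hB.right_mem)
  exact ⟨B ∪ A, union_subset_union_left A hBJ, hB.isJordanCurve_union hA hBA, subset_union_right,
    Or.inl hxB⟩

theorem exists_of_inter_nontrivial (hJ : IsJordanCurve J) (hJ' : IsJordanCurve J')
    (hne : (J ∩ J').Nontrivial) (hx : x ∈ J) (hy : y ∈ J') :
    ∃ J'' ⊆ J ∪ J', IsJordanCurve J'' ∧ x ∈ J'' ∧ y ∈ J'' := by
  obtain ⟨u, hu, v, hv, huv⟩ := hne
  by_cases hyJ : y ∈ J
  · exact ⟨J, subset_union_left, hJ, hx, hyJ⟩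
  obtain ⟨B, hBJ, hB, hyB⟩ := hJ'.exists_arc_through hu.2 hv.2 hy huv
  obtain ⟨w, z, A, hA, hAB, hyA, hAJ⟩ := hB.exists_ear hJ.isClosed hu.1 hv.1 hyB hyJ
  obtain ⟨J'', hsub, hJ'', hAJ'', hxJ''⟩ := hJ.exists_of_ear hA hAJ hx
  exact ⟨J'', hsub.trans (union_subset_union_right J (hAB.trans hBJ)), hJ'', hxJ'', hAJ'' hyA⟩

theorem exists_of_inter_eq_singleton (hJ : IsJordanCurve J) (hJ' : IsJordanCurve J')
    (hu : J ∩ J' = {u}) (hW : IsPathConnected W) (huW : u ∉ W) (hWJ : (W ∩ J).Nonempty)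
    (hWJ' : (W ∩ J').Nonempty) (hx : x ∈ J) (hy : y ∈ J') :
    ∃ J'' ⊆ J ∪ W ∪ J', IsJordanCurve J'' ∧ x ∈ J'' ∧ y ∈ J'' := by
  have hmem : u ∈ J ∩ J' := hu ▸ rfl
  have hdisj : Disjoint (W ∩ J) J' := disjoint_left.2 fun z hz hzJ' =>
    huW ((hu.subset ⟨hz.2, hzJ'⟩ : z = u) ▸ hz.1)
  obtain ⟨w, z, A, hA, hAW, hAJ, hAJ'⟩ :=
    IsArc.exists_of_isClosed_of_isClosed hW hJ.isClosed hJ'.isClosed hdisj hWJ hWJ'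
  have hw : w ∈ A ∩ J := hAJ ▸ rfl
  have hz : z ∈ A ∩ J' := hAJ' ▸ rfl
  obtain ⟨P, hPJ, hP, hxP⟩ := hJ.exists_arc_through hmem.1 hw.2 hx fun h => huW (h ▸ hAW hw.1)
  obtain ⟨Q, hQJ, hQ, hyQ⟩ := hJ'.exists_arc_through hmem.2 hz.2 hy fun h => huW (h ▸ hAW hz.1)
  have hPA : P ∩ A = {w} := inter_eq_of_subset (inter_comm A J ▸ hAJ) hPJ
    (singleton_subset_iff.2 hP.right_mem)
  have hPAQ : (P ∪ A) ∩ Q = {u, z} := by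
    refine Subset.antisymm ?_ (pair_subset ⟨Or.inl hP.left_mem, hQ.left_mem⟩
      ⟨Or.inr hA.right_mem, hQ.right_mem⟩)
    rintro y ⟨hyP | hyA, hyQ⟩
    · exact Or.inl (hu.subset ⟨hPJ hyP, hQJ hyQ⟩)
    · exact Or.inr (hAJ'.subset ⟨hyA, hQJ hyQ⟩)
  exact ⟨P ∪ A ∪ Q, union_subset_union (union_subset_union hPJ hAW) hQJ,
    (hP.join hA hPA).isJordanCurve_union hQ hPAQ, Or.inl (Or.inl hxP), Or.inr hyQ⟩

end IsJordanCurve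

/-- Disjoint path connected sets joining `u` and `v` to `L`, a two-point instance of the linkages
of Menger's theorem. -/
structure IsLinkage (P Q : Set X) (u v : X) (L : Set X) : Prop where
  isPathConnected_left : IsPathConnected P
  isPathConnected_right : IsPathConnected Q
  disjoint : Disjoint P Q
  left_mem : u ∈ P
  right_mem : v ∈ Q
  left_inter_nonempty : (P ∩ L).Nonempty
  right_inter_nonempty : (Q ∩ L).Nonempty

theorem IsLinkage.symm {P Q : Set X} (h : IsLinkage P Q u v L) : IsLinkage Q P v u L :=
  ⟨h.2, h.1, h.3.symm, h.5, h.4, h.7, h.6⟩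

theorem exists_isPathConnected_inter_eq_singleton (hW : IsPathConnected W) (hL : IsClosed L)
    (hu : u ∈ W) (hne : (W ∩ L).Nonempty) :
    ∃ P ⊆ W, IsPathConnected P ∧ u ∈ P ∧ ∃ w, P ∩ L = {w} := by
  by_cases huL : u ∈ L
  · exact ⟨{u}, singleton_subset_iff.2 hu, isPathConnected_singleton u, rfl, u,
      inter_eq_left.2 (singleton_subset_iff.2 huL)⟩
  · obtain ⟨w, A, hA, hAW, hAL⟩ := IsArc.exists_of_isClosed hW hL hu huL hne
    exact ⟨A, hAW, hA.isPathConnected, hA.left_mem, w, hAL⟩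

theorem IsLinkage.exists_inter_eq_singleton {P Q : Set X} (h : IsLinkage P Q u v L)
    (hL : IsClosed L) : ∃ P' ⊆ P, ∃ Q' ⊆ Q, IsLinkage P' Q' u v L ∧ (∃ a, P' ∩ L = {a}) ∧
      ∃ b, Q' ∩ L = {b} := by
  obtain ⟨P', hPP, hP', huP, a, ha⟩ := exists_isPathConnected_inter_eq_singleton
    h.isPathConnected_left hL h.left_mem h.left_inter_nonempty
  obtain ⟨Q', hQQ, hQ', hvQ, b, hb⟩ := exists_isPathConnected_inter_eq_singleton
    h.isPathConnected_right hL h.right_mem h.right_inter_nonempty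
  exact ⟨P', hPP, Q', hQQ, ⟨hP', hQ', h.disjoint.mono hPP hQQ, huP, hvQ,
    ha ▸ singleton_nonempty a, hb ▸ singleton_nonempty b⟩, ⟨a, ha⟩, b, hb⟩

theorem IsLinkage.of_arcs {B D : Set X} {a b : X} (hA : IsArc u a A) (hB : IsArc a v B)
    (hAB : A ∩ B = {a}) (hD : IsPathConnected D) (hbD : b ∈ D) (haD : a ∉ D)
    (hDw : D ∩ (A ∪ B) = {w}) (hwA : w ∈ A) (ha : a ∈ L) (hb : b ∈ L) :
    IsLinkage (A \ {a} ∪ D) B u v L := by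
  have hw : w ∈ D ∩ (A ∪ B) := hDw ▸ rfl
  refine ⟨hA.isPathConnected_diff_right.union hD ⟨w, ⟨hwA, fun h => haD (h ▸ hw.1)⟩, hw.1⟩,
    hB.isPathConnected, disjoint_left.2 ?_, Or.inl ⟨hA.left_mem, hA.ne⟩, hB.right_mem,
    ⟨b, Or.inr hbD, hb⟩, ⟨a, hB.left_mem, ha⟩⟩
  rintro z (hz | hz) hzB
  · exact hz.2 (hAB.subset ⟨hz.1, hzB⟩)
  · obtain rfl : z = w := hDw.subset ⟨hz, Or.inr hzB⟩
    exact haD ((hAB.subset ⟨hwA, hzB⟩ : z = a) ▸ hz)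

namespace CyclicallyConnected

variable {C C' : Set X}

theorem isPathConnected_diff (hC : CyclicallyConnected C) (hne : (C \ {p}).Nonempty) :
    IsPathConnected (C \ {p}) := by
  obtain ⟨q, hq, hqp⟩ := hne
  refine ⟨q, ⟨hq, hqp⟩, fun {y} hy => ?_⟩
  obtain ⟨J, hJC, hJ, hqJ, hyJ⟩ := hC q hq y hy.1
  by_cases hp : p ∈ J
  · exact ((hJ.isPathConnected_diff hp).joinedIn q ⟨hqJ, hqp⟩ y ⟨hyJ, hy.2⟩).mono
      (sdiff_subset_sdiff_left hJC)
  · exact (hJ.isPathConnected.joinedIn q hqJ y hyJ).mono (subset_sdiff_singleton hJC hp)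

theorem isPathConnected (hC : CyclicallyConnected C) (hne : C.Nonempty) :
    IsPathConnected C := by
  obtain ⟨q, hq⟩ := hne
  refine ⟨q, hq, fun {y} hy => ?_⟩
  obtain ⟨J, hJC, hJ, hqJ, hyJ⟩ := hC q hq y hy
  exact (hJ.isPathConnected.joinedIn q hqJ y hyJ).mono hJC

theorem exists_isJordanCurve_subset_union (hC : CyclicallyConnected C)
    (hC' : CyclicallyConnected C') (hne : (C ∩ C').Nontrivial) (hx : x ∈ C) (hy : y ∈ C') :
    ∃ J ⊆ C ∪ C', IsJordanCurve J ∧ x ∈ J ∧ y ∈ J := by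
  obtain ⟨u, hu, v, hv, huv⟩ := hne
  obtain ⟨J, hJC, hJ, hxJ, huJ⟩ := hC x hx u hu.1
  obtain ⟨J', hJC', hJ', hyJ', huJ'⟩ := hC' y hy u hu.2
  by_cases hJJ : (J ∩ J').Nontrivial
  · obtain ⟨J'', hsub, hJ''⟩ := hJ.exists_of_inter_nontrivial hJ' hJJ hxJ hyJ'
    exact ⟨J'', hsub.trans (union_subset_union hJC hJC'), hJ''⟩
  have hsing : J ∩ J' = {u} := (not_nontrivial_iff.1 hJJ).eq_singleton_of_mem ⟨huJ, huJ'⟩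
  have hW : IsPathConnected ((C ∪ C') \ {u}) := by
    rw [union_sdiff_distrib]
    exact (hC.isPathConnected_diff ⟨v, hv.1, huv.symm⟩).union
      (hC'.isPathConnected_diff ⟨v, hv.2, huv.symm⟩) ⟨v, ⟨hv.1, huv.symm⟩, hv.2, huv.symm⟩
  obtain ⟨a, ha, hau⟩ := hJ.nontrivial.exists_ne u
  obtain ⟨b, hb, hbu⟩ := hJ'.nontrivial.exists_ne u
  obtain ⟨J'', hsub, hJ''⟩ := hJ.exists_of_inter_eq_singleton hJ' hsing hW (fun h => h.2 rfl)
    ⟨a, ⟨Or.inl (hJC ha), hau⟩, ha⟩ ⟨b, ⟨Or.inr (hJC' hb), hbu⟩, hb⟩ hxJ hyJ'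
  exact ⟨J'', hsub.trans (union_subset (union_subset (hJC.trans subset_union_left) sdiff_subset)
    (hJC'.trans subset_union_right)), hJ''⟩

theorem union (hC : CyclicallyConnected C) (hC' : CyclicallyConnected C')
    (hne : (C ∩ C').Nontrivial) : CyclicallyConnected (C ∪ C') := by
  rintro x (hx | hx) y (hy | hy)
  · obtain ⟨J, h, h'⟩ := hC x hx y hy
    exact ⟨J, h.trans subset_union_left, h'⟩
  · exact hC.exists_isJordanCurve_subset_union hC' hne hx hy
  · obtain ⟨J, h, hJ, hy, hx⟩ := hC.exists_isJordanCurve_subset_union hC' hne hy hx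
    exact ⟨J, h, hJ, hx, hy⟩
  · obtain ⟨J, h, h'⟩ := hC' x hx y hy
    exact ⟨J, h.trans subset_union_right, h'⟩

theorem exists_arc_through (hC : CyclicallyConnected C) (hu : u ∈ C) (hv : v ∈ C) (hx : x ∈ C)
    (huv : u ≠ v) : ∃ A ⊆ C, IsArc u v A ∧ x ∈ A := by
  obtain ⟨J, hJC, hJ, huJ, hxJ⟩ := hC u hu x hx
  by_cases hvJ : v ∈ J
  · obtain ⟨A, hAJ, hA⟩ := hJ.exists_arc_through huJ hvJ hxJ huv
    exact ⟨A, hAJ.trans hJC, hA⟩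
  obtain ⟨z, hz, hzu⟩ := hJ.nontrivial.exists_ne u
  obtain ⟨w, D, hD, hDC, hDJ⟩ := IsArc.exists_of_isClosed
    (hC.isPathConnected_diff ⟨v, hv, huv.symm⟩) hJ.isClosed ⟨hv, huv.symm⟩ hvJ
    ⟨z, ⟨hJC hz, hzu⟩, hz⟩
  have hw : w ∈ D ∩ J := hDJ ▸ rfl
  obtain ⟨A, hAJ, hA, hxA⟩ := hJ.exists_arc_through huJ hw.2 hxJ (Ne.symm (hDC hw.1).2)
  have hAD : A ∩ D = {w} := inter_eq_of_subset (inter_comm D J ▸ hDJ) hAJ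
    (singleton_subset_iff.2 hA.right_mem)
  exact ⟨A ∪ D, union_subset (hAJ.trans hJC) (hDC.trans sdiff_subset), hA.join hD.symm hAD,
    Or.inl hxA⟩

theorem exists_isLinkage_of_mem (hC : CyclicallyConnected C) (hu : u ∈ C) (huL : u ∈ L)
    (hv : v ∈ C) (huv : u ≠ v) (hL : (C ∩ L).Nontrivial) :
    ∃ P ⊆ C, ∃ Q ⊆ C, IsLinkage P Q u v L := by
  obtain ⟨a, ha, hau⟩ := hL.exists_ne u
  exact ⟨{u}, singleton_subset_iff.2 hu, C \ {u}, sdiff_subset, isPathConnected_singleton u,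
    hC.isPathConnected_diff ⟨v, hv, huv.symm⟩, disjoint_sdiff_right, rfl, ⟨hv, huv.symm⟩,
    ⟨u, rfl, huL⟩, ⟨a, ⟨ha.1, hau⟩, ha.2⟩⟩

theorem exists_isLinkage (hC : CyclicallyConnected C) (hu : u ∈ C) (hv : v ∈ C) (huv : u ≠ v)
    (hL : (C ∩ L).Nontrivial) : ∃ P ⊆ C, ∃ Q ⊆ C, IsLinkage P Q u v L := by
  by_cases huL : u ∈ L
  · exact hC.exists_isLinkage_of_mem hu huL hv huv hL
  by_cases hvL : v ∈ L
  · obtain ⟨P, hP, Q, hQ, h⟩ := hC.exists_isLinkage_of_mem hv hvL hu huv.symm hL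
    exact ⟨Q, hQ, P, hP, h.symm⟩
  obtain ⟨a, ha, b, hb, hab⟩ := hL
  obtain ⟨S, hSC, hS, haS⟩ := hC.exists_arc_through hu hv ha.1 huv
  have hau : a ≠ u := fun h => huL (h ▸ ha.2)
  obtain ⟨A, B, hA, hB, rfl, hAB⟩ := hS.exists_split haS hau fun h => hvL (h ▸ ha.2)
  obtain ⟨D, hDC, hD, hbD, w, hw⟩ := exists_isPathConnected_inter_eq_singleton
    (hC.isPathConnected_diff ⟨b, hb.1, hab.symm⟩) hS.isClosed ⟨hb.1, hab.symm⟩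
    ⟨u, ⟨hu, hau.symm⟩, hS.left_mem⟩
  have haD : a ∉ D := fun h => (hDC h).2 rfl
  obtain ⟨hAC, hBC⟩ := union_subset_iff.1 hSC
  have hDC' : D ⊆ C := hDC.trans sdiff_subset
  rcases (hw ▸ rfl : w ∈ D ∩ (A ∪ B)).2 with hwA | hwB
  · exact ⟨_, union_subset (sdiff_subset.trans hAC) hDC', B, hBC,
      .of_arcs hA hB hAB hD hbD haD hw hwA ha.2 hb.2⟩
  · exact ⟨A, hAC, _, union_subset (sdiff_subset.trans hBC) hDC', .symm <|
      .of_arcs hB.symm hA.symm (inter_comm A B ▸ hAB) hD hbD haD (union_comm A B ▸ hw) hwB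
        ha.2 hb.2⟩

end CyclicallyConnected

namespace MaximalCyclic

variable {T T' C : Set X}

theorem subset_of_inter_nontrivial (hT : MaximalCyclic T) (hC : CyclicallyConnected C)
    (hne : (T ∩ C).Nontrivial) : C ⊆ T :=
  union_eq_left.1 (hT.2.2 (T ∪ C) (hT.2.1.union hC hne) subset_union_left)

theorem nontrivial (hT : MaximalCyclic T) : T.Nontrivial := not_subsingleton_iff.1 hT.1

theorem isPathConnected (hT : MaximalCyclic T) : IsPathConnected T :=
  hT.2.1.isPathConnected hT.nontrivial.nonempty

theorem inter_subsingleton (hT : MaximalCyclic T) (hT' : MaximalCyclic T') (hne : T ≠ T') :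
    (T ∩ T').Subsingleton := by
  by_contra h
  rw [not_subsingleton_iff] at h
  exact hne ((hT'.subset_of_inter_nontrivial hT.2.1 (inter_comm T T' ▸ h)).antisymm
    (hT.subset_of_inter_nontrivial hT'.2.1 h))

theorem arc_subset (hT : MaximalCyclic T) (hA : IsArc u v A) (hu : u ∈ T) (hv : v ∈ T) :
    A ⊆ T := by
  intro y hy
  by_contra hyT
  obtain ⟨J, hJT, hJ, huJ, hvJ⟩ := hT.2.1 u hu v hv
  obtain ⟨w, z, B, hB, -, hyB, hBJ⟩ :=
    hA.exists_ear hJ.isClosed huJ hvJ hy fun h => hyT (hJT h)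
  obtain ⟨J', -, hJ', hBJ', -⟩ := hJ.exists_of_ear hB hBJ huJ
  have hw : w ∈ B ∩ J := hBJ ▸ Or.inl rfl
  have hz : z ∈ B ∩ J := hBJ ▸ Or.inr rfl
  exact hyT (hT.subset_of_inter_nontrivial hJ'.cyclicallyConnected
    ⟨w, ⟨hJT hw.2, hBJ' hw.1⟩, z, ⟨hJT hz.2, hBJ' hz.1⟩, hB.ne⟩ (hBJ' hyB))

end MaximalCyclic

theorem CyclicallyConnected.sUnion {c : Set (Set X)} (hc : ∀ C ∈ c, CyclicallyConnected C)
    (hchain : IsChain (· ⊆ ·) c) : CyclicallyConnected (⋃₀ c) := by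
  rintro x ⟨A, hA, hx⟩ y ⟨B, hB, hy⟩
  obtain ⟨C, hC, hAC, hBC⟩ := hchain.directedOn A hA B hB
  obtain ⟨J, hJC, hJ⟩ := hc C hC x (hAC hx) y (hBC hy)
  exact ⟨J, hJC.trans (subset_sUnion_of_mem hC), hJ⟩

theorem CyclicallyConnected.exists_maximalCyclic {C : Set X} (hC : CyclicallyConnected C)
    (hne : C.Nontrivial) : ∃ T, MaximalCyclic T ∧ C ⊆ T := by
  obtain ⟨T, hCT, hT⟩ := zorn_subset_nonempty {D : Set X | CyclicallyConnected D}
    (fun c hc hchain _ => ⟨⋃₀ c, sUnion hc hchain, fun _ => subset_sUnion_of_mem⟩) C hC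
  exact ⟨T, ⟨not_subsingleton_iff.2 (hne.mono hCT), hT.1,
    fun D hD hTD => (hT.2 hD hTD).antisymm hTD⟩, hCT⟩

end

/-! ### Closedness of maximal cyclic sets -/

section InfiniteConcatenation

variable {X : Type*} [TopologicalSpace X] {p : X}

theorem joinedIn_of_tendsto_atTop {g : ℝ → X} (hg : ContinuousOn g (Ici 0))
    (hp : Tendsto g atTop (𝓝 p)) : JoinedIn (insert p (g '' Ici 0)) p (g 0) := by
  have hmaps : MapsTo (fun s : ℝ => s⁻¹ - 1) (Ioc 0 1) (Ici 0) := fun s hs =>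
    sub_nonneg.2 ((one_le_inv₀ hs.1).2 hs.2)
  let h : ℝ → X := fun s => if s ≤ 0 then p else g (s⁻¹ - 1)
  have hpos : EqOn h (fun s => g (s⁻¹ - 1)) (Ioi 0) := fun s hs => if_neg (not_le.2 hs)
  have hzero : h 0 = p := if_pos le_rfl
  have hcont : ContinuousOn h (Icc 0 1) := fun s hs => by
    rcases hs.1.eq_or_lt with rfl | hs0
    · have hright : Tendsto h (𝓝[>] 0) (𝓝 p) := by
        refine Tendsto.congr' (hpos.eventuallyEq_of_mem self_mem_nhdsWithin).symm ?_
        exact hp.comp (tendsto_atTop_add_const_right _ (-1) tendsto_inv_nhdsGT_zero)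
      refine (continuousWithinAt_Ioi_iff_Ici.1 ?_).mono Icc_subset_Ici_self
      rwa [ContinuousWithinAt, hzero]
    · have hinv : ContinuousOn (fun s : ℝ => s⁻¹ - 1) (Ioc 0 1) :=
        (continuousOn_inv₀.mono fun x hx => hx.1.ne').sub continuousOn_const
      have hIoc : ContinuousOn h (Ioc 0 1) :=
        (hg.comp hinv hmaps).congr (hpos.mono Ioc_subset_Ioi_self)
      refine (hIoc s ⟨hs0, hs.2⟩).mono_of_mem_nhdsWithin ?_
      filter_upwards [self_mem_nhdsWithin, mem_nhdsWithin_of_mem_nhds (Ioi_mem_nhds hs0)]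
        with x hx hx0 using ⟨hx0, hx.2⟩
  refine JoinedIn.ofLine hcont hzero ((hpos (mem_Ioi.2 one_pos)).trans (by simp)) ?_
  rintro _ ⟨s, hs, rfl⟩
  rcases hs.1.eq_or_lt with rfl | hs0
  · exact Or.inl hzero
  · exact Or.inr ⟨_, hmaps ⟨hs0, hs.2⟩, (hpos hs0).symm⟩

theorem exists_continuousOn_Ici_of_forall_joinedIn {P : ℕ → Set X} {u : ℕ → X}
    (hP : ∀ n, JoinedIn (P n) (u n) (u (n + 1))) :
    ∃ g : ℝ → X, ContinuousOn g (Ici 0) ∧ g 0 = u 0 ∧ ∀ t ≥ 0, g t ∈ P ⌊t⌋₊ := by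
  choose γ hγ using hP
  let g : ℝ → X := fun t => (γ ⌊t⌋₊).extend (t - ⌊t⌋₊)
  have hg : ∀ n : ℕ, EqOn g (fun t => (γ n).extend (t - n)) (Icc n (n + 1)) := by
    intro n t ht
    rcases eq_or_lt_of_le ht.2 with rfl | h
    · have hfloor : ⌊(n : ℝ) + 1⌋₊ = n + 1 := by exact_mod_cast Nat.floor_natCast (R := ℝ) (n + 1)
      simp [g, hfloor]
    · obtain rfl : ⌊t⌋₊ = n := (Nat.floor_eq_iff (n.cast_nonneg.trans ht.1)).2 ⟨ht.1, h⟩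
      rfl
  have hIcc : ∀ n : ℕ, ContinuousOn g (Icc 0 n) := fun n => by
    induction n with
    | zero => simp
    | succ n ih =>
      have hstep : ContinuousOn g (Icc n (n + 1)) :=
        ((γ n).continuous_extend.comp (continuous_id.sub continuous_const)).continuousOn.congr
          (hg n)
      have := ih.union_of_isClosed hstep isClosed_Icc isClosed_Icc
      rwa [Icc_union_Icc_eq_Icc n.cast_nonneg (by linarith), ← Nat.cast_succ] at this
  refine ⟨g, fun t ht => ?_, by simp [g], fun t ht => ?_⟩
  · obtain ⟨n, hn⟩ := exists_nat_gt t
    refine (hIcc n t ⟨ht, hn.le⟩).mono_of_mem_nhdsWithin ?_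
    filter_upwards [self_mem_nhdsWithin, mem_nhdsWithin_of_mem_nhds (Iio_mem_nhds hn)]
      with x hx hxn using ⟨hx, hxn.le⟩
  · simp only [g]
    rw [Path.extend_apply _ ⟨sub_nonneg.2 (Nat.floor_le ht),
      (sub_lt_iff_lt_add'.2 (Nat.lt_floor_add_one t)).le⟩]
    exact hγ _ _

theorem joinedIn_insert_iUnion_of_tendsto_smallSets {P : ℕ → Set X} {u : ℕ → X}
    (hP : ∀ n, JoinedIn (P n) (u n) (u (n + 1))) (hlim : Tendsto P atTop (𝓝 p).smallSets) :
    JoinedIn (insert p (⋃ n, P n)) p (u 0) := by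
  obtain ⟨g, hg, hg0, hgP⟩ := exists_continuousOn_Ici_of_forall_joinedIn hP
  have htends : Tendsto g atTop (𝓝 p) := fun U hU => by
    rw [mem_map]
    filter_upwards [tendsto_nat_floor_atTop.eventually (tendsto_smallSets_iff.1 hlim U hU),
      eventually_ge_atTop (0 : ℝ)] with t ht h0 using ht (hgP t h0)
  rw [← hg0]
  refine (joinedIn_of_tendsto_atTop hg htends).mono (insert_subset_insert ?_)
  rintro _ ⟨t, ht, rfl⟩
  exact mem_iUnion_of_mem _ (hgP t ht)

end InfiniteConcatenation

theorem eventually_joinedIn_sdiff_singleton {X : Type*} [TopologicalSpace X] [T2Space X]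
    {W : Set X} {x y p : X} (h : JoinedIn W x y) (hp : p ∉ W) :
    ∀ᶠ q in 𝓝 p, JoinedIn (W \ {q}) x y := by
  have hclosed : IsClosed (range h.somePath) := (isCompact_range h.somePath.continuous).isClosed
  have hrange : p ∉ range h.somePath := fun ⟨t, ht⟩ => hp (ht ▸ h.somePath_mem t)
  filter_upwards [hclosed.isOpen_compl.mem_nhds hrange] with q hq
  exact ⟨h.somePath, fun t => ⟨h.somePath_mem t, fun hqt => hq ⟨t, hqt⟩⟩⟩

theorem exists_nhds_isPathConnected_subset {X : Type*} [TopologicalSpace X]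
    [LocallyPathConnectedSpace X] {U : Set X} {z : X} (hU : U ∈ 𝓝 z) :
    ∃ V ∈ 𝓝 z, IsPathConnected V ∧ V ⊆ U := by
  simpa only [id, and_assoc] using (path_connected_basis z).mem_iff.1 hU

section

variable {X : Type*} [MetricSpace X] {W : Set X} {u z p : X} {r : ℝ}

theorem exists_joinedIn_inter_closedBall (hW : IsPathConnected W) (hu : u ∈ W) (hz : z ∈ W)
    (hur : dist u p ≤ r) (hzr : r ≤ dist z p) :
    ∃ y, dist y p = r ∧ JoinedIn (W ∩ closedBall p r) u y := by
  rcases hur.eq_or_lt with h | h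
  · exact ⟨u, h, JoinedIn.refl ⟨hu, hur⟩⟩
  have hcont : Continuous fun x => dist x p := continuous_id.dist continuous_const
  have hclosed : IsClosed {x | r ≤ dist x p} := isClosed_le continuous_const hcont
  obtain ⟨w, A, hA, hAW, hAK⟩ := IsArc.exists_of_isClosed hW hclosed hu (not_le.2 h) ⟨z, hz, hzr⟩
  have hmem : ∀ x ∈ A, r ≤ dist x p → x = w := fun x hx hxr => hAK.subset ⟨hx, hxr⟩
  have hw : r ≤ dist w p := (hAK.superset rfl).2
  obtain ⟨x, hx, hxr⟩ := hA.isPathConnected.isConnected.isPreconnected.intermediate_value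
    hA.left_mem hA.right_mem hcont.continuousOn ⟨h.le, hw⟩
  have hwr : dist w p = r := hmem x hx hxr.ge ▸ hxr
  refine ⟨w, hwr, (hA.isPathConnected.joinedIn u hA.left_mem w hA.right_mem).mono
    (subset_inter hAW fun x hx => ?_)⟩
  by_contra hxr
  rw [mem_closedBall, not_le] at hxr
  exact hxr.ne' (hmem x hx hxr.le ▸ hwr)

end

namespace MaximalCyclic

variable {X : Type} [MetricSpace X] {T W K B : Set X} {p x₀ : X}

theorem isPathConnected_inter (hT : MaximalCyclic T) (hW : IsPathConnected W)
    (hne : (T ∩ W).Nonempty) : IsPathConnected (T ∩ W) := by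
  refine isPathConnected_iff.2 ⟨hne, fun x hx y hy => ?_⟩
  rcases eq_or_ne x y with rfl | hxy
  · exact JoinedIn.refl hx
  obtain ⟨A, hAW, hA⟩ := IsArc.exists_of_isPathConnected hW hx.2 hy.2 hxy
  exact (hA.isPathConnected.joinedIn x hA.left_mem y hA.right_mem).mono
    (subset_inter (hT.arc_subset hA hx.1 hy.1) hAW)

theorem eventually_forall_joinedIn_sdiff_singleton [LocallyPathConnectedSpace X]
    (hT : MaximalCyclic T) (hp : p ∉ T) (hK : IsCompact K) (hB : IsOpen B) (hKB : K ⊆ B)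
    (hpK : p ∉ K) : ∀ᶠ q in 𝓝 p, ∀ y ∈ K, JoinedIn (T ∩ B) x₀ y →
      JoinedIn ((T ∩ B) \ {q}) x₀ y := by
  refine hK.eventually_forall_of_forall_eventually fun y hy => ?_
  have hyp : y ≠ p := fun h => hpK (h ▸ hy)
  obtain ⟨P, Y, hP, hY, hpP, hyY, hPY⟩ := t2_separation hyp.symm
  obtain ⟨U, hU, hUconn, hUY⟩ := exists_nhds_isPathConnected_subset
    (inter_mem (hB.mem_nhds (hKB hy)) (hY.mem_nhds hyY))
  by_cases h : ∃ y₁ ∈ U, JoinedIn (T ∩ B) x₀ y₁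
  · obtain ⟨y₁, hy₁, hjoin⟩ := h
    filter_upwards [prod_mem_nhds (inter_mem (hP.mem_nhds hpP)
      (eventually_joinedIn_sdiff_singleton hjoin fun h => hp h.1)) hU]
    rintro ⟨q, y'⟩ ⟨⟨hqP, hq⟩, hy'⟩ hjoin'
    have hy'T : y' ∈ T ∩ U := ⟨hjoin'.target_mem.1, hy'⟩
    refine hq.trans (((hT.isPathConnected_inter hUconn ⟨y', hy'T⟩).joinedIn y₁
      ⟨hjoin.target_mem.1, hy₁⟩ y' hy'T).mono fun x hx => ⟨⟨hx.1, (hUY hx.2).1⟩, ?_⟩)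
    rintro rfl
    exact disjoint_left.1 hPY hqP (hUY hx.2).2
  · filter_upwards [prod_mem_nhds univ_mem hU] with z hz hjoin
    exact (h ⟨z.2, hz.2, hjoin⟩).elim

theorem exists_ball_forall_joinedIn [CompactSpace X] [LocallyPathConnectedSpace X]
    (hT : MaximalCyclic T) (hp : p ∉ T) {ε : ℝ} (hε : 0 < ε) :
    ∃ δ > 0, ∀ q ∈ ball p δ, ∀ x ∈ T ∩ ball p δ, ∀ y ∈ T ∩ ball p δ, x ≠ q → y ≠ q →
      JoinedIn ((T ∩ ball p ε) \ {q}) x y := by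
  obtain ⟨z, hz⟩ := hT.nontrivial.nonempty
  obtain ⟨r, hr, hrz⟩ : ∃ r ∈ Ioo 0 ε, r ≤ dist z p :=
    ⟨min (ε / 2) (dist z p), ⟨lt_min (half_pos hε) (dist_pos.2 fun h => hp (h ▸ hz)),
      (min_le_left _ _).trans_lt (half_lt_self hε)⟩, min_le_right _ _⟩
  obtain ⟨V, hV, hVconn, hVr⟩ := exists_nhds_isPathConnected_subset (ball_mem_nhds p hr.1)
  have hVε : V ⊆ ball p ε := hVr.trans (ball_subset_ball hr.2.le)
  rcases (T ∩ V).eq_empty_or_nonempty with hTV | ⟨x₀, hx₀⟩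
  · obtain ⟨δ, hδ, hδV⟩ := Metric.mem_nhds_iff.1 hV
    exact ⟨δ, hδ, fun _ _ x hx => (hTV.subset ⟨hx.1, hδV hx.2⟩).elim⟩
  have hsphere := hT.eventually_forall_joinedIn_sdiff_singleton (x₀ := x₀) hp
    (isCompact_sphere p r) isOpen_ball (sphere_subset_ball hr.2) fun h => hr.1.ne (by simpa using h)
  obtain ⟨δ, hδ, hδV⟩ := Metric.mem_nhds_iff.1 (inter_mem hV hsphere)
  suffices h : ∀ q ∈ ball p δ, ∀ x ∈ T ∩ ball p δ, x ≠ q →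
      JoinedIn ((T ∩ ball p ε) \ {q}) x₀ x from
    ⟨δ, hδ, fun q hq x hx y hy hxq hyq => (h q hq x hx hxq).symm.trans (h q hq y hy hyq)⟩
  intro q hq x hx hxq
  have hzq : z ≠ q := fun h => (hVr (hδV hq).1).not_ge (h ▸ hrz)
  have hxV : x ∈ T ∩ V := ⟨hx.1, (hδV hx.2).1⟩
  obtain ⟨y, hy, hxy⟩ := exists_joinedIn_inter_closedBall
    (hT.2.1.isPathConnected_diff ⟨x, hx.1, hxq⟩) ⟨hx.1, hxq⟩ ⟨hz, hzq⟩
    (mem_ball.1 (hVr hxV.2)).le hrz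
  have hxyT : JoinedIn ((T ∩ ball p ε) \ {q}) x y := hxy.mono fun w hw =>
    ⟨⟨hw.1.1, closedBall_subset_ball hr.2 hw.2⟩, hw.1.2⟩
  have hx₀x : JoinedIn (T ∩ ball p ε) x₀ x :=
    ((hT.isPathConnected_inter hVconn ⟨x, hxV⟩).joinedIn x₀ hx₀ x hxV).mono
      (inter_subset_inter_right T hVε)
  exact ((hδV hq).2 y hy (hx₀x.trans (hxyT.mono sdiff_subset))).trans hxyT.symm

end MaximalCyclic

section

variable {X : Type} [MetricSpace X] {f : ℝ → X} {G : Set X} {a b s t α β : ℝ}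

theorem exists_isJordanCurve_of_joinedIn_sdiff_singleton (hf : ContinuousOn f (Icc a b))
    (hi : InjOn f (Icc a b)) (hG : f '' Icc a b ⊆ G) (hs : s ∈ Ioo a b)
    (hjoin : JoinedIn (G \ {f s}) (f a) (f b)) :
    ∃ J ⊆ G, IsJordanCurve J ∧ f ⁻¹' J ∈ 𝓝 s := by
  have hleft : Icc a s ⊆ Icc a b := Icc_subset_Icc_right hs.2.le
  have hright : Icc s b ⊆ Icc a b := Icc_subset_Icc_left hs.1.le
  let W := pathComponentIn (G \ {f s}) (f a)
  have hW : IsPathConnected W := isPathConnected_pathComponentIn hjoin.source_mem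
  have hWG : W ⊆ G \ {f s} := pathComponentIn_subset
  have hsW : f s ∉ W := fun h => (hWG h).2 rfl
  have hdisj : Disjoint (W ∩ f '' Icc a s) (f '' Icc s b) := by
    rw [disjoint_left]
    rintro _ ⟨hx, σ, hσ, rfl⟩ ⟨τ, hτ, h⟩
    obtain rfl := hi (hright hτ) (hleft hσ) h
    exact hsW (le_antisymm hσ.2 hτ.1 ▸ hx)
  obtain ⟨w, z, A, hA, hAW, hAleft, hAright⟩ := IsArc.exists_of_isClosed_of_isClosed hW
    (isCompact_Icc.image_of_continuousOn (hf.mono hleft)).isClosed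
    (isCompact_Icc.image_of_continuousOn (hf.mono hright)).isClosed hdisj
    ⟨f a, mem_pathComponentIn_self hjoin.source_mem, mem_image_of_mem f (left_mem_Icc.2 hs.1.le)⟩
    ⟨f b, hjoin, mem_image_of_mem f (right_mem_Icc.2 hs.2.le)⟩
  obtain ⟨σ, hσ, rfl⟩ := (hAleft.superset rfl).2
  obtain ⟨τ, hτ, rfl⟩ := (hAright.superset rfl).2
  have hσs : σ < s := hσ.2.lt_of_ne (by rintro rfl; exact hsW (hAW hA.left_mem))
  have hsτ : s < τ := hτ.1.lt_of_ne (by rintro rfl; exact hsW (hAW hA.right_mem))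
  have hστ : Icc σ τ ⊆ Icc a b := Icc_subset_Icc hσ.1 hτ.2
  have hB := IsArc.of_image (hσs.trans hsτ) (hf.mono hστ) (hi.mono hστ)
  have hAB : A ∩ f '' Icc σ τ = {f σ, f τ} := by
    refine Subset.antisymm ?_ (pair_subset ⟨hA.left_mem, hB.left_mem⟩ ⟨hA.right_mem, hB.right_mem⟩)
    rintro _ ⟨hx, t, ht, rfl⟩
    rcases le_total t s with hts | hts
    · exact Or.inl (hAleft.subset ⟨hx, t, ⟨hσ.1.trans ht.1, hts⟩, rfl⟩)
    · exact Or.inr (hAright.subset ⟨hx, t, ⟨hts, ht.2.trans hτ.2⟩, rfl⟩)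
  exact ⟨A ∪ f '' Icc σ τ, union_subset (hAW.trans (hWG.trans sdiff_subset))
    ((image_mono hστ).trans hG), hA.isJordanCurve_union hB hAB,
    mem_of_superset (Icc_mem_nhds hσs hsτ) fun t ht => Or.inr (mem_image_of_mem f ht)⟩

theorem exists_isCompact_cyclicallyConnected_of_forall_joinedIn (hf : ContinuousOn f (Ioo α β))
    (hi : InjOn f (Ioo α β)) (hG : f '' Ioo α β ⊆ G)
    (hjoin : ∀ s ∈ Ioo α β, ∃ a ∈ Ioo α s, ∃ b ∈ Ioo s β, JoinedIn (G \ {f s}) (f a) (f b))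
    (hs : s ∈ Ioo α β) (ht : t ∈ Ioo α β) :
    ∃ K ⊆ G, IsCompact K ∧ CyclicallyConnected K ∧ f ⁻¹' K ∈ 𝓝 s ∧ f ⁻¹' K ∈ 𝓝 t := by
  refine isPreconnected_Ioo.induction₂ (fun s t => ∃ K ⊆ G, IsCompact K ∧ CyclicallyConnected K ∧
    f ⁻¹' K ∈ 𝓝 s ∧ f ⁻¹' K ∈ 𝓝 t) (fun s hs => ?_) ?_ ?_ hs ht
  · obtain ⟨a, ha, b, hb, hab⟩ := hjoin s hs
    have hIcc : Icc a b ⊆ Ioo α β := Icc_subset_Ioo ha.1 hb.2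
    obtain ⟨J, hJG, hJ, hJs⟩ := exists_isJordanCurve_of_joinedIn_sdiff_singleton (hf.mono hIcc)
      (hi.mono hIcc) ((image_mono hIcc).trans hG) ⟨ha.2, hb.1⟩ hab
    filter_upwards [mem_nhdsWithin_of_mem_nhds (eventually_mem_nhds_iff.2 hJs)] with t ht
    exact ⟨J, hJG, hJ.isCompact, hJ.cyclicallyConnected, hJs, ht⟩
  · rintro s t u - ht - ⟨K, hKG, hK, hKcyc, hKs, hKt⟩ ⟨L, hLG, hL, hLcyc, hLt, hLu⟩
    have hN : (Ioo α β ∩ (f ⁻¹' K ∩ f ⁻¹' L)).Nontrivial := (infinite_of_mem_nhds t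
      (inter_mem (isOpen_Ioo.mem_nhds ht) (inter_mem hKt hLt))).nontrivial
    refine ⟨K ∪ L, union_subset hKG hLG, hK.union hL, hKcyc.union hLcyc ?_,
      mem_of_superset hKs fun _ => Or.inl, mem_of_superset hLu fun _ => Or.inr⟩
    exact (hN.image_of_injOn (hi.mono inter_subset_left)).mono (image_subset_iff.2 fun _ h => h.2)
  · rintro s t - - ⟨K, hKG, hK, hKcyc, hKs, hKt⟩
    exact ⟨K, hKG, hK, hKcyc, hKt, hKs⟩

end

section

variable {X : Type} [MetricSpace X] {C L T : Set X} {u v p : X}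

/-- A chain of cyclicly connected compact sets, each meeting its neighbours in several points and
disjoint from the other links, which shrinks to the point `p`. -/
structure IsCyclicChain (K : ℕ → Set X) (p : X) : Prop where
  isCompact : ∀ n, IsCompact (K n)
  cyclicallyConnected : ∀ n, CyclicallyConnected (K n)
  inter_nontrivial : ∀ n, (K n ∩ K (n + 1)).Nontrivial
  disjoint : ∀ m n, m + 2 ≤ n → Disjoint (K m) (K n)
  tendsto : Tendsto K atTop (𝓝 p).smallSets

theorem IsCyclicChain.of_subset_ball {K : ℕ → Set X} {ρ : ℕ → ℝ} (hK : ∀ n, IsCompact (K n))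
    (hcyc : ∀ n, CyclicallyConnected (K n)) (hne : ∀ n, (K n ∩ K (n + 1)).Nontrivial)
    (hρ : ∀ n, 0 < ρ n) (hhalf : ∀ n, ρ (n + 1) ≤ 1 / 2 * ρ n)
    (hsub : ∀ n, K (n + 1) ⊆ ball p (ρ n)) (hdisj : ∀ n, Disjoint (K n) (ball p (ρ (n + 1)))) :
    IsCyclicChain K p := by
  have hanti : Antitone ρ := antitone_nat_of_succ_le fun n =>
    (hhalf n).trans (by linarith [hρ n])
  have hlim : Tendsto ρ atTop (𝓝 0) := by
    refine squeeze_zero (fun n => (hρ n).le)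
      (fun n => le_geom one_half_pos.le n fun k _ => hhalf k) ?_
    simpa using (tendsto_pow_atTop_nhds_zero_of_lt_one one_half_pos.le one_half_lt_one).mul_const
      (ρ 0)
  have hball : ∀ m n, m < n → K n ⊆ ball p (ρ m) := fun m n hmn => by
    obtain ⟨k, rfl⟩ := Nat.exists_eq_succ_of_ne_zero (Nat.ne_zero_of_lt hmn)
    exact (hsub k).trans (ball_subset_ball (hanti (Nat.le_of_lt_succ hmn)))
  refine ⟨hK, hcyc, hne, fun m n hmn => (hdisj m).mono_right (hball _ n hmn), ?_⟩
  refine tendsto_smallSets_iff.2 fun U hU => ?_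
  obtain ⟨ε, hε, hεU⟩ := Metric.mem_nhds_iff.1 hU
  obtain ⟨N, hN⟩ := (hlim.eventually (gt_mem_nhds hε)).exists
  filter_upwards [eventually_gt_atTop N] with n hn
  exact (hball N n hn).trans ((ball_subset_ball hN.le).trans hεU)

theorem exists_isCyclicChain_of_forall_exists {R : ℝ → Set X → Prop}
    (hR : ∀ ρ K, R ρ K → IsCompact K ∧ CyclicallyConnected K ∧ p ∉ K)
    (hne : ∃ ρ > 0, ∃ K, R ρ K)
    (hstep : ∀ ρ K, 0 < ρ → R ρ K → ∀ ρ' > 0, ∃ K' ⊆ ball p ρ, R ρ' K' ∧ (K ∩ K').Nontrivial) :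
    ∃ K, IsCyclicChain K p ∧ ∀ n, ∃ ρ, R ρ (K n) := by
  let State := {q : ℝ × Set X // 0 < q.1 ∧ R q.1 q.2}
  have hnext : ∀ q : State, ∃ q' : State, q'.1.1 ≤ 1 / 2 * q.1.1 ∧ q'.1.2 ⊆ ball p q.1.1 ∧
      Disjoint q.1.2 (ball p q'.1.1) ∧ (q.1.2 ∩ q'.1.2).Nontrivial := by
    rintro ⟨⟨ρ, K⟩, hρ, hK⟩
    obtain ⟨hKcompact, -, hpK⟩ := hR ρ K hK
    obtain ⟨ε, hε, hεK⟩ := Metric.mem_nhds_iff.1 (hKcompact.isClosed.isOpen_compl.mem_nhds hpK)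
    have hρ' : 0 < min ε (1 / 2 * ρ) := lt_min hε (by linarith)
    obtain ⟨K', hK'ρ, hK', hKK'⟩ := hstep ρ K hρ hK _ hρ'
    exact ⟨⟨(_, K'), hρ', hK'⟩, min_le_right _ _, hK'ρ, disjoint_left.2 fun x hx hxε =>
      hεK (ball_subset_ball (min_le_left _ _) hxε) hx, hKK'⟩
  choose next hhalf hsub hdisj hinter using hnext
  obtain ⟨ρ, hρ, K, hK⟩ := hne
  let q : ℕ → State := fun n => n.rec ⟨(ρ, K), hρ, hK⟩ fun _ => next
  exact ⟨fun n => (q n).1.2, .of_subset_ball (ρ := fun n => (q n).1.1)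
    (fun n => (hR _ _ (q n).2.2).1) (fun n => (hR _ _ (q n).2.2).2.1) (fun n => hinter (q n))
    (fun n => (q n).2.1) (fun n => hhalf (q n)) (fun n => hsub (q n)) fun n => hdisj (q n),
    fun n => ⟨_, (q n).2.2⟩⟩

theorem MaximalCyclic.exists_arc_of_mem_closure [LocallyPathConnectedSpace X]
    (hT : MaximalCyclic T) (hp : p ∈ closure T) (hpT : p ∉ T) :
    ∃ f : ℝ → X, Continuous f ∧ InjOn f (Icc 0 1) ∧ f 0 = p ∧ f '' Ioc 0 1 ⊆ T := by
  obtain ⟨B, hB⟩ := (𝓝 p).exists_antitone_basis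
  choose V hV hVconn hVB using fun n => exists_nhds_isPathConnected_subset (hB.mem n)
  choose u hu using fun n => mem_closure_iff_nhds.1 hp _ (inter_mem (hV n) (hV (n - 1)))
  have hjoin : ∀ n, JoinedIn (T ∩ V n) (u n) (u (n + 1)) := fun n =>
    (hT.isPathConnected_inter (hVconn n) ⟨u n, (hu n).2, (hu n).1.1⟩).joinedIn _
      ⟨(hu n).2, (hu n).1.1⟩ _ ⟨(hu (n + 1)).2, (hu (n + 1)).1.2⟩
  have hlim : Tendsto (fun n => T ∩ V n) atTop (𝓝 p).smallSets :=
    tendsto_smallSets_iff.2 fun U hU => (tendsto_smallSets_iff.1 hB.tendsto_smallSets U hU).mono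
      fun n hn => inter_subset_right.trans ((hVB n).trans hn)
  have hpu : JoinedIn (insert p T) p (u 0) :=
    (joinedIn_insert_iUnion_of_tendsto_smallSets hjoin hlim).mono
      (insert_subset_insert (iUnion_subset fun n => inter_subset_left))
  obtain ⟨S, hST, hS⟩ := IsArc.exists_of_joinedIn hpu fun h => hpT (h ▸ (hu 0).2)
  obtain ⟨f, hf, hi, h0, -, rfl⟩ := hS.exists_continuous_param
  refine ⟨f, hf, hi, h0, ?_⟩
  rintro _ ⟨t, ht, rfl⟩
  refine (hST ⟨t, Ioc_subset_Icc_self ht, rfl⟩).resolve_left fun h => ht.1.ne' ?_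
  exact hi (Ioc_subset_Icc_self ht) (by simp) (h.trans h0.symm)

theorem MaximalCyclic.exists_forall_exists_isCompact_cyclicallyConnected [CompactSpace X]
    [LocallyPathConnectedSpace X] (hT : MaximalCyclic T) {f : ℝ → X} (hf : Continuous f)
    (hi : InjOn f (Icc 0 1)) (h0 : f 0 ∉ T) (hfT : f '' Ioc 0 1 ⊆ T) {ε : ℝ} (hε : 0 < ε) :
    ∃ c ∈ Ioc (0 : ℝ) 1, ∀ s ∈ Ioo 0 c, ∀ t ∈ Ioo 0 c, ∃ K ⊆ T ∩ ball (f 0) ε,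
      IsCompact K ∧ CyclicallyConnected K ∧ f ⁻¹' K ∈ 𝓝 s ∧ f ⁻¹' K ∈ 𝓝 t := by
  obtain ⟨δ, hδ, hjoin⟩ := hT.exists_ball_forall_joinedIn h0 hε
  obtain ⟨c', hc', hc'f⟩ := Metric.mem_nhds_iff.1 (hf.continuousAt.preimage_mem_nhds
    (ball_mem_nhds (f 0) (lt_min hδ hε)))
  let c := min c' 1
  have hc1 : c ≤ 1 := min_le_right _ _
  have hball : ∀ t ∈ Ioo 0 c, f t ∈ T ∩ ball (f 0) (min δ ε) := fun t ht =>
    ⟨hfT ⟨t, ⟨ht.1, ht.2.le.trans hc1⟩, rfl⟩, hc'f (by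
      rw [mem_ball, Real.dist_0_eq_abs, abs_of_pos ht.1]
      exact ht.2.trans_le (min_le_left _ _))⟩
  have hballδ : ∀ t ∈ Ioo 0 c, f t ∈ T ∩ ball (f 0) δ := fun t ht =>
    ⟨(hball t ht).1, ball_subset_ball (min_le_left _ _) (hball t ht).2⟩
  have hinj : InjOn f (Ioo 0 c) := hi.mono (Ioo_subset_Icc_self.trans (Icc_subset_Icc_right hc1))
  refine ⟨c, ⟨lt_min hc' one_pos, hc1⟩, fun s hs t ht =>
    exists_isCompact_cyclicallyConnected_of_forall_joinedIn hf.continuousOn hinj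
      (image_subset_iff.2 fun t ht => ⟨(hball t ht).1,
        ball_subset_ball (min_le_right _ _) (hball t ht).2⟩) (fun s hs => ?_) hs ht⟩
  obtain ⟨a, ha⟩ := exists_between hs.1
  obtain ⟨b, hb⟩ := exists_between hs.2
  have ha' : a ∈ Ioo 0 c := ⟨ha.1, ha.2.trans hs.2⟩
  have hb' : b ∈ Ioo 0 c := ⟨hs.1.trans hb.1, hb.2⟩
  exact ⟨a, ha, b, hb, hjoin _ (hballδ s hs).2 _ (hballδ a ha') _ (hballδ b hb')
    (hinj.ne ha' hs ha.2.ne) (hinj.ne hb' hs hb.1.ne')⟩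

theorem MaximalCyclic.exists_isCyclicChain [CompactSpace X] [LocallyPathConnectedSpace X]
    (hT : MaximalCyclic T) (hp : p ∈ closure T) (hpT : p ∉ T) :
    ∃ K, IsCyclicChain K p ∧ ∀ n, K n ⊆ T := by
  obtain ⟨f, hf, hi, rfl, hfT⟩ := hT.exists_arc_of_mem_closure hp hpT
  choose! c hc hK using fun ε (hε : 0 < ε) =>
    hT.exists_forall_exists_isCompact_cyclicallyConnected hf hi hpT hfT hε
  let R : ℝ → Set X → Prop := fun ρ K => K ⊆ T ∧ IsCompact K ∧ CyclicallyConnected K ∧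
    ∃ t ∈ Ioo 0 (c ρ), f ⁻¹' K ∈ 𝓝 t
  have hstep : ∀ ρ K, 0 < ρ → R ρ K → ∀ ρ' > 0, ∃ K' ⊆ ball (f 0) ρ, R ρ' K' ∧
      (K ∩ K').Nontrivial := by
    rintro ρ K hρ ⟨-, -, -, t, ht, hKt⟩ ρ' hρ'
    obtain ⟨t', ht'⟩ := exists_between (lt_min (hc ρ hρ).1 (hc ρ' hρ').1)
    obtain ⟨K', hK', hcompact, hcyc, hK't, hK't'⟩ := hK ρ hρ t ht t'
      ⟨ht'.1, ht'.2.trans_le (min_le_left _ _)⟩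
    have hIoo : Ioo 0 (c ρ) ⊆ Icc 0 1 := Ioo_subset_Icc_self.trans
      (Icc_subset_Icc_right (hc ρ hρ).2)
    have hN : (Ioo 0 (c ρ) ∩ (f ⁻¹' K ∩ f ⁻¹' K')).Nontrivial := (infinite_of_mem_nhds t
      (inter_mem (isOpen_Ioo.mem_nhds ht) (inter_mem hKt hK't))).nontrivial
    exact ⟨K', hK'.trans inter_subset_right, ⟨hK'.trans inter_subset_left, hcompact, hcyc, t',
      ⟨ht'.1, ht'.2.trans_le (min_le_right _ _)⟩, hK't'⟩,
      (hN.image_of_injOn (hi.mono (inter_subset_left.trans hIoo))).mono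
        (image_subset_iff.2 fun _ h => h.2)⟩
  have hne : ∃ ρ > 0, ∃ K, R ρ K := by
    obtain ⟨t, ht⟩ := exists_between (hc 1 one_pos).1
    obtain ⟨K, hKT, hcompact, hcyc, hKt, -⟩ := hK 1 one_pos t ht t ht
    exact ⟨1, one_pos, K, hKT.trans inter_subset_left, hcompact, hcyc, t, ht, hKt⟩
  obtain ⟨K, hchain, hKR⟩ := exists_isCyclicChain_of_forall_exists
    (fun ρ K h => ⟨h.2.1, h.2.2.1, fun h0 => hpT (h.1 h0)⟩) hne hstep
  exact ⟨K, hchain, fun n => (hKR n).choose_spec.1⟩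

theorem CyclicallyConnected.exists_joinedIn_disjoint (hC : CyclicallyConnected C) (hu : u ∈ C)
    (hv : v ∈ C) (huv : u ≠ v) (hL : IsClosed L) (hCL : (C ∩ L).Nontrivial) :
    ∃ P ⊆ C, ∃ Q ⊆ C, Disjoint P Q ∧ ∃ a b, P ∩ L = {a} ∧ Q ∩ L = {b} ∧
      JoinedIn P u a ∧ JoinedIn Q v b := by
  obtain ⟨P, hPC, Q, hQC, h⟩ := hC.exists_isLinkage hu hv huv hCL
  obtain ⟨P', hPP, Q', hQQ, h', ⟨a, ha⟩, b, hb⟩ := h.exists_inter_eq_singleton hL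
  exact ⟨P', hPP.trans hPC, Q', hQQ.trans hQC, h'.disjoint, a, b, ha, hb,
    h'.isPathConnected_left.joinedIn _ h'.left_mem _ (ha.superset rfl).1,
    h'.isPathConnected_right.joinedIn _ h'.right_mem _ (hb.superset rfl).1⟩

namespace IsCyclicChain

variable {K : ℕ → Set X}

theorem exists_disjoint_arms (hK : IsCyclicChain K p) : ∃ P Q : ℕ → Set X, ∃ u v : ℕ → X,
    u 0 ∈ K 0 ∧ v 0 ∈ K 0 ∧ (∀ n, P n ⊆ K n) ∧ (∀ n, Q n ⊆ K n) ∧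
    (∀ n, JoinedIn (P n) (u n) (u (n + 1))) ∧ (∀ n, JoinedIn (Q n) (v n) (v (n + 1))) ∧
    ∀ m n, Disjoint (P m) (Q n) := by
  let Ends (n : ℕ) := {w : X × X // w.1 ∈ K n ∧ w.2 ∈ K n ∧ w.1 ≠ w.2}
  have hstep : ∀ n (w : Ends n), ∃ (w' : Ends (n + 1)) (P Q : Set X), P ⊆ K n ∧ Q ⊆ K n ∧
      Disjoint P Q ∧ P ∩ K (n + 1) = {w'.1.1} ∧ Q ∩ K (n + 1) = {w'.1.2} ∧
      JoinedIn P w.1.1 w'.1.1 ∧ JoinedIn Q w.1.2 w'.1.2 := by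
    rintro n ⟨⟨u, v⟩, hu, hv, huv⟩
    obtain ⟨P, hP, Q, hQ, hPQ, a, b, ha, hb, hua, hvb⟩ :=
      (hK.cyclicallyConnected n).exists_joinedIn_disjoint hu hv huv
        (hK.isCompact (n + 1)).isClosed (hK.inter_nontrivial n)
    exact ⟨⟨(a, b), (ha.superset rfl).2, (hb.superset rfl).2,
      hPQ.ne_of_mem hua.target_mem hvb.target_mem⟩, P, Q, hP, hQ, hPQ, ha, hb, hua, hvb⟩
  choose next P Q hP hQ hPQ hPnext hQnext hPjoin hQjoin using hstep
  obtain ⟨u, hu, v, hv, huv⟩ := (hK.inter_nontrivial 0).mono inter_subset_left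
  let w : ∀ n, Ends n := fun n => n.rec ⟨(u, v), hu, hv, huv⟩ next
  refine ⟨fun n => P n (w n), fun n => Q n (w n), fun n => (w n).1.1, fun n => (w n).1.2, hu, hv,
    fun n => hP n _, fun n => hQ n _, fun n => hPjoin n _, fun n => hQjoin n _, fun m n => ?_⟩
  rw [disjoint_left]
  intro x hxP hxQ
  rcases lt_trichotomy m n with hmn | rfl | hmn
  · rcases (Nat.succ_le_of_lt hmn).eq_or_lt with rfl | hmn
    · obtain rfl := (hPnext m (w m)).subset ⟨hxP, hQ _ _ hxQ⟩
      exact disjoint_left.1 (hPQ _ (w (m + 1))) (hPjoin _ (w (m + 1))).source_mem hxQ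
    · exact disjoint_left.1 (hK.disjoint m n hmn) (hP m _ hxP) (hQ n _ hxQ)
  · exact disjoint_left.1 (hPQ m _) hxP hxQ
  · rcases (Nat.succ_le_of_lt hmn).eq_or_lt with rfl | hmn
    · obtain rfl := (hQnext n (w n)).subset ⟨hxQ, hP _ _ hxP⟩
      exact disjoint_left.1 (hPQ _ (w (n + 1))) hxP (hQjoin _ (w (n + 1))).source_mem
    · exact disjoint_left.1 (hK.disjoint n m hmn) (hQ n _ hxQ) (hP m _ hxP)

theorem exists_arc_inter_eq_pair (hK : IsCyclicChain K p) (hp : ∀ n, p ∉ K n) :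
    ∃ a b A, IsArc a b A ∧ A ∩ K 0 = {a, b} ∧ p ∈ A := by
  obtain ⟨P, Q, u, v, hu, hv, hPK, hQK, hPu, hQv, hPQ⟩ := hK.exists_disjoint_arms
  have hlim : ∀ {R : ℕ → Set X}, (∀ n, R n ⊆ K n) → Tendsto R atTop (𝓝 p).smallSets :=
    fun hR => tendsto_smallSets_iff.2 fun U hU => (tendsto_smallSets_iff.1 hK.tendsto U hU).mono
      fun n hn => (hR n).trans hn
  have harm : ∀ {R : Set X} {w : X}, w ∈ K 0 → JoinedIn (insert p R) p w →
      ∃ a A, IsArc p a A ∧ A ⊆ insert p R ∧ A ∩ K 0 = {a} := fun {R w} hw hjoin => by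
    obtain ⟨S, hSR, hS⟩ := IsArc.exists_of_joinedIn hjoin fun h => hp 0 (h ▸ hw)
    obtain ⟨a, A, hA, hAS, hAK⟩ := hS.exists_subarc_inter_eq_singleton (hK.isCompact 0).isClosed
      (hp 0) ⟨w, hS.right_mem, hw⟩
    exact ⟨a, A, hA, hAS.trans hSR, hAK⟩
  obtain ⟨a, A, hA, hAP, hAK⟩ := harm hu
    (joinedIn_insert_iUnion_of_tendsto_smallSets hPu (hlim hPK))
  obtain ⟨b, B, hB, hBQ, hBK⟩ := harm hv
    (joinedIn_insert_iUnion_of_tendsto_smallSets hQv (hlim hQK))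
  have hAB : A ∩ B = {p} := by
    refine Subset.antisymm (fun x hx => ?_) (singleton_subset_iff.2 ⟨hA.left_mem, hB.left_mem⟩)
    rcases hAP hx.1 with h | h
    · exact h
    refine (hBQ hx.2).resolve_right fun h' => ?_
    exact disjoint_left.1 (disjoint_iUnion_left.2 fun m => disjoint_iUnion_right.2 (hPQ m)) h h'
  exact ⟨a, b, A ∪ B, hA.symm.join hB hAB, by rw [union_inter_distrib_right, hAK, hBK,
    singleton_union], Or.inl hA.left_mem⟩

end IsCyclicChain

theorem MaximalCyclic.isClosed [CompactSpace X] [LocallyPathConnectedSpace X]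
    (hT : MaximalCyclic T) : IsClosed T := by
  refine isClosed_of_closure_subset fun p hp => ?_
  by_contra hpT
  obtain ⟨K, hK, hKT⟩ := hT.exists_isCyclicChain hp hpT
  obtain ⟨a, b, A, hA, hAK, hpA⟩ := hK.exists_arc_inter_eq_pair fun n h => hpT (hKT n h)
  have haK : a ∈ K 0 := (hAK.superset (Or.inl rfl)).2
  have hbK : b ∈ K 0 := (hAK.superset (Or.inr rfl)).2
  exact hpT (hT.arc_subset hA (hKT 0 haK) (hKT 0 hbK) hpA)

end

/-! ### Arc-closed sets and their gates -/

section

variable {X : Type*} [MetricSpace X]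

theorem IsArc.infinite {u v : X} {S : Set X} (h : IsArc u v S) : S.Infinite :=
  h.isPathConnected.isConnected.isPreconnected.infinite_of_nontrivial
    ⟨u, h.left_mem, v, h.right_mem, h.ne⟩

/-- A nonempty closed set containing every arc between two of its points. -/
structure IsArcClosed (K : Set X) : Prop where
  isClosed : IsClosed K
  nonempty : K.Nonempty
  arc_subset : ∀ {u v E}, IsArc u v E → u ∈ K → v ∈ K → E ⊆ K

open Classical in
/-- The point of `K` through which every path connected set joining `x` to `K` passes, which exists
if `K` is arc-closed (and `x` if there is no such point). -/
noncomputable def gate (K : Set X) (x : X) : X :=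
  if h : ∃ a ∈ K, ∀ W, IsPathConnected W → x ∈ W → (W ∩ K).Nonempty → a ∈ W then h.choose else x

namespace IsArcClosed

variable {K K' W O : Set X} {a x y : X}

theorem univ [Nonempty X] : IsArcClosed (univ : Set X) :=
  ⟨isClosed_univ, univ_nonempty, fun _ _ _ => subset_univ _⟩

theorem inter (hK : IsArcClosed K) (hK' : IsArcClosed K') (h : (K ∩ K').Nonempty) :
    IsArcClosed (K ∩ K') :=
  ⟨hK.isClosed.inter hK'.isClosed, h, fun hE hu hv =>
    subset_inter (hK.arc_subset hE hu.1 hv.1) (hK'.arc_subset hE hu.2 hv.2)⟩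

theorem insert_of_isOpen (hO : IsOpen O) (hc : IsClosed (insert a O)) :
    IsArcClosed (insert a O) := by
  refine ⟨hc, insert_nonempty a O, fun {u v E} hE hu hv y hy => ?_⟩
  by_contra hyO
  have ha : ∀ {w A}, IsArc w y A → w ∈ insert a O → a ∈ A := by
    intro w A hA hw
    by_contra haA
    have hAO : A ⊆ O ∪ (insert a O)ᶜ := fun z hz => by
      by_cases h : z ∈ O
      · exact Or.inl h
      · exact Or.inr fun h' => h'.elim (fun h'' => haA (h'' ▸ hz)) h
    refine hyO (Or.inr (hA.isPathConnected.isConnected.isPreconnected.subset_left_of_subset_union hO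
      hc.isOpen_compl ?_ hAO ⟨w, hA.left_mem, ?_⟩ hA.right_mem))
    · exact disjoint_compl_right.mono_left (subset_insert a O)
    · exact hw.resolve_left fun h => haA (h ▸ hA.left_mem)
  obtain ⟨A, B, hA, hB, -, hAB⟩ :=
    hE.exists_split hy (fun h => hyO (h ▸ hu)) (fun h => hyO (h ▸ hv))
  exact hyO (Or.inl (hAB.subset ⟨ha hA hu, ha hB.symm hv⟩ : a = y).symm)

section Gate

variable [PathConnectedSpace X]

theorem exists_gate (hK : IsArcClosed K) (x : X) :
    ∃ a ∈ K, ∀ W, IsPathConnected W → x ∈ W → (W ∩ K).Nonempty → a ∈ W := by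
  by_cases hx : x ∈ K
  · exact ⟨x, hx, fun W _ h _ => h⟩
  obtain ⟨a, A, hA, -, hAK⟩ := IsArc.exists_of_isClosed isPathConnected_univ hK.isClosed
    (mem_univ x) hx (by simpa using hK.nonempty)
  refine ⟨a, (hAK.superset rfl).2, fun W hW hxW hWK => ?_⟩
  obtain ⟨b, B, hB, hBW, hBK⟩ := IsArc.exists_of_isClosed hW hK.isClosed hxW hx hWK
  suffices h : a = b from h ▸ hBW hB.right_mem
  by_contra hab
  obtain ⟨S, hSAB, hS⟩ := IsArc.exists_of_isPathConnected (hA.isPathConnected.union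
    hB.isPathConnected ⟨x, hA.left_mem, hB.left_mem⟩) (Or.inl hA.right_mem)
    (Or.inr hB.right_mem) hab
  have hSK : S ⊆ K := hK.arc_subset hS (hAK.superset rfl).2 (hBK.superset rfl).2
  refine hS.infinite ((toFinite {a, b}).subset fun z hz => ?_)
  exact (hSAB hz).imp (fun h => hAK.subset ⟨h, hSK hz⟩) fun h => hBK.subset ⟨h, hSK hz⟩

theorem gate_mem (hK : IsArcClosed K) (x : X) : gate K x ∈ K := by
  have h := hK.exists_gate x
  rw [gate, dif_pos h]
  exact h.choose_spec.1

theorem gate_mem_of_isPathConnected (hK : IsArcClosed K) (hW : IsPathConnected W) (hx : x ∈ W)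
    (hWK : (W ∩ K).Nonempty) : gate K x ∈ W := by
  have h := hK.exists_gate x
  rw [gate, dif_pos h]
  exact h.choose_spec.2 W hW hx hWK

theorem gate_eq_self (hK : IsArcClosed K) (hx : x ∈ K) : gate K x = x :=
  hK.gate_mem_of_isPathConnected (isPathConnected_singleton x) rfl ⟨x, rfl, hx⟩

theorem gate_eq_of_disjoint (hK : IsArcClosed K) (hW : IsPathConnected W) (hWK : Disjoint W K)
    (hx : x ∈ W) (hy : y ∈ W) : gate K x = gate K y := by
  obtain ⟨a, A, hA, -, hAK⟩ := IsArc.exists_of_isClosed isPathConnected_univ hK.isClosed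
    (mem_univ y) (disjoint_left.1 hWK hy) (by simpa using hK.nonempty)
  have hWA : (W ∪ A) ∩ K = {a} := by
    rw [union_inter_distrib_right, hAK, hWK.inter_eq, empty_union]
  have hgate : ∀ z ∈ W, gate K z = a := fun z hz => hWA.subset
    ⟨hK.gate_mem_of_isPathConnected (hW.union hA.isPathConnected ⟨y, hy, hA.left_mem⟩)
      (Or.inl hz) (hWA ▸ singleton_nonempty a), hK.gate_mem z⟩
  rw [hgate x hx, hgate y hy]

theorem gate_eq_of_subsingleton (hK : IsArcClosed K) (hW : IsPathConnected W)
    (hWK : (W ∩ K).Subsingleton) (hx : x ∈ W) (hy : y ∈ W) : gate K x = gate K y := by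
  by_cases h : Disjoint W K
  · exact hK.gate_eq_of_disjoint hW h hx hy
  · rw [not_disjoint_iff_nonempty_inter] at h
    exact hWK ⟨hK.gate_mem_of_isPathConnected hW hx h, hK.gate_mem x⟩
      ⟨hK.gate_mem_of_isPathConnected hW hy h, hK.gate_mem y⟩

variable [LocallyPathConnectedSpace X]

theorem continuous_gate (hK : IsArcClosed K) : Continuous (gate K) := by
  refine continuous_iff_continuousAt.2 fun x U hU => ?_
  by_cases hx : x ∈ K
  · rw [hK.gate_eq_self hx] at hU
    obtain ⟨W, hW, hWconn, hWU⟩ := exists_nhds_isPathConnected_subset hU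
    refine mem_map.2 (mem_of_superset hW fun y hy => ?_)
    exact hWU (hK.gate_mem_of_isPathConnected hWconn hy ⟨x, mem_of_mem_nhds hW, hx⟩)
  · obtain ⟨W, hW, hWconn, hWK⟩ :=
      exists_nhds_isPathConnected_subset (hK.isClosed.isOpen_compl.mem_nhds hx)
    refine mem_map.2 (mem_of_superset hW fun y hy => ?_)
    rw [mem_preimage, hK.gate_eq_of_disjoint hWconn (disjoint_left.2 hWK) hy (mem_of_mem_nhds hW)]
    exact mem_of_mem_nhds hU

theorem isPathConnected_inter (hK : IsArcClosed K) (hW : IsPathConnected W)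
    (hWK : (W ∩ K).Nonempty) : IsPathConnected (W ∩ K) := by
  have himage : gate K '' W = W ∩ K := by
    refine Subset.antisymm ?_ fun x hx => ⟨x, hx.1, hK.gate_eq_self hx.2⟩
    rintro _ ⟨x, hx, rfl⟩
    exact ⟨hK.gate_mem_of_isPathConnected hW hx hWK, hK.gate_mem x⟩
  exact himage ▸ hW.image hK.continuous_gate

theorem isPathConnected (hK : IsArcClosed K) : IsPathConnected K := by
  simpa using hK.isPathConnected_inter isPathConnected_univ (by simpa using hK.nonempty)

theorem gate_eq_of_inter_eq_singleton (hK : IsArcClosed K) (hK' : IsArcClosed K')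
    (ha : K ∩ K' = {a}) (hx : x ∈ K) : gate K' x = a :=
  ha.subset ⟨hK'.gate_mem_of_isPathConnected hK.isPathConnected hx (ha ▸ singleton_nonempty a),
    hK'.gate_mem x⟩

theorem union (hK : IsArcClosed K) (hK' : IsArcClosed K') (ha : K ∩ K' = {a}) :
    IsArcClosed (K ∪ K') := by
  have haK : a ∈ K ∩ K' := ha ▸ rfl
  have hcross : ∀ {u v E}, IsArc u v E → u ∈ K → v ∈ K' → E ⊆ K ∪ K' := by
    intro u v E hE hu hv
    have haE : a ∈ E := hK.gate_eq_of_inter_eq_singleton hK' ha hu ▸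
      hK'.gate_mem_of_isPathConnected hE.isPathConnected hE.left_mem ⟨v, hE.right_mem, hv⟩
    rcases eq_or_ne a u with rfl | hau
    · exact (hK'.arc_subset hE haK.2 hv).trans subset_union_right
    rcases eq_or_ne a v with rfl | hav
    · exact (hK.arc_subset hE hu haK.1).trans subset_union_left
    obtain ⟨A, B, hA, hB, rfl, -⟩ := hE.exists_split haE hau hav
    exact union_subset_union (hK.arc_subset hA hu haK.1) (hK'.arc_subset hB haK.2 hv)
  refine ⟨hK.isClosed.union hK'.isClosed, hK.nonempty.inl, fun {u v E} hE hu hv => ?_⟩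
  rcases hu with hu | hu <;> rcases hv with hv | hv
  · exact (hK.arc_subset hE hu hv).trans subset_union_left
  · exact hcross hE hu hv
  · exact hcross hE.symm hv hu
  · exact (hK'.arc_subset hE hu hv).trans subset_union_right

end Gate

end IsArcClosed

/-- The path component of `x` in the complement of `a`. -/
abbrev branch (a x : X) : Set X := pathComponentIn {a}ᶜ x

theorem notMem_branch (a x : X) : a ∉ branch a x := fun h => pathComponentIn_subset h rfl

section Branch

variable [LocallyPathConnectedSpace X] (a x : X)

theorem isOpen_branch : IsOpen (branch a x) := isOpen_compl_singleton.pathComponentIn x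

theorem isClosed_insert_branch : IsClosed (insert a (branch a x)) := by
  rw [← isOpen_compl_iff, isOpen_iff_mem_nhds]
  intro y hy
  rw [mem_compl_iff, mem_insert_iff, not_or] at hy
  refine mem_of_superset ((isOpen_branch a y).mem_nhds (mem_pathComponentIn_self hy.1)) ?_
  rintro z hz (rfl | hz')
  · exact notMem_branch z y hz
  · exact hy.2 (JoinedIn.trans hz' (JoinedIn.symm hz))

theorem isArcClosed_insert_branch : IsArcClosed (insert a (branch a x)) :=
  .insert_of_isOpen (isOpen_branch a x) (isClosed_insert_branch a x)

theorem isArcClosed_compl_branch : IsArcClosed (branch a x)ᶜ := by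
  have heq : (branch a x)ᶜ = insert a (insert a (branch a x))ᶜ := by
    ext y
    by_cases hy : y = a
    · simp [hy, notMem_branch a x]
    · simp [hy]
  have hc : IsClosed (branch a x)ᶜ := (isOpen_branch a x).isClosed_compl
  rw [heq] at hc ⊢
  exact .insert_of_isOpen (isClosed_insert_branch a x).isOpen_compl hc

end Branch

end

theorem IsArcClosed.subset_of_cyclicallyConnected {X : Type} [MetricSpace X]
    [PathConnectedSpace X] {C K : Set X} (hK : IsArcClosed K) (hC : CyclicallyConnected C)
    (h : (C ∩ K).Nontrivial) : C ⊆ K := by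
  intro y hy
  by_contra hyK
  have hyg : y ≠ gate K y := fun h => hyK (h ▸ hK.gate_mem y)
  obtain ⟨u, hu, hug⟩ := h.exists_ne (gate K y)
  exact (hK.gate_mem_of_isPathConnected (hC.isPathConnected_diff ⟨y, hy, hyg⟩) ⟨hy, hyg⟩
    ⟨u, ⟨hu.1, hug⟩, hu.2⟩).2 rfl

section

variable {X : Type} [MetricSpace X] [LocallyPathConnectedSpace X] [CompactSpace X] {T : Set X}

theorem MaximalCyclic.isArcClosed (hT : MaximalCyclic T) : IsArcClosed T :=
  ⟨hT.isClosed, hT.nontrivial.nonempty, fun hE hu hv => hT.arc_subset hE hu hv⟩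

variable [PathConnectedSpace X]

theorem finite_setOf_maximalCyclic_le_diam {ε : ℝ} (hε : 0 < ε) :
    {T : Set X | MaximalCyclic T ∧ ε ≤ diam T}.Finite := by
  by_contra hinf
  let T := Set.Infinite.natEmbedding _ hinf
  have hT : ∀ n, MaximalCyclic (T n).1 := fun n => (T n).2.1
  have hlarge : ∀ n, ∃ x ∈ (T n).1, ∃ y ∈ (T n).1, ε / 2 < dist x y := fun n => by
    by_contra! h
    exact (half_lt_self hε).not_ge ((T n).2.2.trans (diam_le_of_forall_dist_le (half_pos hε).le h))
  choose x hx y hy hxy using hlarge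
  obtain ⟨⟨x₀, y₀⟩, -, φ, hφ, hlim⟩ := (isCompact_univ (X := X × X)).tendsto_subseq
    (x := fun n => (x n, y n)) fun n => mem_univ _
  have hx₀ : Tendsto (x ∘ φ) atTop (𝓝 x₀) := (continuous_fst.tendsto _).comp hlim
  have hy₀ : Tendsto (y ∘ φ) atTop (𝓝 y₀) := (continuous_snd.tendsto _).comp hlim
  have hne : x₀ ≠ y₀ := dist_pos.1
    ((half_pos hε).trans_le (ge_of_tendsto' (hx₀.dist hy₀) fun n => (hxy (φ n)).le))
  obtain ⟨U', V', hU', hV', hxU, hyV, hUV⟩ := t2_separation hne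
  obtain ⟨U, hU, hUconn, hUU⟩ := exists_nhds_isPathConnected_subset (hU'.mem_nhds hxU)
  obtain ⟨V, hV, hVconn, hVV⟩ := exists_nhds_isPathConnected_subset (hV'.mem_nhds hyV)
  obtain ⟨N, hN⟩ := eventually_atTop.1 ((hx₀.eventually hU).and (hy₀.eventually hV))
  let m := φ N
  let n := φ (N + 1)
  have hsub := (hT n).inter_subsingleton (hT m) fun h =>
    N.succ_ne_self (hφ.injective (T.injective (Subtype.ext h)))
  have hgate := (hT m).isArcClosed.gate_eq_of_subsingleton (hT n).isPathConnected hsub (hx n) (hy n)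
  have hgateU := (hT m).isArcClosed.gate_mem_of_isPathConnected hUconn (hN (N + 1) N.le_succ).1
    ⟨x m, (hN N le_rfl).1, hx m⟩
  have hgateV := (hT m).isArcClosed.gate_mem_of_isPathConnected hVconn (hN (N + 1) N.le_succ).2
    ⟨y m, (hN N le_rfl).2, hy m⟩
  exact disjoint_left.1 hUV (hUU hgateU) (hVV (hgate ▸ hgateV))

end

/-! ### Transports along path classes -/

section

open Path.Homotopic (Quotient)

variable {X Y ι : Type*} [TopologicalSpace X] [TopologicalSpace Y] {U : ι → Set X}

theorem pathClass_map_trans (f : C(X, Y)) {x y z : X} (p : Quotient x y) (q : Quotient y z) :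
    (p.trans q).map f = (p.map f).trans (q.map f) := by
  induction p using Path.Homotopic.Quotient.ind with | mk γ
  induction q using Path.Homotopic.Quotient.ind with | mk δ
  simp only [← Path.Homotopic.Quotient.mk_trans, ← Path.Homotopic.Quotient.mk_map, Path.map_trans]

theorem pathClass_induction_subpath {Q : ∀ {x y : X}, Quotient x y → Prop}
    (htrans : ∀ {x y z : X} (p : Quotient x y) (q : Quotient y z), Q p → Q q → Q (p.trans q))
    {x y : X} (γ : Path x y) {t : ℕ → unitInterval} {n : ℕ} (h0 : t 0 = 0) (hn : t n = 1)
    (hQ : ∀ s, Q (.mk (γ.subpath s s)))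
    (ht : ∀ m, Q (.mk (γ.subpath (t m) (t (m + 1))))) : Q (.mk γ) := by
  have initial (m : ℕ) : Q (.mk (γ.subpath (t 0) (t m))) := by
    induction m with
    | zero => exact hQ _
    | succ m ih =>
      have h := htrans _ _ ih (ht m)
      rwa [← Path.Homotopic.Quotient.mk_trans, Path.Homotopic.Quotient.eq.2
        ⟨Path.Homotopy.subpathTransSubpath γ (t 0) (t m) (t (m + 1))⟩] at h
  have of_cast {x' y' : X} (hx : x' = x) (hy : y' = y) (h : Q (.mk (γ.cast hx hy))) :
      Q (.mk γ) := by
    subst hx hy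
    exact h
  have h := initial n
  rw [h0, hn, Path.subpath_zero_one] at h
  exact of_cast _ _ h

theorem pathClass_induction_of_openCover (hU : ∀ i, IsOpen (U i)) (hcov : ∀ x, ∃ i, x ∈ U i)
    {Q : ∀ {x y : X}, Quotient x y → Prop}
    (hbase : ∀ i {x y : X} (γ : Path x y), range γ ⊆ U i → Q (.mk γ))
    (htrans : ∀ {x y z : X} (p : Quotient x y) (q : Quotient y z), Q p → Q q → Q (p.trans q))
    {x y : X} (q : Quotient x y) : Q q := by
  obtain ⟨γ, rfl⟩ := Path.Homotopic.Quotient.mk_surjective q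
  obtain ⟨t, h0, hmono, ⟨n, hn⟩, hc⟩ := exists_monotone_Icc_subset_open_cover_unitInterval
    (c := fun i => γ ⁻¹' U i) (fun i => (hU i).preimage γ.continuous)
    fun s _ => mem_iUnion.2 (hcov (γ s))
  refine pathClass_induction_subpath htrans γ h0 (hn n le_rfl) (fun s => ?_) fun m => ?_
  · obtain ⟨i, hi⟩ := hcov (γ s)
    exact hbase i _ (by simpa [Path.subpath_self] using hi)
  · obtain ⟨i, hi⟩ := hc m
    refine hbase i _ ?_
    rw [Path.range_subpath_of_le _ _ _ (hmono m.le_succ)]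
    exact image_subset_iff.2 hi

theorem pathClass_map_trans_eq_trans_map_of_openCover (hU : ∀ i, IsOpen (U i))
    (hcov : ∀ x, ∃ i, x ∈ U i) {f g : C(X, Y)} (c : ∀ x, Quotient (f x) (g x))
    (h : ∀ i {x y : X} (γ : Path x y), range γ ⊆ U i →
      ((.mk γ : Quotient x y).map f).trans (c y) = (c x).trans ((.mk γ : Quotient x y).map g))
    {x y : X} (q : Quotient x y) : (q.map f).trans (c y) = (c x).trans (q.map g) :=
  pathClass_induction_of_openCover
    (Q := fun {x y} q => (q.map f).trans (c y) = (c x).trans (q.map g)) hU hcov h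
    (fun p q hp hq => by
      rw [pathClass_map_trans, pathClass_map_trans, Path.Homotopic.Quotient.trans_assoc, hq,
        ← Path.Homotopic.Quotient.trans_assoc, hp, Path.Homotopic.Quotient.trans_assoc]) q

/-- A transport on `X` with values in `M` assigns an element of `M` to each homotopy class of paths
in `X`, compatibly with concatenation; it is a functor from the fundamental groupoid of `X` to `M`.
The order of the factors agrees with `FundamentalGroup.mul_def`. -/
structure Transport (X M : Type*) [TopologicalSpace X] [Mul M] where
  /-- The value of the transport on a path class. -/
  along : ∀ {x y : X}, Quotient x y → M
  along_trans : ∀ {x y z : X} (p : Quotient x y) (q : Quotient y z),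
    along (p.trans q) = along q * along p

namespace Transport

theorem along_refl {G : Type*} [Group G] (Φ : Transport X G) (x : X) : Φ.along (.refl x) = 1 := by
  have h := Φ.along_trans (.refl x) (.refl x)
  rwa [Path.Homotopic.Quotient.refl_trans, left_eq_mul] at h

theorem along_mk_eq_one_of_const {G : Type*} [Group G] (Φ : Transport X G) {x y : X}
    {γ : Path x y} {c : X} (h : ∀ t, γ t = c) : Φ.along (.mk γ) = 1 := by
  obtain rfl : x = c := γ.source.symm.trans (h 0)
  obtain rfl : y = x := γ.target.symm.trans (h 1)
  obtain rfl : γ = Path.refl y := Path.ext (funext h)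
  exact Φ.along_refl y

/-- The image of a transport under a homomorphism. -/
def map {M N : Type*} [Mul M] [Mul N] (f : M →ₙ* N) (Φ : Transport X M) : Transport X N where
  along q := f (Φ.along q)
  along_trans p q := by rw [Φ.along_trans, map_mul]

/-- The transport along the images of paths under a continuous map. -/
def comap {M : Type*} [Mul M] (Φ : Transport X M) (f : C(Y, X)) : Transport Y M where
  along q := Φ.along (q.map f)
  along_trans p q := by rw [pathClass_map_trans, Φ.along_trans]

/-- The homomorphism from a fundamental group given by a transport. -/
noncomputable def toMonoidHom {G : Type*} [Group G] (Φ : Transport X G) (a : X) :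
    FundamentalGroup X a →* G :=
  MonoidHom.mk' (fun p => Φ.along (p : Quotient a a)) fun p q => Φ.along_trans q p

theorem mem_of_openCover {M : Type*} [Monoid M] (Φ : Transport X M) (hU : ∀ i, IsOpen (U i))
    (hcov : ∀ x, ∃ i, x ∈ U i) {R : Submonoid M}
    (h : ∀ i {x y : X} (γ : Path x y), range γ ⊆ U i → Φ.along (.mk γ) ∈ R) {x y : X}
    (q : Quotient x y) : Φ.along q ∈ R :=
  pathClass_induction_of_openCover (Q := fun q => Φ.along q ∈ R) hU hcov h
    (fun p q hp hq => by rw [Φ.along_trans]; exact R.mul_mem hq hp) q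

theorem eq_of_openCover {M : Type*} [Mul M] (Φ Ψ : Transport X M) (hU : ∀ i, IsOpen (U i))
    (hcov : ∀ x, ∃ i, x ∈ U i)
    (h : ∀ i {x y : X} (γ : Path x y), range γ ⊆ U i → Φ.along (.mk γ) = Ψ.along (.mk γ))
    {x y : X} (q : Quotient x y) : Φ.along q = Ψ.along q :=
  pathClass_induction_of_openCover (Q := fun q => Φ.along q = Ψ.along q) hU hcov h
    (fun p q hp hq => by rw [Φ.along_trans, Ψ.along_trans, hp, hq]) q

end Transport

/-! ### Transports from local primitives -/

section Primitives

variable {G : Type*} [Group G] {h : ι → X → G} {idx : X → ι}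

/-- The covering space of `X` with fibre `G` in which the right translates of each `h i` are the
sheets over `U i`. -/
def primitiveCore [TopologicalSpace G] [DiscreteTopology G] (hU : ∀ i, IsOpen (U i))
    (hloc : ∀ i j, ∀ x ∈ U i ∩ U j, ∀ᶠ y in 𝓝 x, (h j y)⁻¹ * h i y = (h j x)⁻¹ * h i x)
    (hidx : ∀ x, x ∈ U (idx x)) : FiberBundleCore ι X G where
  baseSet := U
  isOpen_baseSet := hU
  indexAt := idx
  mem_baseSet_at := hidx
  coordChange i j y g := (h j y)⁻¹ * h i y * g
  coordChange_self := by intros; simp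
  continuousOn_coordChange i j := by
    rintro ⟨x, g⟩ ⟨hx, -⟩
    have heq : ∀ᶠ p : X × G in 𝓝 (x, g),
        (h j x)⁻¹ * h i x * p.2 = (h j p.1)⁻¹ * h i p.1 * p.2 := by
      filter_upwards [continuousAt_fst.eventually (hloc i j x hx)] with p hp
      rw [hp]
    have hcont : Continuous fun p : X × G => (h j x)⁻¹ * h i x * p.2 :=
      (continuous_of_discreteTopology (f := fun g : G => (h j x)⁻¹ * h i x * g)).comp
        continuous_snd
    exact (hcont.continuousAt.congr heq).continuousWithinAt
  coordChange_comp := by intros; simp [mul_assoc]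

section Monodromy

variable [TopologicalSpace G] [DiscreteTopology G] (hU : ∀ i, IsOpen (U i))
  (hloc : ∀ i j, ∀ x ∈ U i ∩ U j, ∀ᶠ y in 𝓝 x, (h j y)⁻¹ * h i y = (h j x)⁻¹ * h i x)
  (hidx : ∀ x, x ∈ U (idx x))

theorem isCoveringMap_primitiveCore : IsCoveringMap
    (Bundle.TotalSpace.proj : Bundle.TotalSpace G (primitiveCore hU hloc hidx).Fiber → X) :=
  FiberBundle.isCoveringMap (F := G) (E := (primitiveCore hU hloc hidx).Fiber)

/-- The point over `y` at which the sheets `h i * g` through it satisfy `h i y * g = e`. -/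
def primitiveCorePoint (y : X) (e : G) :
    Bundle.TotalSpace G (primitiveCore hU hloc hidx).Fiber :=
  ⟨y, (show G from (h (idx y) y)⁻¹ * e)⟩

theorem primitiveCorePoint_injective (y : X) :
    Function.Injective (primitiveCorePoint hU hloc hidx y) := fun _ _ he =>
  mul_left_cancel (Bundle.TotalSpace.mk_injective y he)

theorem continuous_primitiveCorePoint {x y : X} (γ : Path x y) {i : ι} (hγ : range γ ⊆ U i)
    (g : G) :
    Continuous fun s => primitiveCorePoint hU hloc hidx (γ s) (h i (γ s) * g) := by
  let Z := primitiveCore hU hloc hidx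
  have heq : (fun s => primitiveCorePoint hU hloc hidx (γ s) (h i (γ s) * g)) =
      fun s => (Z.localTriv i).toOpenPartialHomeomorph.symm (γ s, g) := by
    funext s
    rw [FiberBundleCore.localTriv_symm_apply]
    simp only [primitiveCorePoint, Z, primitiveCore, mul_assoc]
  rw [heq]
  refine (Z.localTriv i).toOpenPartialHomeomorph.continuousOn_symm.comp_continuous
    (by fun_prop) fun s => ?_
  rw [(Z.localTriv i).mem_target]
  exact hγ ⟨s, rfl⟩

theorem monodromy_primitiveCorePoint {x y : X} (γ : Path x y) {i : ι} (hγ : range γ ⊆ U i)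
    (e : G) :
    (isCoveringMap_primitiveCore hU hloc hidx).monodromy (.mk γ)
        ⟨primitiveCorePoint hU hloc hidx x e, rfl⟩ =
      ⟨primitiveCorePoint hU hloc hidx y (h i y * (h i x)⁻¹ * e), rfl⟩ := by
  let pt := primitiveCorePoint hU hloc hidx
  let lift (s : unitInterval) := pt (γ s) (h i (γ s) * ((h i x)⁻¹ * e))
  have hsource : lift 0 = pt x e := by
    simp only [lift, γ.source, mul_inv_cancel_left]
  have htarget : lift 1 = pt y (h i y * (h i x)⁻¹ * e) := by
    simp only [lift, γ.target, mul_assoc]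
  let Γ : Path (pt x e) (pt y (h i y * (h i x)⁻¹ * e)) :=
    ⟨⟨lift, continuous_primitiveCorePoint hU hloc hidx γ hγ _⟩, hsource, htarget⟩
  exact (isCoveringMap_primitiveCore hU hloc hidx).monodromy_eq_of_map_eq (.mk Γ)
    (congrArg Path.Homotopic.Quotient.mk (Path.ext rfl))

theorem exists_monodromy_primitiveCorePoint {x y : X} (q : Quotient x y) :
    ∃ g : G, ∀ e, (isCoveringMap_primitiveCore hU hloc hidx).monodromy q
      ⟨primitiveCorePoint hU hloc hidx x e, rfl⟩ =
        ⟨primitiveCorePoint hU hloc hidx y (g * e), rfl⟩ := by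
  let cov := isCoveringMap_primitiveCore hU hloc hidx
  let pt := primitiveCorePoint hU hloc hidx
  refine pathClass_induction_of_openCover (U := U)
    (Q := fun {x y} q => ∃ g, ∀ e, cov.monodromy q ⟨pt x e, rfl⟩ = ⟨pt y (g * e), rfl⟩) hU
    (fun x => ⟨idx x, hidx x⟩)
    (fun i _ _ γ hγ => ⟨_, monodromy_primitiveCorePoint hU hloc hidx γ hγ⟩) ?_ q
  rintro _ _ _ p q ⟨g, hg⟩ ⟨k, hk⟩
  refine ⟨k * g, fun e => ?_⟩
  rw [cov.monodromy_trans_apply, hg, hk, mul_assoc]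

end Monodromy

theorem Transport.exists_of_primitives (hU : ∀ i, IsOpen (U i)) (hcov : ∀ x, ∃ i, x ∈ U i)
    (hloc : ∀ i j, ∀ x ∈ U i ∩ U j, ∀ᶠ y in 𝓝 x, (h j y)⁻¹ * h i y = (h j x)⁻¹ * h i x) :
    ∃ Φ : Transport X G, ∀ i {x y : X} (γ : Path x y), range γ ⊆ U i →
      Φ.along (.mk γ) = h i y * (h i x)⁻¹ := by
  let _ : TopologicalSpace G := ⊥
  have : DiscreteTopology G := ⟨rfl⟩
  choose idx hidx using hcov
  let cov := isCoveringMap_primitiveCore hU hloc hidx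
  choose value hvalue using
    fun (x y : X) (q : Quotient x y) => exists_monodromy_primitiveCorePoint hU hloc hidx q
  have value_eq {x y : X} {q : Quotient x y} {g : G}
      (h : cov.monodromy q ⟨primitiveCorePoint hU hloc hidx x 1, rfl⟩ =
        ⟨primitiveCorePoint hU hloc hidx y (g * 1), rfl⟩) : value x y q = g :=
    mul_right_cancel <| primitiveCorePoint_injective hU hloc hidx y <|
      congrArg Subtype.val ((hvalue x y q 1).symm.trans h)
  refine ⟨⟨fun q => value _ _ q, fun p q => value_eq ?_⟩, fun i _ _ γ hγ =>
    value_eq (monodromy_primitiveCorePoint hU hloc hidx γ hγ 1)⟩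
  rw [cov.monodromy_trans_apply, hvalue, hvalue, mul_assoc]

end Primitives

end

section

open Path.Homotopic (Quotient)

variable {X : Type*} [TopologicalSpace X]

theorem exists_path_range_subset_of_joinedIn {x y : X} {V : Set X} (h : JoinedIn V x y) :
    ∃ γ : Path x y, range γ ⊆ V :=
  ⟨h.somePath, range_subset_iff.2 h.somePath_mem⟩

/-- A path in `X` as a path in a subset containing its range. -/
def codRestrictPath {V : Set X} {x y : X} (γ : Path x y) (hγ : range γ ⊆ V) :
    Path (⟨x, hγ ⟨0, γ.source⟩⟩ : V) ⟨y, hγ ⟨1, γ.target⟩⟩ :=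
  ⟨⟨fun t => ⟨γ t, hγ ⟨t, rfl⟩⟩, by fun_prop⟩, Subtype.ext γ.source, Subtype.ext γ.target⟩

theorem mk_eq_of_range_subset_of_simplyConnected {V : Set X} [SimplyConnectedSpace V] {x y : X}
    {γ δ : Path x y} (hγ : range γ ⊆ V) (hδ : range δ ⊆ V) : (.mk γ : Quotient x y) = .mk δ :=
  Path.Homotopic.Quotient.eq.2 <| (SimplyConnectedSpace.paths_homotopic
    (codRestrictPath γ hγ) (codRestrictPath δ hδ)).map ⟨Subtype.val, continuous_subtype_val⟩

theorem range_trans_subset {x y z : X} {γ : Path x y} {δ : Path y z} {V : Set X}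
    (hγ : range γ ⊆ V) (hδ : range δ ⊆ V) : range (γ.trans δ) ⊆ V := by
  rw [Path.trans_range]
  exact union_subset hγ hδ

namespace Transport

variable {G H ι : Type*} [Group G] [Group H] [LocallyPathConnectedSpace X] {U : ι → Set X}

theorem exists_extension (hU : ∀ i, IsOpen (U i)) (hcov : ∀ x, ∃ i, x ∈ U i)
    [∀ i, SimplyConnectedSpace (U i)] (ψ : ∀ {x y : X}, Quotient x y → G)
    (hψ : ∀ i {x y z : X} (γ : Path x y) (δ : Path y z), range γ ⊆ U i → range δ ⊆ U i →
      ψ (.mk (γ.trans δ)) = ψ (.mk δ) * ψ (.mk γ)) :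
    ∃ Φ : Transport X G, ∀ i {x y : X} (γ : Path x y), range γ ⊆ U i →
      Φ.along (.mk γ) = ψ (.mk γ) := by
  have hUc (i : ι) : IsPathConnected (U i) :=
    isPathConnected_iff_pathConnectedSpace.2 inferInstance
  choose b hb using fun i => (hUc i).nonempty
  have hprim (i : ι) (x : X) :
      ∃ g : G, ∀ γ : Path (b i) x, range γ ⊆ U i → ψ (.mk γ) = g := by
    by_cases h : ∃ γ : Path (b i) x, range γ ⊆ U i
    · obtain ⟨γ, hγ⟩ := h
      exact ⟨_, fun δ hδ => congrArg ψ (mk_eq_of_range_subset_of_simplyConnected hδ hγ)⟩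
    · exact ⟨1, fun γ hγ => absurd ⟨γ, hγ⟩ h⟩
  choose h hh using hprim
  have h_target (i : ι) {x y : X} (γ : Path x y) (hγ : range γ ⊆ U i) :
      h i y = ψ (.mk γ) * h i x := by
    obtain ⟨δ, hδ⟩ := exists_path_range_subset_of_joinedIn
      ((hUc i).joinedIn _ (hb i) x (hγ ⟨0, γ.source⟩))
    rw [← hh i x δ hδ, ← hψ i δ γ hδ hγ, hh i y _ (range_trans_subset hδ hγ)]
  obtain ⟨Φ, hΦ⟩ := exists_of_primitives (h := h) hU hcov fun i j x hx => by
    obtain ⟨W, hW, hWc, hWU⟩ :=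
      exists_nhds_isPathConnected_subset (((hU i).inter (hU j)).mem_nhds hx)
    filter_upwards [hW] with y hy
    obtain ⟨γ, hγ⟩ := exists_path_range_subset_of_joinedIn
      (hWc.joinedIn x (mem_of_mem_nhds hW) y hy)
    rw [h_target i γ (hγ.trans (hWU.trans inter_subset_left)),
      h_target j γ (hγ.trans (hWU.trans inter_subset_right))]
    group
  exact ⟨Φ, fun i x y γ hγ => by rw [hΦ i γ hγ, h_target i γ hγ, mul_inv_cancel_right]⟩

theorem exists_coprod (hU : ∀ i, IsOpen (U i)) (hcov : ∀ x, ∃ i, x ∈ U i)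
    [∀ i, SimplyConnectedSpace (U i)] (Φ : Transport X G) (Ψ : Transport X H)
    (htriv : ∀ i, (∀ {x y : X} (γ : Path x y), range γ ⊆ U i → Φ.along (.mk γ) = 1) ∨
      ∀ {x y : X} (γ : Path x y), range γ ⊆ U i → Ψ.along (.mk γ) = 1) :
    ∃ Θ : Transport X (Monoid.Coprod G H), ∀ i {x y : X} (γ : Path x y), range γ ⊆ U i →
      Θ.along (.mk γ) = .inl (Φ.along (.mk γ)) * .inr (Ψ.along (.mk γ)) := by
  refine exists_extension hU hcov
    (fun q => Monoid.Coprod.inl (Φ.along q) * Monoid.Coprod.inr (Ψ.along q))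
    fun i x y z γ δ hγ hδ => ?_
  simp only [Path.Homotopic.Quotient.mk_trans, along_trans]
  rcases htriv i with h | h <;> rw [h γ hγ, h δ hδ] <;>
    simp only [map_mul, map_one, one_mul, mul_one]

end Transport

end

/-! ### One-point unions -/

section

open Path.Homotopic (Quotient)

variable {X ι : Type*} [TopologicalSpace X] {K K' V : Set X} {a : X}

/-- The homomorphism of fundamental groups induced by the inclusion of a subset. -/
noncomputable def inclusionHom (K : Set X) {a : X} (ha : a ∈ K) :
    FundamentalGroup K ⟨a, ha⟩ →* FundamentalGroup X a :=
  FundamentalGroup.map ⟨Subtype.val, continuous_subtype_val⟩ ⟨a, ha⟩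

theorem mk_mem_range_inclusionHom (ha : a ∈ K) {γ : Path a a} (hγ : range γ ⊆ K) :
    (Path.Homotopic.Quotient.mk γ : FundamentalGroup X a) ∈ (inclusionHom K ha).range :=
  ⟨Path.Homotopic.Quotient.mk (codRestrictPath γ hγ), rfl⟩

theorem range_inclusionHom_mono (ha : a ∈ K) (hKK' : K ⊆ K') :
    (inclusionHom K ha).range ≤ (inclusionHom K' (hKK' ha)).range := by
  rintro _ ⟨p, rfl⟩
  obtain ⟨γ, rfl⟩ := Path.Homotopic.Quotient.mk_surjective p
  exact mk_mem_range_inclusionHom _ (range_subset_iff.2 fun t => hKK' (γ t).2)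

namespace Transport

/-- The transport closing up each path to a loop at `a` along fixed connecting paths `E`. -/
noncomputable def conj (E : ∀ x, Path a x) : Transport X (FundamentalGroup X a) where
  along {x y} q := ((Path.Homotopic.Quotient.mk (E x)).trans q).trans (.mk (E y).symm)
  along_trans {x y z} p q := by
    simp only [FundamentalGroup.mul_def, Path.Homotopic.Quotient.trans_assoc,
      Path.Homotopic.Quotient.mk_symm]
    rw [← Path.Homotopic.Quotient.trans_assoc (.symm (.mk (E y))),
      Path.Homotopic.Quotient.symm_trans, Path.Homotopic.Quotient.refl_trans]

variable {E : ∀ x, Path a x}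

theorem conj_along_mk_mem_range_inclusionHom (ha : a ∈ K) (hE : ∀ x ∈ K, range (E x) ⊆ K)
    {x y : X} {γ : Path x y} (hγ : range γ ⊆ K) :
    (conj E).along (.mk γ) ∈ (inclusionHom K ha).range := by
  have hx := hE x (hγ ⟨0, γ.source⟩)
  have hy := hE y (hγ ⟨1, γ.target⟩)
  exact mk_mem_range_inclusionHom ha
    (range_trans_subset (range_trans_subset hx hγ) (by rwa [Path.symm_range]))

theorem conj_along_mk_eq_one [SimplyConnectedSpace V] (ha : a ∈ V)
    (hE : ∀ x ∈ V, range (E x) ⊆ V) {x y : X} {γ : Path x y} (hγ : range γ ⊆ V) :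
    (conj E).along (.mk γ) = 1 := by
  obtain ⟨p, hp⟩ := conj_along_mk_mem_range_inclusionHom ha hE hγ
  rw [← hp, Subsingleton.elim p 1, map_one]

theorem conj_along_loop [SimplyConnectedSpace V] (ha : a ∈ V) (hE : ∀ x ∈ V, range (E x) ⊆ V)
    (p : FundamentalGroup X a) : (conj E).along (p : Quotient a a) = p := by
  have hEa : (.mk (E a) : Quotient a a) = .refl a :=
    mk_eq_of_range_subset_of_simplyConnected (V := V) (hE a ha) (by simpa using ha)
  change Path.Homotopic.Quotient.trans (.trans (.mk (E a)) p) (.mk (E a).symm) = p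
  rw [Path.Homotopic.Quotient.mk_symm, hEa, Path.Homotopic.Quotient.refl_trans,
    ← Path.Homotopic.Quotient.mk_refl, ← Path.Homotopic.Quotient.mk_symm, Path.refl_symm,
    Path.Homotopic.Quotient.mk_refl, Path.Homotopic.Quotient.trans_refl]

end Transport

end

section

open Path.Homotopic (Quotient)

variable {X : Type*} [TopologicalSpace X]

theorem Transport.along_mk_congr {M : Type*} [Mul M] (Φ : Transport X M) {x y x' y' : X}
    {γ : Path x y} {δ : Path x' y'} (h : ∀ t, γ t = δ t) : Φ.along (.mk γ) = Φ.along (.mk δ) := by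
  obtain rfl : x = x' := γ.source.symm.trans ((h 0).trans δ.source)
  obtain rfl : y = y' := γ.target.symm.trans ((h 1).trans δ.target)
  rw [Path.ext (funext h)]

theorem Transport.along_inclusionHom {ι M : Type*} [Group M] {U : ι → Set X} {K V : Set X} {a : X}
    {E : ∀ x, Path a x} (hU : ∀ i, IsOpen (U i)) (hcov : ∀ x, ∃ i, x ∈ U i)
    [SimplyConnectedSpace V] (haV : a ∈ V) (hE : ∀ x ∈ V, range (E x) ⊆ V) (haK : a ∈ K)
    (Θ : Transport X M) (f : FundamentalGroup X a →* M)
    (h : ∀ i {x y : X} (γ : Path x y), range γ ⊆ U i → range γ ⊆ K →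
      Θ.along (.mk γ) = f ((conj E).along (.mk γ)))
    (p : FundamentalGroup K ⟨a, haK⟩) :
    Θ.toMonoidHom a (inclusionHom K haK p) = f (inclusionHom K haK p) := by
  let incl : C(K, X) := ⟨Subtype.val, continuous_subtype_val⟩
  have hp := eq_of_openCover (Θ.comap incl) (((conj E).comap incl).map f)
    (U := fun i => incl ⁻¹' U i) (fun i => (hU i).preimage incl.continuous) (fun x => hcov x)
    (fun i x y γ hγ => h i (γ.map incl.continuous)
      (range_subset_iff.2 fun t => hγ ⟨t, rfl⟩) (range_subset_iff.2 fun t => (γ t).2)) p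
  exact hp.trans (congrArg f (conj_along_loop haV hE _))

/-- The open simply connected sets that equal `V` or avoid `a`. -/
abbrev BasedChart (V : Set X) (a : X) : Type _ :=
  {U : Set X // IsOpen U ∧ SimplyConnectedSpace U ∧ (U = V ∨ a ∉ U)}

instance {V : Set X} {a : X} (U : BasedChart V a) : SimplyConnectedSpace U.1 := U.2.2.1

end

section

open Path.Homotopic (Quotient)

variable {X : Type*} [MetricSpace X] [PathConnectedSpace X] [LocallyPathConnectedSpace X]
  {A B K V U : Set X} {a : X}

namespace IsArcClosed

/-- The retraction of the space onto an arc-closed set, sending each point to its gate. -/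
noncomputable def retraction (hK : IsArcClosed K) : C(X, K) :=
  ⟨fun x => ⟨gate K x, hK.gate_mem x⟩, hK.continuous_gate.subtype_mk _⟩

theorem retraction_coe (hK : IsArcClosed K) (z : K) : hK.retraction z = z :=
  Subtype.ext (hK.gate_eq_self z.2)

/-- The homomorphism of fundamental groups induced by the retraction onto an arc-closed set. -/
noncomputable def retractionHom (hK : IsArcClosed K) (ha : a ∈ K) :
    FundamentalGroup X a →* FundamentalGroup K ⟨a, ha⟩ :=
  FundamentalGroup.mapOfEq hK.retraction (hK.retraction_coe ⟨a, ha⟩)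

theorem retractionHom_inclusionHom (hK : IsArcClosed K) (ha : a ∈ K)
    (p : FundamentalGroup K ⟨a, ha⟩) : hK.retractionHom ha (inclusionHom K ha p) = p := by
  obtain ⟨γ, rfl⟩ := Path.Homotopic.Quotient.mk_surjective p
  rw [retractionHom, FundamentalGroup.mapOfEq_apply]
  exact congrArg Path.Homotopic.Quotient.mk (Path.ext (funext fun t => hK.retraction_coe (γ t)))

theorem inclusionHom_injective (hK : IsArcClosed K) (ha : a ∈ K) :
    Function.Injective (inclusionHom K ha) :=
  Function.LeftInverse.injective (hK.retractionHom_inclusionHom ha)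

theorem disjoint_or_disjoint_of_notMem (hA : IsArcClosed A) (hB : IsArcClosed B)
    (hAB : A ∩ B = {a}) (hU : IsPathConnected U) (ha : a ∉ U) : Disjoint U A ∨ Disjoint U B := by
  by_contra! ⟨hUA, hUB⟩
  obtain ⟨x, hxU, hxA⟩ := not_disjoint_iff.1 hUA
  refine ha ?_
  rw [← hA.gate_eq_of_inter_eq_singleton hB hAB hxA]
  exact hB.gate_mem_of_isPathConnected hU hxU (not_disjoint_iff_nonempty_inter.1 hUB)

theorem exists_path_range_subset (hA : IsArcClosed A) (hV : IsPathConnected V) (haA : a ∈ A)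
    (haV : a ∈ V) {x : X} (hx : x ∈ A) :
    ∃ e : Path a x, range e ⊆ A ∧ (x ∈ V → range e ⊆ V) := by
  by_cases hxV : x ∈ V
  · obtain ⟨e, he⟩ := exists_path_range_subset_of_joinedIn
      ((hA.isPathConnected_inter hV ⟨a, haV, haA⟩).joinedIn a ⟨haV, haA⟩ x ⟨hxV, hx⟩)
    exact ⟨e, he.trans inter_subset_right, fun _ => he.trans inter_subset_left⟩
  · obtain ⟨e, he⟩ := exists_path_range_subset_of_joinedIn
      (hA.isPathConnected.joinedIn a haA x hx)
    exact ⟨e, he, fun h => absurd h hxV⟩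

theorem exists_connecting_paths (hA : IsArcClosed A) (hB : IsArcClosed B) (hAB : A ∩ B = {a})
    (hV : IsPathConnected V) (haV : a ∈ V) :
    ∃ E : ∀ x, Path a x, (∀ x ∈ A, range (E x) ⊆ A) ∧ (∀ x ∈ B, range (E x) ⊆ B) ∧
      ∀ x ∈ V, range (E x) ⊆ V := by
  obtain ⟨haA, haB⟩ : a ∈ A ∩ B := hAB ▸ rfl
  have hpath (x : X) : ∃ e : Path a x,
      (x ∈ A → range e ⊆ A) ∧ (x ∈ B → range e ⊆ B) ∧ (x ∈ V → range e ⊆ V) := by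
    by_cases hxA : x ∈ A <;> by_cases hxB : x ∈ B
    · obtain rfl : x = a := hAB.subset ⟨hxA, hxB⟩
      exact ⟨.refl x, by simp⟩
    · obtain ⟨e, heA, heV⟩ := hA.exists_path_range_subset hV haA haV hxA
      exact ⟨e, fun _ => heA, fun h => absurd h hxB, heV⟩
    · obtain ⟨e, heB, heV⟩ := hB.exists_path_range_subset hV haB haV hxB
      exact ⟨e, fun h => absurd h hxA, fun _ => heB, heV⟩
    · obtain ⟨e, -, heV⟩ := univ.exists_path_range_subset hV (mem_univ a) haV (mem_univ x)
      exact ⟨e, fun h => absurd h hxA, fun h => absurd h hxB, heV⟩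
  choose E hEA hEB hEV using hpath
  exact ⟨E, hEA, hEB, hEV⟩

/-- The transport closing up the images of paths under the gate map of `A` to loops at `a`. -/
noncomputable def gateTransport (hA : IsArcClosed A) (E : ∀ x, Path a x) :
    Transport X (FundamentalGroup X a) :=
  (Transport.conj E).comap ⟨gate A, hA.continuous_gate⟩

variable {E : ∀ x, Path a x} {x y : X} {γ : Path x y}

theorem gateTransport_along_mk (hA : IsArcClosed A) (hγ : range γ ⊆ A) :
    (hA.gateTransport E).along (.mk γ) = (Transport.conj E).along (.mk γ) :=
  (Transport.conj E).along_mk_congr (γ := γ.map hA.continuous_gate)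
    fun t => hA.gate_eq_self (hγ ⟨t, rfl⟩)

theorem gateTransport_along_mk_eq_one_of_subset [SimplyConnectedSpace V] (hA : IsArcClosed A)
    (haA : a ∈ A) (haV : a ∈ V) (hE : ∀ x ∈ V, range (E x) ⊆ V) (hγ : range γ ⊆ V) :
    (hA.gateTransport E).along (.mk γ) = 1 :=
  Transport.conj_along_mk_eq_one (γ := γ.map hA.continuous_gate) haV hE <|
    range_subset_iff.2 fun t => hA.gate_mem_of_isPathConnected
      (isPathConnected_iff_pathConnectedSpace.2 inferInstance) (hγ ⟨t, rfl⟩) ⟨a, haV, haA⟩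

theorem gateTransport_along_mk_eq_one_of_subsingleton (hA : IsArcClosed A) {W : Set X}
    (hW : IsPathConnected W) (hWA : (W ∩ A).Subsingleton) (hγ : range γ ⊆ W) :
    (hA.gateTransport E).along (.mk γ) = 1 :=
  (Transport.conj E).along_mk_eq_one_of_const (γ := γ.map hA.continuous_gate)
    fun t => hA.gate_eq_of_subsingleton hW hWA (hγ ⟨t, rfl⟩) (hγ ⟨0, γ.source⟩)

theorem gateTransport_trivial_or_trivial [SimplyConnectedSpace V] (hA : IsArcClosed A)
    (hB : IsArcClosed B) (hAB : A ∩ B = {a}) (haV : a ∈ V) (hE : ∀ x ∈ V, range (E x) ⊆ V)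
    (U : BasedChart V a) :
    (∀ {x y : X} (γ : Path x y), range γ ⊆ U.1 → (hA.gateTransport E).along (.mk γ) = 1) ∨
      ∀ {x y : X} (γ : Path x y), range γ ⊆ U.1 → (hB.gateTransport E).along (.mk γ) = 1 := by
  have haA : a ∈ A := hAB.superset rfl |>.1
  have hU : IsPathConnected U.1 := isPathConnected_iff_pathConnectedSpace.2 inferInstance
  rcases U.2.2.2 with h | h
  · exact Or.inl fun γ hγ => hA.gateTransport_along_mk_eq_one_of_subset haA haV hE (h ▸ hγ)
  · exact (hA.disjoint_or_disjoint_of_notMem hB hAB hU h).imp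
      (fun hd _ _ _ => hA.gateTransport_along_mk_eq_one_of_subsingleton hU (by simp [hd.inter_eq]))
      (fun hd _ _ _ => hB.gateTransport_along_mk_eq_one_of_subsingleton hU (by simp [hd.inter_eq]))

end IsArcClosed

end

section

variable {X : Type} [MetricSpace X] {A B V : Set X} {a : X}

theorem LocSimplyConnected.exists_mem_basedChart (hX : LocSimplyConnected X)
    [SimplyConnectedSpace V] (hV : IsOpen V) (haV : a ∈ V) (x : X) :
    ∃ U : BasedChart V a, x ∈ U.1 := by
  obtain rfl | hx := eq_or_ne x a
  · exact ⟨⟨V, hV, inferInstance, Or.inl rfl⟩, haV⟩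
  · obtain ⟨U, hxU, hUa, hU, hUs⟩ := hX x {a}ᶜ (isOpen_compl_singleton.mem_nhds hx)
    exact ⟨⟨U, hU, hUs, Or.inr fun h => hUa h rfl⟩, mem_of_mem_nhds hxU⟩

variable [PathConnectedSpace X] [LocallyPathConnectedSpace X]

namespace IsArcClosed

theorem lift_inclusionHom_injective (hX : LocSimplyConnected X) (hA : IsArcClosed A)
    (hB : IsArcClosed B) (hAB : A ∩ B = {a}) (haA : a ∈ A) (haB : a ∈ B) :
    Function.Injective (Monoid.Coprod.lift (inclusionHom A haA) (inclusionHom B haB)) := by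
  obtain ⟨V, hVa, -, hV, hVs⟩ := hX a Set.univ univ_mem
  have haV : a ∈ V := mem_of_mem_nhds hVa
  obtain ⟨E, -, -, hEV⟩ := hA.exists_connecting_paths hB hAB
    (isPathConnected_iff_pathConnectedSpace.2 inferInstance) haV
  have hopen (U : BasedChart V a) : IsOpen U.1 := U.2.1
  have hcov := hX.exists_mem_basedChart hV haV
  obtain ⟨Θ, hΘ⟩ := Transport.exists_coprod hopen hcov _ _
    (hA.gateTransport_trivial_or_trivial hB hAB haV hEV)
  have hΘA := Θ.along_inclusionHom hopen hcov haV hEV haA Monoid.Coprod.inl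
    fun U x y γ hγU hγ => by
      rw [hΘ U γ hγU, hA.gateTransport_along_mk hγ, hB.gateTransport_along_mk_eq_one_of_subsingleton
        hA.isPathConnected (by simp [hAB]) hγ, map_one, mul_one]
  have hΘB := Θ.along_inclusionHom hopen hcov haV hEV haB Monoid.Coprod.inr
    fun U x y γ hγU hγ => by
      rw [hΘ U γ hγU, hB.gateTransport_along_mk hγ, hA.gateTransport_along_mk_eq_one_of_subsingleton
        hB.isPathConnected (by simp [inter_comm, hAB]) hγ, map_one, one_mul]
  let r := (Monoid.Coprod.map (hA.retractionHom haA) (hB.retractionHom haB)).comp (Θ.toMonoidHom a)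
  have hr : r.comp (Monoid.Coprod.lift (inclusionHom A haA) (inclusionHom B haB)) = .id _ :=
    Monoid.Coprod.hom_ext (MonoidHom.ext fun p => by simp [r, hΘA, retractionHom_inclusionHom])
      (MonoidHom.ext fun p => by simp [r, hΘB, retractionHom_inclusionHom])
  exact Function.LeftInverse.injective (g := r) fun p => DFunLike.congr_fun hr p

theorem range_inclusionHom_union (hX : LocSimplyConnected X) (hA : IsArcClosed A)
    (hB : IsArcClosed B) (hAB : A ∩ B = {a}) (haA : a ∈ A) (haB : a ∈ B) :
    (inclusionHom (A ∪ B) (Or.inl haA)).range =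
      (inclusionHom A haA).range ⊔ (inclusionHom B haB).range := by
  refine le_antisymm ?_ (sup_le (range_inclusionHom_mono haA subset_union_left)
    (range_inclusionHom_mono haB subset_union_right))
  obtain ⟨V, hVa, -, hV, hVs⟩ := hX a Set.univ univ_mem
  have haV : a ∈ V := mem_of_mem_nhds hVa
  obtain ⟨E, hEA, hEB, hEV⟩ := hA.exists_connecting_paths hB hAB
    (isPathConnected_iff_pathConnectedSpace.2 inferInstance) haV
  let incl : C(↥(A ∪ B), X) := ⟨Subtype.val, continuous_subtype_val⟩
  rintro _ ⟨p, rfl⟩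
  rw [← Transport.conj_along_loop haV hEV (inclusionHom _ _ p)]
  refine ((Transport.conj E).comap incl).mem_of_openCover
    (U := fun U : BasedChart V a => incl ⁻¹' U.1)
    (R := ((inclusionHom A haA).range ⊔ (inclusionHom B haB).range).toSubmonoid)
    (fun U => U.2.1.preimage incl.continuous)
    (fun x => hX.exists_mem_basedChart hV haV x) (fun U x y γ hγ => ?_) p
  have hγU : range (γ.map incl.continuous) ⊆ U.1 := range_subset_iff.2 fun t => hγ ⟨t, rfl⟩
  change (Transport.conj E).along (.mk (γ.map incl.continuous)) ∈ _
  rcases U.2.2.2 with h | h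
  · rw [Transport.conj_along_mk_eq_one haV hEV (h ▸ hγU)]
    exact one_mem _
  · rcases hA.disjoint_or_disjoint_of_notMem hB hAB
      (isPathConnected_iff_pathConnectedSpace.2 inferInstance) h with hd | hd
    · exact Subgroup.mem_sup_right (Transport.conj_along_mk_mem_range_inclusionHom haB hEB <|
        range_subset_iff.2 fun t => (γ t).2.resolve_left (disjoint_left.1 hd (hγU ⟨t, rfl⟩)))
    · exact Subgroup.mem_sup_left (Transport.conj_along_mk_mem_range_inclusionHom haA hEA <|
        range_subset_iff.2 fun t => (γ t).2.resolve_right (disjoint_left.1 hd (hγU ⟨t, rfl⟩)))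

theorem fundamentalGroup_union (hX : LocSimplyConnected X) (hA : IsArcClosed A)
    (hB : IsArcClosed B) (hAB : A ∩ B = {a}) (haA : a ∈ A) (haB : a ∈ B) :
    Nonempty (FundamentalGroup ↥(A ∪ B) ⟨a, Or.inl haA⟩ ≃*
      Monoid.Coprod (FundamentalGroup A ⟨a, haA⟩) (FundamentalGroup B ⟨a, haB⟩)) := by
  have hrange := (hA.range_inclusionHom_union hX hB hAB haA haB).trans
    (Monoid.Coprod.range_lift _ _).symm
  exact ⟨(MonoidHom.ofInjective ((hA.union hB hAB).inclusionHom_injective (Or.inl haA))).trans <|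
    (MulEquiv.subgroupCongr hrange).trans
      (MonoidHom.ofInjective (hA.lift_inclusionHom_injective hX hB hAB haA haB)).symm⟩

end IsArcClosed

end

/-! ### Close paths are homotopic -/

section

open Path.Homotopic (Quotient)

variable {X : Type} [MetricSpace X] [CompactSpace X]

theorem exists_isPathConnected_subset_ball_of_dist_lt {X : Type*} [MetricSpace X] [CompactSpace X]
    [LocallyPathConnectedSpace X] {ε : ℝ} (hε : 0 < ε) :
    ∃ δ > 0, ∀ p q : X, dist p q < δ → ∃ W, IsPathConnected W ∧ p ∈ W ∧ q ∈ W ∧ W ⊆ ball p ε := by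
  choose W hW hWconn hWball using fun z : X =>
    exists_nhds_isPathConnected_subset (ball_mem_nhds z (half_pos hε))
  obtain ⟨δ, hδ, h⟩ := lebesgue_number_lemma_of_metric (isCompact_univ (X := X))
    (c := fun z => interior (W z)) (fun z => isOpen_interior)
    (fun z _ => mem_iUnion.2 ⟨z, mem_interior_iff_mem_nhds.2 (hW z)⟩)
  refine ⟨δ, hδ, fun p q hpq => ?_⟩
  obtain ⟨z, hz⟩ := h p (mem_univ p)
  have hp : p ∈ W z := interior_subset (hz (mem_ball_self hδ))
  refine ⟨W z, hWconn z, hp, interior_subset (hz (mem_ball'.2 hpq)), fun w hw => mem_ball.2 ?_⟩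
  linarith [dist_triangle w z p, mem_ball.1 (hWball z hw), mem_ball'.1 (hWball z hp)]

theorem LocSimplyConnected.exists_ball_subset (hX : LocSimplyConnected X) :
    ∃ δ > 0, ∀ x : X, ∃ V : Set X, SimplyConnectedSpace V ∧ ball x δ ⊆ V := by
  choose V hVn _ hVo hVs using fun x : X => hX x univ univ_mem
  obtain ⟨δ, hδ, h⟩ := lebesgue_number_lemma_of_metric (isCompact_univ (X := X)) (c := V) hVo
    (fun z _ => mem_iUnion.2 ⟨z, mem_of_mem_nhds (hVn z)⟩)
  refine ⟨δ, hδ, fun x => ?_⟩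
  obtain ⟨z, hz⟩ := h x (mem_univ x)
  exact ⟨V z, hVs z, hz⟩

variable [LocallyPathConnectedSpace X]

theorem LocSimplyConnected.exists_pathClass_of_dist_lt (hX : LocSimplyConnected X) :
    ∃ ε > 0, ∀ {Y : Type} [TopologicalSpace Y] (f g : C(Y, X)), (∀ y, dist (f y) (g y) < ε) →
      ∃ c : ∀ y, Quotient (f y) (g y),
        (∀ {y z} (q : Quotient y z), (q.map f).trans (c z) = (c y).trans (q.map g)) ∧
        ∀ y (h : f y = g y), c y = .mk ((Path.refl (f y)).cast rfl h.symm) := by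
  obtain ⟨r, hr, hV⟩ := hX.exists_ball_subset
  obtain ⟨ε, hε, hW⟩ := exists_isPathConnected_subset_ball_of_dist_lt (X := X) (half_pos hr)
  refine ⟨ε, hε, fun {Y} _ f g hfg => ?_⟩
  have hconn (y : Y) : ∃ c : Path (f y) (g y), range c ⊆ ball (f y) (r / 2) := by
    obtain ⟨W, hWconn, hf, hg, hWr⟩ := hW _ _ (hfg y)
    exact exists_path_range_subset_of_joinedIn ((hWconn.joinedIn _ hf _ hg).mono hWr)
  choose c hc using hconn
  have hball {x : X} {y : Y} (hy : f y ∈ ball x (r / 2)) : range (c y) ⊆ ball x r :=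
    (hc y).trans (ball_subset_ball' (by linarith [mem_ball.1 hy]))
  refine ⟨fun y => .mk (c y), fun q => ?_, fun y h => ?_⟩
  · refine pathClass_map_trans_eq_trans_map_of_openCover (f := f) (g := g)
      (U := fun x : X => f ⁻¹' ball x (r / 2))
      (fun x => isOpen_ball.preimage f.continuous) (fun y => ⟨f y, mem_ball_self (half_pos hr)⟩)
      (fun y => .mk (c y)) (fun x y z γ hγ => ?_) q
    obtain ⟨V, hVs, hxV⟩ := hV x
    have hγf : range (γ.map f.continuous) ⊆ ball x r :=
      range_subset_iff.2 fun t => ball_subset_ball (half_le_self hr.le) (hγ ⟨t, rfl⟩)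
    have hγg : range (γ.map g.continuous) ⊆ ball x r :=
      range_subset_iff.2 fun t => hball (hγ ⟨t, rfl⟩) ⟨1, (c (γ t)).target⟩
    exact mk_eq_of_range_subset_of_simplyConnected
      ((range_trans_subset hγf (hball (hγ ⟨1, γ.target⟩))).trans hxV)
      ((range_trans_subset (hball (hγ ⟨0, γ.source⟩)) hγg).trans hxV)
  · obtain ⟨V, hVs, hyV⟩ := hV (f y)
    exact mk_eq_of_range_subset_of_simplyConnected
      ((hball (mem_ball_self (half_pos hr))).trans hyV) (by simpa using hyV (mem_ball_self hr))

theorem LocSimplyConnected.exists_mk_eq_of_dist_lt (hX : LocSimplyConnected X) :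
    ∃ ε > 0, ∀ {x y : X} (γ δ : Path x y), (∀ t, dist (γ t) (δ t) < ε) →
      (.mk γ : Quotient x y) = .mk δ := by
  obtain ⟨ε, hε, h⟩ := hX.exists_pathClass_of_dist_lt
  refine ⟨ε, hε, fun {x y} γ δ hγδ => ?_⟩
  obtain ⟨c, hc, hrefl⟩ := h (Y := {p : X × X // dist p.1 p.2 < ε})
    ⟨fun p => p.1.1, by fun_prop⟩ ⟨fun p => p.1.2, by fun_prop⟩ fun p => p.2
  have hdiag (z : X) : dist z z < ε := by rwa [dist_self]
  let σ : Path (⟨(x, x), hdiag x⟩ : {p : X × X // dist p.1 p.2 < ε}) ⟨(y, y), hdiag y⟩ :=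
    ⟨⟨fun t => ⟨(γ t, δ t), hγδ t⟩, by fun_prop⟩, by simp, by simp⟩
  have hσ := hc (.mk σ)
  rw [hrefl _ rfl, hrefl _ rfl] at hσ
  exact (Path.Homotopic.Quotient.trans_refl _).symm.trans
    (hσ.trans (Path.Homotopic.Quotient.refl_trans _))

end

/-! ### Deforming paths into arc-closed sets -/

section

variable {X : Type*} [MetricSpace X] [PathConnectedSpace X] [LocallyPathConnectedSpace X]
  {c : Set (Set X)}

theorem exists_mem_gate_mem_of_mem_nhds (hc : ∀ K ∈ c, IsArcClosed K)
    (hchain : IsChain (· ⊆ ·) c) {u v y : X} {A B : Set X} (hA : IsArc u y A) (hB : IsArc y v B)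
    (hu : u ∈ closure (⋃₀ c)) (hv : v ∈ closure (⋃₀ c)) {U V : Set X} (hU : U ∈ 𝓝 u)
    (hV : V ∈ 𝓝 v) : ∃ K ∈ c, gate K y ∈ U ∪ A ∧ gate K y ∈ V ∪ B := by
  obtain ⟨W, hW, hWconn, hWU⟩ := exists_nhds_isPathConnected_subset hU
  obtain ⟨W', hW', hWconn', hWV⟩ := exists_nhds_isPathConnected_subset hV
  obtain ⟨u', hu'W, hu'⟩ := mem_closure_iff_nhds.1 hu W hW
  obtain ⟨v', hv'W, hv'⟩ := mem_closure_iff_nhds.1 hv W' hW'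
  obtain ⟨K, hK, hsub⟩ := hchain.directedOn.exists_mem_subset_of_finite_of_subset_sUnion
    (nonempty_of_mem hu'.choose_spec.1) (toFinite {u', v'}) (pair_subset hu' hv')
  rw [pair_subset_iff] at hsub
  refine ⟨K, hK, union_subset_union_left A hWU ?_, union_subset_union_left B hWV ?_⟩
  · exact (hc K hK).gate_mem_of_isPathConnected
      (hWconn.union hA.isPathConnected ⟨u, mem_of_mem_nhds hW, hA.left_mem⟩) (Or.inr hA.right_mem)
      ⟨u', Or.inl hu'W, hsub.1⟩
  · exact (hc K hK).gate_mem_of_isPathConnected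
      (hWconn'.union hB.isPathConnected ⟨v, mem_of_mem_nhds hW', hB.right_mem⟩)
      (Or.inr hB.left_mem) ⟨v', Or.inl hv'W, hsub.2⟩

theorem IsArcClosed.closure_sUnion (hc : ∀ K ∈ c, IsArcClosed K) (hchain : IsChain (· ⊆ ·) c)
    (hne : c.Nonempty) : IsArcClosed (closure (⋃₀ c)) := by
  refine ⟨isClosed_closure, ?_, fun {u v E} hE hu hv y hy => ?_⟩
  · obtain ⟨K, hK⟩ := hne
    exact ((hc K hK).nonempty.mono (subset_sUnion_of_mem hK)).closure
  by_contra hycl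
  obtain ⟨A, B, hA, hB, -, hAB⟩ := hE.exists_split hy (fun h => hycl (h ▸ hu))
    fun h => hycl (h ▸ hv)
  have huB : u ∉ B := fun h => hA.ne (hAB.subset ⟨hA.left_mem, h⟩)
  have hvA : v ∉ A := fun h => hB.ne (hAB.subset ⟨h, hB.right_mem⟩).symm
  obtain ⟨U, V, hU, hV, hUV⟩ := t2_separation_nhds hE.ne
  obtain ⟨K, hK, hu', hv'⟩ := exists_mem_gate_mem_of_mem_nhds hc hchain hA hB hu hv
    (inter_mem hU (hB.isClosed.isOpen_compl.mem_nhds huB))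
    (inter_mem hV (hA.isClosed.isOpen_compl.mem_nhds hvA))
  have hgate : gate K y = y := by
    rcases hu' with ⟨hgU, hgB⟩ | hgA <;> rcases hv' with ⟨hgV, hgA'⟩ | hgB'
    · exact (disjoint_left.1 hUV hgU hgV).elim
    · exact (hgB hgB').elim
    · exact (hgA' hgA).elim
    · exact hAB.subset ⟨hgA, hgB'⟩
  exact hycl (subset_closure ⟨K, hK, hgate ▸ (hc K hK).gate_mem y⟩)

theorem exists_mem_forall_dist_gate_lt [CompactSpace X] (hc : ∀ K ∈ c, IsArcClosed K)
    (hchain : IsChain (· ⊆ ·) c) (hne : c.Nonempty) {ε : ℝ} (hε : 0 < ε) :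
    ∃ K ∈ c, ∀ p ∈ closure (⋃₀ c), dist p (gate K p) < ε := by
  obtain ⟨δ, hδ, hW⟩ := exists_isPathConnected_subset_ball_of_dist_lt (X := X) hε
  have := hne.to_subtype
  have hcov : closure (⋃₀ c) ⊆ ⋃ K : c, thickening δ K.1 := by
    rw [← thickening_iUnion, ← sUnion_eq_iUnion]
    exact closure_subset_thickening hδ _
  obtain ⟨⟨K, hK⟩, hcl⟩ := isClosed_closure.isCompact.elim_directed_cover _
    (fun K => isOpen_thickening) hcov
    (.mono_comp (g := thickening δ) (· ⊆ ·) (fun _ _ h => thickening_subset_of_subset δ h)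
      hchain.directedOn.directed_val)
  refine ⟨K, hK, fun p hp => ?_⟩
  obtain ⟨k, hk, hpk⟩ := mem_thickening_iff.1 (hcl hp)
  obtain ⟨W, hWconn, hpW, hkW, hWε⟩ := hW p k hpk
  exact mem_ball'.1 (hWε ((hc K hK).gate_mem_of_isPathConnected hWconn hpW ⟨k, hkW, hk⟩))

end

section

variable {X : Type*} [TopologicalSpace X] {K M V : Set X} {a x : X}

theorem range_inclusionHom_eq_bot_of_subset_simplyConnected [SimplyConnectedSpace V] (hKV : K ⊆ V)
    (ha : a ∈ K) : (inclusionHom K ha).range = ⊥ := by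
  rw [eq_bot_iff]
  rintro _ ⟨p, rfl⟩
  obtain ⟨γ, rfl⟩ := Path.Homotopic.Quotient.mk_surjective p
  exact mk_eq_of_range_subset_of_simplyConnected (V := V) (range_subset_iff.2 fun t => hKV (γ t).2)
    (δ := Path.refl a) (by simpa using hKV ha)

theorem range_inclusionHom_le_of_isPathConnected (hK : IsPathConnected K) (hKM : K ⊆ M)
    (ha : a ∈ K) (hx : x ∈ K)
    (h : (inclusionHom M (hKM ha)).range ≤ (inclusionHom K ha).range) :
    (inclusionHom M (hKM hx)).range ≤ (inclusionHom K hx).range := by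
  rintro _ ⟨p, rfl⟩
  obtain ⟨γ, rfl⟩ := Path.Homotopic.Quotient.mk_surjective p
  let δ : Path x x := γ.map continuous_subtype_val
  have hδ : range δ ⊆ M := range_subset_iff.2 fun t => (γ t).2
  obtain ⟨e, he⟩ := exists_path_range_subset_of_joinedIn (hK.joinedIn a ha x hx)
  have he' : range e.symm ⊆ K := by rwa [Path.symm_range]
  obtain ⟨q, hq⟩ := h (mk_mem_range_inclusionHom (hKM ha) (range_trans_subset
    (range_trans_subset (he.trans hKM) hδ) (he'.trans hKM)))
  obtain ⟨σ, rfl⟩ := Path.Homotopic.Quotient.mk_surjective q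
  let τ : Path a a := σ.map continuous_subtype_val
  have hτ : range τ ⊆ K := range_subset_iff.2 fun t => (σ t).2
  have hτδ : (.mk τ : Path.Homotopic.Quotient a a) = .mk ((e.trans δ).trans e.symm) := hq
  have hδτ : (.mk δ : Path.Homotopic.Quotient x x) = .mk ((e.symm.trans τ).trans e) := by
    simp only [Path.Homotopic.Quotient.mk_trans, hτδ, Path.Homotopic.Quotient.mk_symm]
    simp [← Path.Homotopic.Quotient.trans_assoc (Path.Homotopic.Quotient.mk e).symm]
  rw [show inclusionHom M (hKM hx) (.mk γ) = _ from hδτ]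
  exact mk_mem_range_inclusionHom hx (range_trans_subset (range_trans_subset he' hτ) he)

end

section

variable {X : Type*} [MetricSpace X] [LocallyPathConnectedSpace X] {a x : X} {D V : Set X}

theorem eventually_subset_branch {S : Set X} (hS : IsCompact S) (hSa : S ⊆ branch a x) :
    ∀ᶠ b in 𝓝 a, S ⊆ branch b x := by
  refine hS.eventually_forall_of_forall_eventually fun p hp => ?_
  obtain ⟨γ, hγ⟩ := exists_path_range_subset_of_joinedIn (hSa hp)
  have hpa : p ≠ a := fun h => notMem_branch a x (h ▸ hSa hp)
  obtain ⟨P, A, hP, hA, hPA⟩ := t2_separation_nhds hpa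
  obtain ⟨W, hW, hWconn, hWP⟩ := exists_nhds_isPathConnected_subset hP
  have hγA : A ∩ (range γ)ᶜ ∈ 𝓝 a := inter_mem hA <|
    (isCompact_range γ.continuous).isClosed.isOpen_compl.mem_nhds fun h => hγ h rfl
  filter_upwards [prod_mem_nhds hγA hW] with ⟨b, q⟩ ⟨⟨hbA, hbγ⟩, hqW⟩
  have hxp : JoinedIn {b}ᶜ x p := ⟨γ, fun t ht => hbγ ⟨t, ht⟩⟩
  exact hxp.trans ((hWconn.joinedIn p (mem_of_mem_nhds hW) q hqW).mono
    fun w hw hwb => disjoint_left.1 hPA (hWP hw) (hwb ▸ hbA))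

theorem eventually_sdiff_branch_subset (hD : IsCompact D) (hDa : D ⊆ insert a (branch a x))
    (hV : V ∈ 𝓝 a) : ∀ᶠ b in 𝓝 a, D \ branch b x ⊆ V := by
  have hsub : D \ interior V ⊆ branch a x := by
    rintro y ⟨hyD, hyV⟩
    refine (hDa hyD).resolve_left ?_
    rintro rfl
    exact hyV (mem_interior_iff_mem_nhds.2 hV)
  filter_upwards [eventually_subset_branch (hD.diff isOpen_interior) hsub] with b hb y hy
  by_contra hyV
  exact hy.2 (hb ⟨hy.1, fun h => hyV (interior_subset h)⟩)

end

theorem IsArcClosed.inter_insert_branch {X : Type*} [MetricSpace X] [PathConnectedSpace X]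
    {K : Set X} (hK : IsArcClosed K) (x : X) :
    K ∩ insert (gate K x) (branch (gate K x) x) = {gate K x} := by
  refine Subset.antisymm ?_ (singleton_subset_iff.2 ⟨hK.gate_mem x, Or.inl rfl⟩)
  rintro y ⟨hyK, rfl | hy⟩
  · rfl
  · have hx : x ∈ branch (gate K x) x := mem_pathComponentIn_self (JoinedIn.source_mem hy)
    exact (notMem_branch _ x (hK.gate_mem_of_isPathConnected (isPathConnected_pathComponentIn
      (pathComponentIn_subset hx)) hx ⟨y, hy, hyK⟩)).elim

section

variable {X : Type} [MetricSpace X] [CompactSpace X] [LocallyPathConnectedSpace X] {f : ℝ → X}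
  {δ : ℝ}

theorem joinedIn_compl_singleton_of_injOn {X : Type*} [TopologicalSpace X] {f : ℝ → X} {I : Set ℝ}
    {p q s : ℝ} (hf : ContinuousOn f I) (hi : InjOn f I) (hpq : p ≤ q) (hI : Icc p q ⊆ I)
    (hsI : s ∈ I) (hs : s ∉ Icc p q) : JoinedIn {f s}ᶜ (f p) (f q) := by
  have hconn : IsPathConnected (f '' Icc p q) :=
    ((convex_Icc p q).isPathConnected (nonempty_Icc.2 hpq)).image' (hf.mono hI)
  refine (hconn.joinedIn _ (mem_image_of_mem f (left_mem_Icc.2 hpq)) _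
    (mem_image_of_mem f (right_mem_Icc.2 hpq))).mono ?_
  rintro _ ⟨t, ht, rfl⟩ hts
  exact hs (hi (hI ht) hsI hts ▸ ht)

theorem exists_maximalCyclic_of_forall_joinedIn (hf : Continuous f) (hi : InjOn f (Icc 0 1))
    (hδ : 0 < δ) (hδ1 : δ ≤ 1) (hjoin : ∀ s ∈ Ioo 0 δ, JoinedIn {f s}ᶜ (f 0) (f 1)) :
    ∃ T, MaximalCyclic T ∧ f '' Icc 0 δ ⊆ T := by
  have hIoo : Ioo 0 δ ⊆ Icc 0 1 := Ioo_subset_Icc_self.trans (Icc_subset_Icc_right hδ1)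
  have hcyc {s t : ℝ} (hs : s ∈ Ioo 0 δ) (ht : t ∈ Ioo 0 δ) :=
    exists_isCompact_cyclicallyConnected_of_forall_joinedIn (G := univ) hf.continuousOn
      (hi.mono hIoo) (subset_univ _) (fun s hs => by
        obtain ⟨a, ha⟩ := exists_between hs.1
        obtain ⟨b, hb⟩ := exists_between hs.2
        refine ⟨a, ha, b, hb, ?_⟩
        rw [← compl_eq_univ_sdiff]
        have h0a : JoinedIn {f s}ᶜ (f 0) (f a) := joinedIn_compl_singleton_of_injOn hf.continuousOn
          hi ha.1.le (Icc_subset_Icc_right (by linarith [ha.2, hs.2])) (hIoo hs)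
          fun h => ha.2.not_ge h.2
        have hb1 : JoinedIn {f s}ᶜ (f b) (f 1) := joinedIn_compl_singleton_of_injOn hf.continuousOn
          hi (by linarith [hb.2]) (Icc_subset_Icc_left (by linarith [hb.1, hs.1])) (hIoo hs)
          fun h => hb.1.not_ge h.1
        exact h0a.symm.trans ((hjoin s hs).trans hb1.symm)) hs ht
  have hs : δ / 2 ∈ Ioo 0 δ := ⟨half_pos hδ, half_lt_self hδ⟩
  have hnontrivial {K : Set X} (hK : f ⁻¹' K ∈ 𝓝 (δ / 2)) : K.Nontrivial :=
    (((infinite_of_mem_nhds _ (inter_mem hK (isOpen_Ioo.mem_nhds hs))).nontrivial.image_of_injOn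
      (hi.mono (inter_subset_right.trans hIoo)))).mono (image_subset_iff.2 fun _ h => h.1)
  obtain ⟨K₀, -, -, hK₀cyc, hK₀, -⟩ := hcyc hs hs
  obtain ⟨T, hT, hK₀T⟩ := hK₀cyc.exists_maximalCyclic (hnontrivial hK₀)
  have hIooT : Ioo 0 δ ⊆ f ⁻¹' T := fun t ht => by
    obtain ⟨K, -, -, hKcyc, hKs, hKt⟩ := hcyc hs ht
    exact hT.subset_of_inter_nontrivial hKcyc
      (hnontrivial (inter_mem (mem_of_superset hK₀ (preimage_mono hK₀T)) hKs))
      (mem_of_mem_nhds hKt : t ∈ f ⁻¹' K)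
  refine ⟨T, hT, image_subset_iff.2 ?_⟩
  rw [← closure_Ioo hδ.ne]
  exact closure_minimal hIooT (hT.isClosed.preimage hf)

end

namespace IsArcClosed

variable {X : Type} [MetricSpace X] [PathConnectedSpace X] [LocallyPathConnectedSpace X]
  {D K K' K₀ L V : Set X} {a x : X}

theorem range_inclusionHom_union_le (hX : LocSimplyConnected X) (hK : IsArcClosed K)
    (hK' : IsArcClosed K') (ha : K ∩ K' = {a})
    (hnull : ∀ haK' : a ∈ K', (inclusionHom K' haK').range = ⊥) (hx : x ∈ K) :
    (inclusionHom (K ∪ K') (Or.inl hx)).range ≤ (inclusionHom K hx).range := by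
  have ha' : a ∈ K ∩ K' := ha ▸ rfl
  refine range_inclusionHom_le_of_isPathConnected hK.isPathConnected subset_union_left ha'.1 hx ?_
  rw [hK.range_inclusionHom_union hX hK' ha ha'.1 ha'.2, hnull, sup_bot_eq]

variable [CompactSpace X]

theorem range_inclusionHom_closure_sUnion_le (hX : LocSimplyConnected X) {c : Set (Set X)}
    (hc : ∀ K ∈ c, IsArcClosed K) (hchain : IsChain (· ⊆ ·) c) (hne : c.Nonempty)
    (hx : ∀ K ∈ c, x ∈ K) {R : Subgroup (FundamentalGroup X x)}
    (hle : ∀ K ∈ c, ∀ hxK : x ∈ K, (inclusionHom K hxK).range ≤ R) (hxc : x ∈ closure (⋃₀ c)) :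
    (inclusionHom (closure (⋃₀ c)) hxc).range ≤ R := by
  obtain ⟨ε, hε, hclose⟩ := hX.exists_mk_eq_of_dist_lt
  obtain ⟨K, hK, hdist⟩ := exists_mem_forall_dist_gate_lt hc hchain hne hε
  rintro _ ⟨p, rfl⟩
  obtain ⟨γ, rfl⟩ := Path.Homotopic.Quotient.mk_surjective p
  let δ : Path x x := γ.map continuous_subtype_val
  have hgx : gate K x = x := (hc K hK).gate_eq_self (hx K hK)
  let δ' : Path x x := (δ.map (hc K hK).continuous_gate).cast hgx.symm hgx.symm
  rw [show inclusionHom _ hxc (.mk γ) = .mk δ' from hclose δ δ' fun t => hdist _ (γ t).2]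
  exact hle K hK _ (mk_mem_range_inclusionHom (hx K hK)
    (range_subset_iff.2 fun t => (hc K hK).gate_mem _))

theorem exists_nontrivial_subset (hD : IsArcClosed D) (hDa : D ⊆ insert a (branch a x))
    (haD : a ∈ D) (hxD : x ∈ D) (hxa : x ≠ a) (hV : V ∈ 𝓝 a) :
    ∃ K ⊆ D, IsArcClosed K ∧ a ∈ K ∧ K.Nontrivial ∧ (MaximalCyclic K ∨ K ⊆ V) := by
  obtain ⟨E, hED, hE⟩ := IsArc.exists_of_isPathConnected hD.isPathConnected haD hxD hxa.symm
  obtain ⟨f, hf, hi, h0, h1, rfl⟩ := hE.exists_continuous_param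
  by_cases hcase : ∃ δ : ℝ, 0 < δ ∧ δ ≤ 1 ∧ ∀ s ∈ Ioo 0 δ, JoinedIn {f s}ᶜ (f 0) (f 1)
  · obtain ⟨δ, hδ, hδ1, hjoin⟩ := hcase
    obtain ⟨T, hT, hfT⟩ := exists_maximalCyclic_of_forall_joinedIn hf hi hδ hδ1 hjoin
    have hIcc : Icc 0 δ ⊆ Icc 0 1 := Icc_subset_Icc_right hδ1
    have hTD : T ⊆ D := hD.subset_of_cyclicallyConnected hT.2.1 <|
      ((Icc_infinite hδ).nontrivial.image_of_injOn (hi.mono hIcc)).mono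
        (subset_inter hfT ((image_mono hIcc).trans hED))
    exact ⟨T, hTD, hT.isArcClosed, hfT ⟨0, left_mem_Icc.2 hδ.le, h0⟩, hT.nontrivial, Or.inl hT⟩
  · push Not at hcase
    obtain ⟨δ, hδ, hDV⟩ := Metric.eventually_nhds_iff.1 <| (hf.tendsto' 0 a h0).eventually
      (eventually_sdiff_branch_subset hD.isClosed.isCompact hDa hV)
    obtain ⟨s, hs, hsep⟩ := hcase (min (δ / 2) 1) (by positivity) (min_le_right _ _)
    have hsδ : s < δ := by linarith [hs.2.trans_le (min_le_left _ _)]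
    have hsI : s ∈ Icc (0 : ℝ) 1 := ⟨hs.1.le, (hs.2.trans_le (min_le_right _ _)).le⟩
    rw [h0, h1] at hsep
    have haK : a ∈ D \ branch (f s) x := ⟨haD, fun h => hsep (JoinedIn.symm h)⟩
    have hsK : f s ∈ D \ branch (f s) x := ⟨hED (mem_image_of_mem f hsI), notMem_branch _ _⟩
    have has : a ≠ f s := fun h => hs.1.ne (hi (left_mem_Icc.2 zero_le_one) hsI (h0.trans h))
    exact ⟨D \ branch (f s) x, sdiff_subset, hD.inter (isArcClosed_compl_branch _ _) ⟨a, haK⟩, haK,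
      ⟨a, haK, f s, hsK, has⟩, Or.inr (hDV (by rwa [Real.dist_0_eq_abs, abs_of_pos hs.1]))⟩

theorem exists_attached (hK : IsArcClosed K) (hL : IsArcClosed L) (hKL : K ⊂ L) {V : X → Set X}
    (hV : ∀ x, V x ∈ 𝓝 x) : ∃ a K', IsArcClosed K' ∧ K' ⊆ L ∧ K ∩ K' = {a} ∧ K'.Nontrivial ∧
      (MaximalCyclic K' ∨ K' ⊆ V a) := by
  obtain ⟨x, hxL, hxK⟩ := exists_of_ssubset hKL
  set a := gate K x
  have haK : a ∈ K := hK.gate_mem x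
  have hxa : x ≠ a := fun h => hxK (h ▸ haK)
  have haD : a ∈ insert a (branch a x) ∩ L := ⟨Or.inl rfl, hKL.subset haK⟩
  have hxD : x ∈ insert a (branch a x) ∩ L := ⟨Or.inr (mem_pathComponentIn_self hxa), hxL⟩
  obtain ⟨K', hK'D, hK', haK', hnt, hcase⟩ := exists_nontrivial_subset
    ((isArcClosed_insert_branch a x).inter hL ⟨a, haD⟩) inter_subset_left haD hxD hxa (hV a)
  refine ⟨a, K', hK', hK'D.trans inter_subset_right, ?_, hnt, hcase⟩
  exact Subset.antisymm (fun y hy => (hK.inter_insert_branch x).subset ⟨hy.1, (hK'D hy.2).1⟩)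
    (singleton_subset_iff.2 ⟨haK, haK'⟩)

theorem exists_ssubset_range_inclusionHom_le (hX : LocSimplyConnected X) (hK : IsArcClosed K)
    (hL : IsArcClosed L) (hKL : K ⊂ L)
    (hnull : ∀ T, MaximalCyclic T → T ⊆ L → ¬ T ⊆ K → ∀ {a} (ha : a ∈ T),
      (inclusionHom T ha).range = ⊥) :
    ∃ M ⊆ L, IsArcClosed M ∧ K ⊂ M ∧ ∀ {x} (hxM : x ∈ M) (hxK : x ∈ K),
      (inclusionHom M hxM).range ≤ (inclusionHom K hxK).range := by
  choose V hV _ _ hVs using fun x : X => hX x Set.univ univ_mem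
  obtain ⟨a, K', hK', hK'L, ha, hnt, hcase⟩ := hK.exists_attached hL hKL hV
  have hK'K : ¬ K' ⊆ K := fun h =>
    not_nontrivial_singleton (by rwa [← ha, inter_eq_self_of_subset_right h])
  have hnull' (haK' : a ∈ K') : (inclusionHom K' haK').range = ⊥ := by
    rcases hcase with hT | hV
    · exact hnull K' hT hK'L hK'K haK'
    · have := hVs a
      exact range_inclusionHom_eq_bot_of_subset_simplyConnected hV haK'
  exact ⟨K ∪ K', union_subset hKL.subset hK'L, hK.union hK' ha,
    ⟨subset_union_left, fun h => hK'K (subset_union_right.trans h)⟩,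
    fun _ hxK => hK.range_inclusionHom_union_le hX hK' ha hnull' hxK⟩

theorem range_inclusionHom_eq (hX : LocSimplyConnected X) (hK₀ : IsArcClosed K₀)
    (hL : IsArcClosed L) (hsub : K₀ ⊆ L)
    (hnull : ∀ T, MaximalCyclic T → T ⊆ L → ¬ T ⊆ K₀ → ∀ {a} (ha : a ∈ T),
      (inclusionHom T ha).range = ⊥) (hx : x ∈ K₀) :
    (inclusionHom L (hsub hx)).range = (inclusionHom K₀ hx).range := by
  obtain ⟨K, hK₀K, hmax⟩ := zorn_subset_nonempty
    {K | IsArcClosed K ∧ K₀ ⊆ K ∧ K ⊆ L ∧ ∀ hxK : x ∈ K,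
      (inclusionHom K hxK).range ≤ (inclusionHom K₀ hx).range}
    (fun c hc hchain hne => by
      have hle {K : Set X} (hK : K ∈ c) : K ⊆ closure (⋃₀ c) :=
        (subset_sUnion_of_mem hK).trans subset_closure
      exact ⟨closure (⋃₀ c), ⟨closure_sUnion (fun K hK => (hc hK).1) hchain hne,
        (hc hne.some_mem).2.1.trans (hle hne.some_mem),
        closure_minimal (sUnion_subset fun K hK => (hc hK).2.2.1) hL.isClosed,
        range_inclusionHom_closure_sUnion_le hX (fun K hK => (hc hK).1) hchain hne
          (fun K hK => (hc hK).2.1 hx) fun K hK => (hc hK).2.2.2⟩, fun K => hle⟩)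
    K₀ ⟨hK₀, Subset.rfl, hsub, fun _ => le_rfl⟩
  obtain ⟨hK, -, hKL, hle⟩ := hmax.prop
  suffices h : K = L by
    subst h
    exact le_antisymm (hle _) (range_inclusionHom_mono hx hsub)
  by_contra hne
  obtain ⟨M, hML, hM, hKM, hMK⟩ := hK.exists_ssubset_range_inclusionHom_le hX hL
    (hKL.ssubset_of_ne hne) fun T hT hTL hTK => hnull T hT hTL fun h => hTK (h.trans hK₀K)
  exact hKM.2 (hmax.le_of_ge ⟨hM, hK₀K.trans hKM.subset, hML, fun hxM =>
    (hMK hxM (hK₀K hx)).trans (hle _)⟩ hKM.subset)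

theorem fundamentalGroup_of_subset (hX : LocSimplyConnected X) (hK₀ : IsArcClosed K₀)
    (hL : IsArcClosed L) (hsub : K₀ ⊆ L)
    (hnull : ∀ T, MaximalCyclic T → T ⊆ L → ¬ T ⊆ K₀ → ∀ {a} (ha : a ∈ T),
      (inclusionHom T ha).range = ⊥) (hx : x ∈ K₀) :
    Nonempty (FundamentalGroup L ⟨x, hsub hx⟩ ≃* FundamentalGroup K₀ ⟨x, hx⟩) :=
  ⟨(MonoidHom.ofInjective (hL.inclusionHom_injective (hsub hx))).trans <|
    (MulEquiv.subgroupCongr (hK₀.range_inclusionHom_eq hX hL hsub hnull hx)).trans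
      (MonoidHom.ofInjective (hK₀.inclusionHom_injective hx)).symm⟩

end IsArcClosed

/-! ### Free products -/

section

open Monoid

variable {ι : Type*} (G : ι → Type*) [∀ i, Monoid (G i)]

open Classical in
theorem nonempty_coprod_coprodI_subtype_mulEquiv (p : ι → Prop) :
    Nonempty (Coprod (CoprodI fun i : {i // p i} => G i) (CoprodI fun i : {i // ¬p i} => G i) ≃*
      CoprodI G) := by
  let f : Coprod (CoprodI fun i : {i // p i} => G i) (CoprodI fun i : {i // ¬p i} => G i) →*
      CoprodI G :=
    Coprod.lift (CoprodI.lift fun i => CoprodI.of) (CoprodI.lift fun i => CoprodI.of)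
  let g : CoprodI G →*
      Coprod (CoprodI fun i : {i // p i} => G i) (CoprodI fun i : {i // ¬p i} => G i) :=
    CoprodI.lift fun i => if h : p i
      then Coprod.inl.comp (CoprodI.of (M := fun i : {i // p i} => G i) (i := ⟨i, h⟩))
      else Coprod.inr.comp (CoprodI.of (M := fun i : {i // ¬p i} => G i) (i := ⟨i, h⟩))
  refine ⟨f.toMulEquiv g (Coprod.hom_ext (CoprodI.ext_hom _ _ fun i => ?_)
    (CoprodI.ext_hom _ _ fun i => ?_)) (CoprodI.ext_hom _ _ fun i => ?_)⟩
  · ext m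
    simp [f, g, i.2]
  · ext m
    simp [f, g, i.2]
  · ext m
    by_cases h : p i <;> simp [f, g, h]

theorem nonempty_mulEquiv_coprodI_of_unique [Unique ι] : Nonempty (G default ≃* CoprodI G) := by
  refine ⟨(CoprodI.of (M := G) (i := default)).toMulEquiv
    (CoprodI.lift fun i => Unique.eq_default i ▸ MonoidHom.id (G i)) ?_ (CoprodI.ext_hom _ _ ?_)⟩
  · ext m
    simp
  · intro i
    obtain rfl := Unique.eq_default i
    ext m
    simp

end

/-! ### Decomposition into cyclic elements -/

theorem CyclicallyConnected.subset_insert_branch {X : Type} [MetricSpace X] {C : Set X}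
    {a x : X} (hC : CyclicallyConnected C) (hCx : (C ∩ branch a x).Nonempty) :
    C ⊆ insert a (branch a x) := by
  obtain ⟨w, hwC, hw⟩ := hCx
  have hwa : w ≠ a := fun h => notMem_branch a x (h ▸ hw)
  refine fun z hz => or_iff_not_imp_left.2 fun hza => ?_
  exact JoinedIn.trans hw <|
    ((hC.isPathConnected_diff ⟨w, hwC, hwa⟩).joinedIn w ⟨hwC, hwa⟩ z ⟨hz, hza⟩).mono
      fun v hv => hv.2

section

variable {X : Type} [MetricSpace X] [PathConnectedSpace X] [LocallyPathConnectedSpace X]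

theorem IsArcClosed.exists_separation [CompactSpace X] {L T : Set X} {y : X} (hL : IsArcClosed L)
    (hT : MaximalCyclic T) (hTL : T ⊆ L) (hyT : y ∉ T) :
    ∃ A B a, IsArcClosed A ∧ IsArcClosed B ∧ A ∩ B = {a} ∧ A ∪ B = L ∧ T ⊆ A ∧ y ∉ A ∧
      ∀ C ⊆ L, MaximalCyclic C → (¬ C ⊆ A ↔ C ⊆ B) := by
  have hTb := hT.isArcClosed.inter_insert_branch y
  set a := gate T y
  have haT : a ∈ T := hT.isArcClosed.gate_mem y
  have hyb : y ∈ branch a y := mem_pathComponentIn_self fun h : y = a => hyT (h ▸ haT)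
  have hab : a ∉ branch a y := notMem_branch a y
  have hAB : (branch a y)ᶜ ∩ L ∩ (insert a (branch a y) ∩ L) = {a} := by
    ext z
    have := hTL haT
    grind
  refine ⟨(branch a y)ᶜ ∩ L, insert a (branch a y) ∩ L, a,
    (isArcClosed_compl_branch a y).inter hL ⟨a, hab, hTL haT⟩,
    (isArcClosed_insert_branch a y).inter hL ⟨a, Or.inl rfl, hTL haT⟩, hAB, ?_, ?_,
    fun h => h.1 hyb, fun C hCL hC => ⟨fun hCA => ?_, fun hCB hCA => ?_⟩⟩
  · rw [← union_inter_distrib_right, union_insert, compl_union_self, insert_eq_of_mem (mem_univ _),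
      univ_inter]
  · exact fun z hz => ⟨fun h => hab (hTb.subset ⟨hz, Or.inr h⟩ ▸ h), hTL hz⟩
  · obtain ⟨w, hw, hwA⟩ := not_subset.1 hCA
    have hwb : w ∈ branch a y := by_contra fun h => hwA ⟨h, hCL hw⟩
    exact subset_inter (hC.2.1.subset_insert_branch ⟨w, hw, hwb⟩) hCL
  · exact not_nontrivial_singleton (hC.nontrivial.mono ((subset_inter hCA hCB).trans hAB.subset))

theorem IsArcClosed.fundamentalGroup_coprodI [CompactSpace X] (hX : LocSimplyConnected X)
    {ι : Type*} [Finite ι] [Nonempty ι] {T : ι → Set X} (hinj : Function.Injective T)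
    (hT : ∀ i, MaximalCyclic (T i)) {L : Set X} (hL : IsArcClosed L) (hTL : ∀ i, T i ⊆ L)
    (hnull : ∀ C, MaximalCyclic C → C ⊆ L → C ∉ range T → ∀ {a} (ha : a ∈ C),
      (inclusionHom C ha).range = ⊥) (pts : ∀ i, T i) (x : L) :
    Nonempty (FundamentalGroup L x ≃*
      Monoid.CoprodI fun i => FundamentalGroup (T i) (pts i)) := by
  induction hn : Nat.card ι using Nat.strong_induction_on generalizing ι L with
  | _ n ih
  subst hn
  have hLp : PathConnectedSpace L := isPathConnected_iff_pathConnectedSpace.1 hL.isPathConnected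
  rcases subsingleton_or_nontrivial ι with _ | _
  · have := uniqueOfSubsingleton (Classical.arbitrary ι)
    obtain ⟨e⟩ := (hT default).isArcClosed.fundamentalGroup_of_subset hX hL (hTL default)
      (fun C hC hCL hCT => hnull C hC hCL fun ⟨i, hi⟩ =>
        hCT (by rw [← hi, Subsingleton.elim i default])) (pts default).2
    obtain ⟨e'⟩ := nonempty_mulEquiv_coprodI_of_unique fun i => FundamentalGroup (T i) (pts i)
    exact ⟨((FundamentalGroup.fundamentalGroupMulEquivOfPathConnected _ _).trans e).trans e'⟩
  · obtain ⟨i, j, hij⟩ := exists_pair_ne ι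
    obtain ⟨y, hyj, hyi⟩ := not_subset.1 fun h => hij (hinj ((hT j).2.2 _ (hT i).2.1 h))
    obtain ⟨A, B, a, hA, hB, hAB, rfl, hiA, hyA, hsplit⟩ :=
      hL.exists_separation (hT i) (hTL i) hyi
    have hjA : ¬ T j ⊆ A := fun h => hyA (h hyj)
    have : Nonempty {k // T k ⊆ A} := ⟨⟨i, hiA⟩⟩
    have : Nonempty {k // ¬ T k ⊆ A} := ⟨⟨j, hjA⟩⟩
    obtain ⟨haA, haB⟩ : a ∈ A ∩ B := hAB ▸ mem_singleton a
    obtain ⟨eA⟩ := ih _ (Finite.card_subtype_lt hjA) (T := fun k : {k // T k ⊆ A} => T k)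
      (hinj.comp Subtype.val_injective) (fun k => hT k) hA (fun k => k.2)
      (fun C hC hCA h => hnull C hC (hCA.trans subset_union_left) fun ⟨k, hk⟩ =>
        h ⟨⟨k, hk ▸ hCA⟩, hk⟩) (fun k => pts k) ⟨a, haA⟩ rfl
    obtain ⟨eB⟩ := ih _ (Finite.card_subtype_lt (not_not.2 hiA))
      (T := fun k : {k // ¬ T k ⊆ A} => T k) (hinj.comp Subtype.val_injective) (fun k => hT k) hB
      (fun k => (hsplit _ (hTL k) (hT k)).1 k.2)
      (fun C hC hCB h => hnull C hC (hCB.trans subset_union_right) fun ⟨k, hk⟩ =>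
        h ⟨⟨k, (hsplit _ (hTL k) (hT k)).2 (hk ▸ hCB)⟩, hk⟩) (fun k => pts k) ⟨a, haB⟩ rfl
    obtain ⟨e⟩ := hA.fundamentalGroup_union hX hB hAB haA haB
    obtain ⟨e'⟩ := nonempty_coprod_coprodI_subtype_mulEquiv
      (fun k => FundamentalGroup (T k) (pts k)) fun k => T k ⊆ A
    exact ⟨(FundamentalGroup.fundamentalGroupMulEquivOfPathConnected _ _).trans
      (e.trans ((eA.coprodCongr eB).trans e'))⟩

end

theorem LocSimplyConnected.locallyPathConnectedSpace {X : Type} [TopologicalSpace X]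
    (hX : LocSimplyConnected X) : LocallyPathConnectedSpace X := by
  refine ⟨fun x => ⟨fun U => ⟨fun hU => ?_, fun ⟨V, hV, hVU⟩ => mem_of_superset hV.1 hVU⟩⟩⟩
  obtain ⟨V, hV, hVU, -, _⟩ := hX x U hU
  exact ⟨V, ⟨hV, isPathConnected_iff_pathConnectedSpace.2 inferInstance⟩, hVU⟩

theorem inclusionHom_univ_bijective {X : Type*} [TopologicalSpace X] (x : X) :
    Function.Bijective (inclusionHom univ (mem_univ x)) := by
  let r : C(X, univ (α := X)) := ⟨fun y => ⟨y, trivial⟩, by fun_prop⟩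
  refine ⟨Function.LeftInverse.injective (g := FundamentalGroup.map r x) fun p => ?_,
    MonoidHom.range_eq_top.1 (Subgroup.eq_top_iff' _ |>.2 fun p => ?_)⟩
  · obtain ⟨γ, rfl⟩ := Path.Homotopic.Quotient.mk_surjective p
    rfl
  · obtain ⟨γ, rfl⟩ := Path.Homotopic.Quotient.mk_surjective p
    exact mk_mem_range_inclusionHom _ (subset_univ _)

theorem range_inclusionHom_eq_bot_of_diam_lt {X : Type*} [MetricSpace X]
    [CompactSpace X] {T : Set X} {δ : ℝ}
    (hδ : ∀ x : X, ∃ V : Set X, SimplyConnectedSpace V ∧ ball x δ ⊆ V)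
    (hTδ : diam T < δ) {a : X} (ha : a ∈ T) : (inclusionHom T ha).range = ⊥ := by
  obtain ⟨V, _, hV⟩ := hδ a
  exact range_inclusionHom_eq_bot_of_subset_simplyConnected (fun y hy => hV
    ((dist_le_diam_of_mem isBounded_of_compactSpace hy ha).trans_lt hTδ)) ha

/-- Fundamental group formula: if `X` is a locally simply connected Peano space whose
maximal cyclic subsets are enumerated by `(T n)`, then for all sufficiently large `n`,
`π₁(X) ≅ π₁(T 0) * ⋯ * π₁(T (n-1))`. -/
theorem fundamentalGroup_eq_free_product_of_maximalCyclic
    (X : Type) [MetricSpace X] [CompactSpace X] [ConnectedSpace X] [LocallyConnectedSpace X]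
    (hls : LocSimplyConnected X)
    (T : ℕ → Set X) (hinj : Function.Injective T)
    (henum : Set.range T = {C : Set X | MaximalCyclic C}) (x₀ : X) :
    ∃ N : ℕ, ∀ n ≥ N, ∀ pts : (i : Fin n) → ↥(T i.val),
      Nonempty (FundamentalGroup X x₀ ≃*
        Monoid.CoprodI fun i : Fin n => FundamentalGroup ↥(T i.val) (pts i)) := by
  have := hls.locallyPathConnectedSpace
  have : PathConnectedSpace X := pathConnectedSpace_iff_connectedSpace.2 inferInstance
  have hT : ∀ n, MaximalCyclic (T n) := fun n => henum.subset (mem_range_self n)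
  obtain ⟨δ, hδ, hV⟩ := hls.exists_ball_subset
  obtain ⟨N, hN⟩ := ((finite_setOf_maximalCyclic_le_diam hδ).preimage hinj.injOn).bddAbove
  refine ⟨N + 1, fun n hn pts => ?_⟩
  have : Nonempty (Fin n) := ⟨⟨N, hn⟩⟩
  have hnull : ∀ C, MaximalCyclic C → C ⊆ univ → C ∉ range (fun i : Fin n => T i) →
      ∀ {a} (ha : a ∈ C), (inclusionHom C ha).range = ⊥ := by
    intro C hC _ hCT a ha
    obtain ⟨m, rfl⟩ : C ∈ range T := henum.symm.subset hC
    have hm : n ≤ m := not_lt.1 fun h => hCT ⟨⟨m, h⟩, rfl⟩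
    exact range_inclusionHom_eq_bot_of_diam_lt hV
      (not_le.1 fun h => (hn.trans hm).not_gt (Nat.lt_succ_of_le (hN ⟨hC, h⟩))) ha
  obtain ⟨e⟩ := IsArcClosed.univ.fundamentalGroup_coprodI hls (hinj.comp Fin.val_injective)
    (fun i : Fin n => hT i) (fun _ => subset_univ _) hnull pts ⟨x₀, mem_univ x₀⟩
  exact ⟨(MulEquiv.ofBijective _ (inclusionHom_univ_bijective x₀)).symm.trans e⟩
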